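/- arXiv:2404.09295 — 2 statements merged into one kernel-verified Lean document; each statement's English description precedes it below -/
import Mathlib

section
/- For every η > 0 and all positive integers d₁, d₂ there exist κ > 0 and a constant C = C(η, d₁, d₂) such that the following holds for every prime p. Let χ be a non-trivial multiplicative character modulo p, let P ∈ 𝔽_p(X) be a nonzero rational function whose numerator and denominator have degree at most d₁, and let Q ∈ 𝔽_p(X, Y) be a nonzero rational function whose numerator and denominator have total degree at most d₂. Then for all real K, M, N with p^{1/5 + η} ≤ K, M, N < p^{1/4 − η}, one has |∑_{1 ≤ k ≤ K} ∑_{1 ≤ m ≤ M} ∑_{1 ≤ n ≤ N} χ((k + m·n)·P(m)·Q(k, n))| ≤ C·K·M·N·p^{−κ}, where terms with m a pole or zero of P, or (k, n) a pole or zero of Q, are omitted from the sum. -/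
open Finset
set_option linter.unusedVariables false


namespace TRM
open Polynomial

lemma hasse_pow_dvd {F : Type*} [Field F] (f : F[X]) (e u : ℕ) :
    f ^ (e - u) ∣ hasseDeriv u (f ^ e) := by
  induction e generalizing u with
  | zero => simp
  | succ e ih =>
    rw [pow_succ, hasseDeriv_mul]
    refine Finset.dvd_sum fun ij hij => ?_
    rw [Finset.HasAntidiagonal.mem_antidiagonal] at hij
    rcases Nat.eq_zero_or_pos ij.2 with h0 | h0
    · rw [h0, hasseDeriv_zero']
      by_cases hu : u ≤ e
      · rw [show e + 1 - u = (e - ij.1) + 1 by omega, pow_succ]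
        exact mul_dvd_mul_right (ih _) _
      · rw [show e + 1 - u = 0 by omega]; simp
    · exact ((pow_dvd_pow f (by omega)).trans (ih ij.1)).mul_right _

lemma hasse_lin {F : Type*} [Field F] (f : F[X]) (hf : f ≠ 0) (e k : ℕ) (hk : k ≤ e) :
    ∃ Φ : F[X] →ₗ[F] F[X], (∀ r, hasseDeriv k (f ^ e * r) = f ^ (e - k) * Φ r) ∧
      ∀ r, (Φ r).natDegree ≤ r.natDegree + k * f.natDegree := by
  choose g hg using fun u => hasse_pow_dvd f e u
  refine ⟨∑ ij ∈ antidiagonal k, (LinearMap.mulLeft F (f ^ (k - ij.1) * g ij.1)) ∘ₗ hasseDeriv ij.2,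
    fun r => ?_, fun r => ?_⟩
  · rw [hasseDeriv_mul]
    simp only [LinearMap.sum_apply, LinearMap.comp_apply, LinearMap.mulLeft_apply, Finset.mul_sum]
    refine Finset.sum_congr rfl fun ij hij => ?_
    rw [Finset.HasAntidiagonal.mem_antidiagonal] at hij
    rw [hg ij.1, show e - ij.1 = (e - k) + (k - ij.1) by omega, pow_add]
    ring
  · simp only [LinearMap.sum_apply, LinearMap.comp_apply, LinearMap.mulLeft_apply]
    refine natDegree_sum_le_of_forall_le _ _ fun ij hij => ?_
    rw [Finset.HasAntidiagonal.mem_antidiagonal] at hij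
    have h1 : (g ij.1).natDegree ≤ ij.1 * f.natDegree := by
      by_cases h0 : g ij.1 = 0
      · simp [h0]
      have h2 := natDegree_hasseDeriv_le (f ^ e) ij.1
      rw [hg ij.1, natDegree_mul (pow_ne_zero _ hf) h0, natDegree_pow, natDegree_pow] at h2
      have : e * f.natDegree = (e - ij.1) * f.natDegree + ij.1 * f.natDegree := by
        rw [← add_mul]; congr 1; omega
      omega
    have h3 := natDegree_hasseDeriv_le r ij.2
    have h4 : (f ^ (k - ij.1)).natDegree = (k - ij.1) * f.natDegree := natDegree_pow _ _
    have h5 : k * f.natDegree = (k - ij.1) * f.natDegree + ij.1 * f.natDegree := by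
      rw [← add_mul]; congr 1; omega
    have h6 := natDegree_mul_le (p := f ^ (k - ij.1) * g ij.1) (q := hasseDeriv ij.2 r)
    have h7 := natDegree_mul_le (p := f ^ (k - ij.1)) (q := g ij.1)
    omega

lemma coeff_taylor_mul_Xq {F : Type*} [Field F] [Fintype F] (q : ℕ) (hq : Fintype.card F = q)
    (A : F[X]) (x : F) (j k : ℕ) (hk : k < q) :
    (taylor x (A * X ^ (q * j))).coeff k = x ^ j * (hasseDeriv k A).eval x := by
  obtain ⟨p, hp⟩ := CharP.exists F
  obtain ⟨n, hpp, hn⟩ := FiniteField.card F p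
  have := Fact.mk hpp
  have h1 : taylor x (X ^ (q * j) : F[X]) = (X ^ q + C x) ^ j := by
    rw [taylor_pow, taylor_X, pow_mul, ← hq, hn, add_pow_char_pow, ← hn, ← C_pow, FiniteField.pow_card]
  rw [taylor_mul, h1]
  have h2 : (X : F[X]) ^ q ∣ (X ^ q + C x) ^ j - C x ^ j := by
    have := sub_dvd_pow_sub_pow (X ^ q + C x : F[X]) (C x) j
    simpa using this
  obtain ⟨G, hG⟩ := h2
  rw [sub_eq_iff_eq_add.mp hG, mul_add, coeff_add]
  rw [show (taylor x A) * (X ^ q * G) = (taylor x A * G) * X ^ q by ring, coeff_mul_X_pow', if_neg (by omega),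
    ← C_pow, coeff_mul_C, taylor_coeff]
  ring

lemma sum_ne_zero {F : Type*} [Field F] (f h : F[X]) (hf : f = X * h) (hh : h.eval 0 ≠ 0)
    (q d c T L : ℕ) (hd : 0 < d) (hq : q = d * c + 1) (r : Fin T → F[X])
    (hr : ∀ t, (r t).degree < c) (hr0 : r ≠ 0) :
    ∑ t : Fin T, f ^ (L + c * (t % d)) * r t * X ^ (q * (t / d)) ≠ 0 := by
  classical
  intro hsum
  have hh0 : h ≠ 0 := by rintro rfl; simp at hh
  have hf0 : f ≠ 0 := by rw [hf]; exact mul_ne_zero X_ne_zero hh0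
  have hw : ∀ t : ℕ, c * (t % d) + q * (t / d) = c * t + t / d := by
    intro t
    have := Nat.mod_add_div t d
    rw [hq]; nlinarith
  have hterm : ∀ t : Fin T, f ^ (L + c * (t % d)) * r t * X ^ (q * (t / d)) =
      f ^ L * (X ^ (c * t + t / d : ℕ) * (h ^ (c * (t % d)) * r t)) := by
    intro t
    rw [← hw t, pow_add, pow_add]
    nth_rewrite 2 [hf]
    rw [mul_pow]
    ring
  simp only [hterm, ← Finset.mul_sum] at hsum
  have hsum2 := (mul_eq_zero.mp hsum).resolve_left (pow_ne_zero _ hf0)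
  obtain ⟨t1, ht1⟩ := Function.ne_iff.mp hr0
  let S := Finset.univ.filter fun t => r t ≠ 0
  have hS : S.Nonempty := ⟨t1, by simpa [S] using ht1⟩
  set t0 := S.min' hS
  have ht0 : r t0 ≠ 0 := by
    have := S.min'_mem hS
    simpa [S] using this
  have hmin : ∀ t, t < t0 → r t = 0 := by
    intro t ht
    by_contra hne
    have : t0 ≤ t := S.min'_le t (by simpa [S] using hne)
    exact absurd ht (not_lt.mpr this)
  rw [← Finset.add_sum_erase _ _ (Finset.mem_univ t0)] at hsum2
  have hdvd : (X : F[X]) ^ (c * t0 + t0 / d + c : ℕ) ∣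
      ∑ x ∈ Finset.univ.erase t0, X ^ (c * x + x / d : ℕ) * (h ^ (c * (x % d : ℕ)) * r x) := by
    refine Finset.dvd_sum fun t ht => ?_
    rcases lt_or_ge t t0 with hlt | hge
    · rw [hmin t hlt]; simp
    · have hlt : t0 < t := lt_of_le_of_ne hge (by simpa using (Finset.ne_of_mem_erase ht).symm)
      refine (pow_dvd_pow _ ?_).mul_right _
      have h1 : (t0 : ℕ) + 1 ≤ t := hlt
      have h2 : (t0 : ℕ) / d ≤ t / d := Nat.div_le_div_right (by omega)
      nlinarith
  have h3 : (X : F[X]) ^ (c * t0 + t0 / d + c : ℕ) ∣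
      X ^ (c * t0 + t0 / d : ℕ) * (h ^ (c * (t0 % d : ℕ)) * r t0) :=
    (dvd_add_left hdvd).mp (by rw [hsum2]; exact dvd_zero _)
  rw [pow_add, mul_dvd_mul_iff_left (pow_ne_zero _ X_ne_zero)] at h3
  have hcop : IsCoprime ((X : F[X]) ^ c) (h ^ (c * (t0 % d : ℕ))) := by
    apply IsCoprime.pow
    rw [(prime_X (R := F)).irreducible.coprime_iff_not_dvd, X_dvd_iff]
    rwa [coeff_zero_eq_eval_zero]
  have h4 := hcop.dvd_of_dvd_mul_left h3
  have h5 := degree_le_of_dvd h4 ht0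
  rw [degree_X_pow] at h5
  exact absurd (hr t0) (not_lt.mpr h5)

theorem stepanov {F : Type*} [Field F] [Fintype F] [DecidableEq F] (f h : F[X]) (hf : f = X * h)
    (hh : h.eval 0 ≠ 0) (q d c J L : ℕ) (hcard : Fintype.card F = q) (hd : 0 < d)
    (hq : q = d * c + 1) (hL : L ≤ q) (hc : 0 < c)
    (hpar : L * (c + J + f.natDegree * L) < d * J * c) (a : F) :
    (Finset.univ.filter fun x : F => f.eval x ^ c = a).card * L ≤
      L * f.natDegree + q * f.natDegree + q * J := by
  have hh0 : h ≠ 0 := by rintro rfl; simp at hh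
  have hf0 : f ≠ 0 := by rw [hf]; exact mul_ne_zero X_ne_zero hh0
  have hm : 1 ≤ f.natDegree := by
    rw [hf, natDegree_mul X_ne_zero hh0, natDegree_X]; omega
  set m := f.natDegree with hmdef
  set T := d * J
  set N := c + J + m * L
  have key : ∀ (t : Fin T) (k : Fin L), ∃ Φ : F[X] →ₗ[F] F[X],
      (∀ r, hasseDeriv k (f ^ (L + c * (t % d)) * r) = f ^ (L + c * (t % d) - k) * Φ r) ∧
      ∀ r, (Φ r).natDegree ≤ r.natDegree + k * m := fun t k =>
    hasse_lin f hf0 _ _ (by have := k.2; omega)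
  choose Φ hΦ1 hΦ2 using key
  let Ψ : (Fin T → degreeLT F c) →ₗ[F] (Fin L → F[X]) := LinearMap.pi fun k =>
    ∑ t : Fin T, (LinearMap.mulLeft F (C (a ^ (t % d : ℕ)) * X ^ (t / d : ℕ))) ∘ₗ (Φ t k) ∘ₗ
      (degreeLT F c).subtype ∘ₗ LinearMap.proj t
  let Ψ' : (Fin T → degreeLT F c) →ₗ[F] (Fin L → Fin N → F) := LinearMap.pi fun k =>
    LinearMap.pi fun i => (lcoeff F i) ∘ₗ (LinearMap.proj k) ∘ₗ Ψ
  have hker : LinearMap.ker Ψ' ≠ ⊥ := by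
    apply LinearMap.ker_ne_bot_of_finrank_lt
    have e1 : Module.finrank F (degreeLT F c) = c := by
      rw [(degreeLTEquiv F c).finrank_eq]; simp
    have e2 : Module.finrank F (Fin T → degreeLT F c) = T * c := by
      rw [Module.finrank_pi_fintype]; simp [e1]
    rw [e2, Module.finrank_pi_fintype]
    simpa using hpar
  obtain ⟨v, hv, hv0⟩ := Submodule.exists_mem_ne_zero_of_ne_bot hker
  set r : Fin T → F[X] := fun t => (v t : F[X]) with hrdef
  have hr : ∀ t, (r t).degree < c := fun t => mem_degreeLT.mp (v t).2
  have hrn : ∀ t, (r t).natDegree < c := by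
    intro t
    by_cases h0 : r t = 0
    · rw [h0]; simpa using hc
    · exact (natDegree_lt_iff_degree_lt h0).mpr (hr t)
  have hr0 : r ≠ 0 := by
    intro h0; apply hv0; ext1 t; ext1; exact congrFun h0 t
  have hΨ : ∀ k : Fin L, ∑ t : Fin T, C (a ^ (t % d : ℕ)) * X ^ (t / d : ℕ) * Φ t k (r t) = 0 := by
    intro k
    have hdeg : (Ψ v k).natDegree < N := by
      have : (Ψ v k) = ∑ t : Fin T, C (a ^ (t % d : ℕ)) * X ^ (t / d : ℕ) * Φ t k (r t) := by
        simp [Ψ, LinearMap.sum_apply, hrdef, mul_assoc]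
      rw [this]
      have hN : 0 < N := by omega
      refine lt_of_le_of_lt (natDegree_sum_le_of_forall_le (n := N - 1) _ _ fun t _ => ?_) (by omega)
      have h1 := hΦ2 t k (r t)
      have h2 := hrn t
      have h3 := natDegree_mul_le (p := C (a ^ (t % d : ℕ)) * X ^ (t / d : ℕ)) (q := Φ t k (r t))
      have h4 : (C (a ^ (t % d : ℕ)) * X ^ (t / d : ℕ)).natDegree ≤ t / d := natDegree_C_mul_X_pow_le _ _
      have h5 : (t : ℕ) / d < J := Nat.div_lt_of_lt_mul t.2
      have h6 : (k : ℕ) * m ≤ m * L := by rw [mul_comm]; exact Nat.mul_le_mul_left _ k.2.le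
      omega
    have h0 : Ψ v k = 0 := by
      ext i
      by_cases hi : i < N
      · have := congrFun (congrFun (LinearMap.mem_ker.mp hv) k) ⟨i, hi⟩
        simpa [Ψ'] using this
      · rw [coeff_eq_zero_of_natDegree_lt (by omega)]; simp
    simpa [Ψ, LinearMap.sum_apply, hrdef, mul_assoc] using h0
  set G := ∑ t : Fin T, f ^ (L + c * (t % d)) * r t * X ^ (q * (t / d)) with hG
  have hG0 : G ≠ 0 := sum_ne_zero f h hf hh q d c T L hd hq r hr hr0
  have hGdeg : G.natDegree ≤ L * m + q * m + q * J := by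
    refine natDegree_sum_le_of_forall_le _ _ fun t _ => ?_
    have h1 := natDegree_mul_le (p := f ^ (L + c * (t % d)) * r t) (q := X ^ (q * (t / d)))
    have h2 := natDegree_mul_le (p := f ^ (L + c * (t % d))) (q := r t)
    rw [natDegree_pow, ← hmdef] at h2
    rw [natDegree_X_pow] at h1
    have h3 := hrn t
    have h5 : (t : ℕ) / d < J := Nat.div_lt_of_lt_mul t.2
    have h6 : (t : ℕ) % d + 1 ≤ d := Nat.mod_lt _ hd
    have h7 : q * ((t : ℕ) / d) ≤ q * J := Nat.mul_le_mul_left _ h5.le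
    have h8 : c * ((t : ℕ) % d) * m + c ≤ q * m := by
      calc c * ((t : ℕ) % d) * m + c ≤ c * ((t : ℕ) % d) * m + c * m := by nlinarith
        _ = (c * ((t : ℕ) % d + 1)) * m := by ring
        _ ≤ q * m := Nat.mul_le_mul_right _ (by rw [hq]; nlinarith)
    have h9 : (L + c * ((t : ℕ) % d)) * m = L * m + c * ((t : ℕ) % d) * m := by ring
    omega
  have hvan : ∀ x : F, f.eval x ^ c = a → (X - C x) ^ L ∣ G := by
    intro x hx
    have hcoef : (X : F[X]) ^ L ∣ taylor x G := by
      rw [X_pow_dvd_iff]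
      intro k hk
      rw [hG, map_sum, finsetSum_coeff]
      have hh1 : ∀ t : Fin T, (taylor x (f ^ (L + c * (t % d)) * r t * X ^ (q * (t / d)))).coeff k =
          f.eval x ^ (L - k) *
            (C (a ^ (t % d : ℕ)) * X ^ (t / d : ℕ) * Φ t ⟨k, hk⟩ (r t)).eval x := by
        intro t
        rw [coeff_taylor_mul_Xq q hcard _ _ _ _ (by omega)]
        have := hΦ1 t ⟨k, hk⟩ (r t)
        simp only at this
        rw [this, show L + c * (t % d) - k = (L - k) + c * (t % d) by omega]
        simp only [eval_mul, eval_pow, eval_C, eval_X]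
        rw [pow_add, pow_mul, hx]; ring
      simp only [hh1, ← Finset.mul_sum]
      rw [← eval_finsetSum, hΨ ⟨k, hk⟩]; simp
    have := map_dvd (taylorAlgHom (-x)) hcoef
    simpa [taylor_taylor, sub_eq_add_neg] using this
  have hprod : ∏ x ∈ Finset.univ.filter (fun x : F => f.eval x ^ c = a), (X - C x) ^ L ∣ G := by
    apply Finset.prod_dvd_of_coprime
    · intro x _ y _ hxy
      exact (isCoprime_X_sub_C_of_isUnit_sub (by simpa [sub_eq_zero] using hxy)).pow
    · intro x hx
      exact hvan x (by simpa using hx)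
  have hle := natDegree_le_of_dvd hprod hG0
  rw [natDegree_prod_of_monic _ _ (fun x _ => (monic_X_sub_C x).pow L)] at hle
  simp at hle
  rw [← hmdef] at *
  omega

end TRM


namespace TRM
open Polynomial

noncomputable instance gfFintype (p n : ℕ) [Fact p.Prime] : Fintype (GaloisField p n) := Fintype.ofFinite _

lemma chi_le_one {p : ℕ} (χ : MulChar (ZMod p) ℂ) (a : ZMod p) : ‖χ a‖ ≤ 1 :=
  DirichletCharacter.norm_le_one χ a

lemma num_bound (p n d m t J L q N : ℕ) (hp : 2 ≤ p) (hd : 1 ≤ d) (hq : q = p ^ n)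
    (hJ : J = p ^ (n / 2)) (hL : L + t = d * J) (h2 : 2 * t ≤ d * J)
    (hN : N * L ≤ L * m + q * m + q * J) :
    (N : ℝ) ≤ q / d + (m + 2 * (d * m + t) * p) * Real.sqrt p ^ n := by
  have hJ0 : 0 < J := by rw [hJ]; positivity
  have hdJ : 0 < d * J := by positivity
  have hL0 : 0 < L := by omega
  have hs : (Real.sqrt p ^ n) ^ 2 = q := by
    rw [← pow_mul, mul_comm, pow_mul, Real.sq_sqrt (by positivity), hq]; push_cast; rfl
  have hs0 : 0 ≤ Real.sqrt p ^ n := by positivity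
  have hs1 : 1 ≤ Real.sqrt p ^ n := by
    apply one_le_pow₀
    rw [Real.one_le_sqrt]; exact_mod_cast (by omega : 1 ≤ p)
  set s := Real.sqrt p ^ n
  have hsJ : s ≤ J * p := by
    apply le_of_sq_le_sq _ (by positivity)
    rw [hs, hq, hJ]
    norm_cast
    rw [← pow_succ, ← pow_mul]
    exact Nat.pow_le_pow_right (by omega) (by omega)
  have hN' : (N : ℝ) * L ≤ L * m + q * m + q * J := by exact_mod_cast hN
  have hL' : (L : ℝ) + t = d * J := by exact_mod_cast hL
  have h2' : 2 * (t : ℝ) ≤ d * J := by exact_mod_cast h2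
  have hLr : (0:ℝ) < L := by exact_mod_cast hL0
  have hJr : (0:ℝ) < J := by exact_mod_cast hJ0
  have hdr : (1:ℝ) ≤ d := by exact_mod_cast hd
  have hd0 : (0:ℝ) < d := by linarith
  refine le_of_mul_le_mul_right (hN'.trans ?_) hLr
  have e1 : (q : ℝ) / d * L = q * J - q * t / d := by
    have : (L : ℝ) = d * J - t := by linarith
    rw [this]; field_simp
  have e2 : (q : ℝ) * t / d ≤ q * t := div_le_self (by positivity) hdr
  have e3 : (q : ℝ) ≤ 2 * p * s * L := by
    have : (J : ℝ) ≤ 2 * L := by nlinarith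
    rw [← hs]
    calc s ^ 2 = s * s := by ring
      _ ≤ s * (J * p) := by gcongr
      _ ≤ s * (2 * L * p) := by gcongr
      _ = _ := by ring
  have e4 : (q : ℝ) * (m + t) ≤ 2 * p * s * L * (d * m + t) := by
    gcongr
    nlinarith [(Nat.cast_nonneg m : (0:ℝ) ≤ m)]
  have e5 : (L : ℝ) * m ≤ m * s * L := by
    nlinarith [mul_nonneg hLr.le (Nat.cast_nonneg m : (0:ℝ) ≤ m)]
  nlinarith

theorem stepanov_sum (p : ℕ) [Fact p.Prime] (f h : (ZMod p)[X]) (hf : f = X * h) (hh : h.eval 0 ≠ 0)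
    (χ : MulChar (ZMod p) ℂ) (hχ : χ ≠ 1) :
    ∃ C : ℝ, ∀ n : ℕ, n ≠ 0 → 
      ‖∑ x : GaloisField p n, χ (Algebra.norm (ZMod p) (aeval x f))‖ ≤ C * Real.sqrt p ^ n := by
  classical
  have hp : 2 ≤ p := (Fact.out : p.Prime).two_le
  set d := p - 1 with hd
  set m := f.natDegree with hm
  set t := 2 * d ^ 2 * (1 + m * d) + 1 with ht
  refine ⟨d * (m + 2 * (d * m + t) * p) + m + 2 * t * p + p, fun n hn => ?_⟩
  have hcard : Fintype.card (GaloisField p n) = p ^ n := by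
    rw [← Nat.card_eq_fintype_card]; exact GaloisField.card p n hn
  set q := p ^ n with hq
  have hs : (Real.sqrt p ^ n) ^ 2 = q := by
    rw [← pow_mul, mul_comm, pow_mul, Real.sq_sqrt (by positivity), hq]; push_cast; rfl
  have hs1 : 1 ≤ Real.sqrt p ^ n := by
    apply one_le_pow₀
    rw [Real.one_le_sqrt]; exact_mod_cast (by omega : 1 ≤ p)
  set s := Real.sqrt p ^ n with hsdef
  set J := p ^ (n / 2) with hJ
  have hsJ : s ≤ J * p := by
    apply le_of_sq_le_sq _ (by positivity)
    rw [hs, hq, hJ]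
    norm_cast
    rw [← pow_succ, ← pow_mul]
    exact Nat.pow_le_pow_right (by omega) (by omega)
  have htriv : ‖∑ x : GaloisField p n, χ (Algebra.norm (ZMod p) (aeval x f))‖ ≤ s * s := by
    refine (norm_sum_le_of_le _ (fun x _ => chi_le_one χ _)).trans ?_
    rw [← pow_two, hs]; simp [hcard]
  have hd1 : 1 ≤ d := by omega
  have hposA : (0:ℝ) ≤ d * (m + 2 * (d * m + t) * p) + m := by positivity
  rcases Nat.lt_or_ge n 2 with hn2 | hn2
  · have : n = 1 := by omega
    have hsp : s ≤ p := by
      rw [hsdef, this, pow_one, Real.sqrt_le_left (by positivity)]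
      exact_mod_cast Nat.le_self_pow (by norm_num) p
    refine htriv.trans (mul_le_mul_of_nonneg_right ?_ (by linarith))
    have : (0:ℝ) ≤ 2 * t * p := by positivity
    linarith
  rcases Nat.lt_or_ge (d * J) (2 * t) with h2 | h2
  · refine htriv.trans (mul_le_mul_of_nonneg_right ?_ (by linarith))
    have h3 : J ≤ 2 * t := by nlinarith
    have h4 : (J:ℝ) ≤ 2 * t := by exact_mod_cast h3
    have h5 : (J:ℝ) * p ≤ 2 * t * p := by gcongr
    have : (0:ℝ) ≤ p := by positivity
    linarith
  -- main case
  obtain ⟨c, hc⟩ : (p - 1) ∣ p ^ n - 1 := by simpa using Nat.sub_dvd_pow_sub_pow p 1 n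
  have hq2 : 2 ≤ q := hp.trans (Nat.le_self_pow hn p)
  have hqc : q = d * c + 1 := by rw [hd]; omega
  have hc0 : 0 < c := by
    rcases Nat.eq_zero_or_pos c with h0 | h0
    · rw [h0] at hqc; omega
    · exact h0
  obtain ⟨L, hL⟩ : ∃ L, L + t = d * J := ⟨d * J - t, by omega⟩
  have hJq : J ^ 2 ≤ q := by
    rw [hJ, hq, ← pow_mul]; exact Nat.pow_le_pow_right (by omega) (by omega)
  have hLq : L ≤ q := by
    have h3 : d * J ≤ p * J := Nat.mul_le_mul_right _ (by omega)
    have h4 : p * J ≤ q := by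
      rw [hJ, hq, ← pow_succ']; exact Nat.pow_le_pow_right (by omega) (by omega)
    omega
  have hpar : L * (c + J + m * L) < d * J * c := by
    have h3 : L ≤ d * J := by omega
    have h4 : L * (J + m * L) ≤ d * (1 + m * d) * J ^ 2 := by
      calc L * (J + m * L) ≤ (d * J) * (J + m * (d * J)) := by gcongr
        _ = _ := by ring
    have h5 : d * (1 + m * d) * J ^ 2 ≤ d * (1 + m * d) * (2 * d * c) := by
      gcongr
      have : 1 ≤ d * c := Nat.mul_pos hd1 hc0
      nlinarith
    have h6 : d * J * c = L * c + t * c := by rw [← hL]; ring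
    rw [h6, ht]
    nlinarith
  set fF := f.map (algebraMap (ZMod p) (GaloisField p n))
  have hmF : fF.natDegree = m := natDegree_map _
  have hNa : ∀ a : ZMod p, (((Finset.univ.filter fun x : GaloisField p n =>
      Algebra.norm (ZMod p) (aeval x f) = a).card : ℕ) : ℝ) ≤ q / d + (m + 2 * (d * m + t) * p) * s := by
    intro a
    have := stepanov fF (h.map (algebraMap _ _)) (by simp [fF, hf])
      (by
        rw [← map_zero (algebraMap (ZMod p) (GaloisField p n)), eval_map_algebraMap, aeval_algebraMap_apply]
        simpa using hh) q d c J L hcard hd1 hqc hLq hc0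
      (by rw [hmF]; exact hpar) (algebraMap _ _ a)
    rw [hmF] at this
    refine num_bound p n d m t J L q _ hp hd1 hq hJ hL h2 (le_trans (le_of_eq ?_) this)
    congr 2
    ext x
    simp only [Finset.mem_filter, Finset.mem_univ, true_and]
    rw [← (algebraMap (ZMod p) (GaloisField p n)).injective.eq_iff, FiniteField.algebraMap_norm_eq_pow]
    have hcc : (Nat.card (GaloisField p n) - 1) / (Nat.card (ZMod p) - 1) = c := by
      rw [GaloisField.card p n hn, Nat.card_zmod, hc]
      exact Nat.mul_div_cancel_left _ (by omega)
    rw [hcc, eval_map_algebraMap]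
  have hN0 : ((Finset.univ.filter fun x : GaloisField p n =>
      Algebra.norm (ZMod p) (aeval x f) = 0).card : ℕ) ≤ m := by
    have hh0 : h ≠ 0 := by rintro rfl; simp at hh
    have hf0 : f ≠ 0 := by rw [hf]; exact mul_ne_zero X_ne_zero hh0
    have hfF0 : fF ≠ 0 := by simpa [fF] using hf0
    calc _ ≤ fF.roots.toFinset.card := by
          apply Finset.card_le_card
          intro x hx
          simp only [Finset.mem_filter, Finset.mem_univ, true_and, Algebra.norm_eq_zero_iff] at hx
          simp [hfF0, fF, eval_map_algebraMap, hx]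
      _ ≤ _ := (Multiset.toFinset_card_le _).trans ((card_roots' _).trans hmF.le)
  set Na : ZMod p → ℕ := fun a => (Finset.univ.filter fun x : GaloisField p n =>
      Algebra.norm (ZMod p) (aeval x f) = a).card with hNadef
  set E : ℝ := q / d + (m + 2 * (d * m + t) * p) * s with hE
  have hS : ∑ x : GaloisField p n, χ (Algebra.norm (ZMod p) (aeval x f)) = ∑ a, χ a * ((Na a : ℂ) - E) := by
    simp only [mul_sub, Finset.sum_sub_distrib, ← Finset.sum_mul, MulChar.sum_eq_zero_of_ne_one hχ]
    rw [zero_mul, sub_zero, ← Finset.sum_fiberwise (s := Finset.univ) (g := fun x : GaloisField p n => Algebra.norm (ZMod p) (aeval x f))]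
    refine Finset.sum_congr rfl fun a _ => ?_
    rw [Finset.sum_congr rfl (g := fun _ => χ a) (by intro x hx; rw [(Finset.mem_filter.mp hx).2])]
    rw [Finset.sum_const, nsmul_eq_mul, mul_comm]
  have htot : ∑ a, (Na a : ℝ) = q := by
    rw [← Nat.cast_sum, hNadef]
    rw [← Finset.card_eq_sum_card_fiberwise (fun _ _ => Finset.mem_coe.mpr (Finset.mem_univ _))]
    rw [Finset.card_univ, hcard]
  rw [hS]
  have hb : ∀ a, ‖χ a * ((Na a : ℂ) - E)‖ ≤ if a = 0 then 0 else E - Na a := by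
    intro a
    split_ifs with h0
    · rw [h0, MulChar.map_zero]; simp
    · rw [norm_mul, ← Complex.ofReal_natCast, ← Complex.ofReal_sub, Complex.norm_real, Real.norm_eq_abs, abs_sub_comm,
        abs_of_nonneg (sub_nonneg.mpr (hNa a))]
      exact mul_le_of_le_one_left (sub_nonneg.mpr (hNa a)) (chi_le_one χ _)
  refine (norm_sum_le_of_le _ (fun a _ => hb a)).trans ?_
  have e1 : ∑ a : ZMod p, (if a = 0 then (0:ℝ) else E - Na a) = d * E - (q - Na 0) := by
    have : ∀ a : ZMod p, (if a = 0 then (0:ℝ) else E - Na a) = (E - Na a) - (if a = 0 then E - Na 0 else 0) := by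
      intro a; split_ifs with h0 <;> simp [h0]
    simp only [this, Finset.sum_sub_distrib, htot]
    simp [ZMod.card, hd, Nat.cast_sub (by omega : 1 ≤ p)]
    ring
  rw [e1]
  have hdr : (0:ℝ) < d := by exact_mod_cast hd1
  have e2 : (d : ℝ) * E = q + d * (m + 2 * (d * m + t) * p) * s := by rw [hE]; field_simp
  have e3 : (Na 0 : ℝ) ≤ m := by exact_mod_cast hN0
  have e4 : (m:ℝ) ≤ m * s := le_mul_of_one_le_right (by positivity) hs1
  have e5 : (0:ℝ) ≤ (2 * t * p + p) * s := by positivity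
  rw [e2]
  nlinarith

end TRM


namespace TRM
open Polynomial

/-- if T L' = L G on the disc, L has no root there -/
lemma no_root (c S : ℕ → ℂ) (m : ℕ) (C R : ℝ) (hR : 0 < R) (hc0 : c 0 = 1)
    (hcm : ∀ n, m ≤ n → c n = 0)
    (hrec : ∀ n : ℕ, 1 ≤ n → (n : ℂ) * c n = ∑ j ∈ Icc 1 n, S j * c (n - j))
    (hS : ∀ n, 1 ≤ n → ‖S n‖ ≤ C * R ^ n) (L : ℂ[X]) (hL : ∀ n, L.coeff n = c n)
    (z : ℂ) (hz : ‖z‖ * R < 1) : L.eval z ≠ 0 := by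
  intro hroot
  set S' : ℕ → ℂ := fun n => if n = 0 then 0 else S n with hS'
  have hL0 : L ≠ 0 := by
    intro h0; have := hL 0; rw [h0, hc0] at this; simp at this
  have hz0 : z ≠ 0 := by
    rintro rfl
    rw [← coeff_zero_eq_eval_zero, hL, hc0] at hroot; simp at hroot
  have hC : 0 ≤ C := by
    have := (norm_nonneg _).trans (hS 1 le_rfl)
    rw [pow_one] at this
    exact nonneg_of_mul_nonneg_left this hR
  have hSb : ∀ n, ‖S' n‖ ≤ C * R ^ n := by
    intro n; simp only [hS']; split_ifs with h
    · simpa [h] using hC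
    · exact hS n (by omega)
  have hfun : ∀ w : ℂ, ‖w‖ * R < 1 → 
      w * (derivative L).eval w = L.eval w * ∑' n, S' n * w ^ n := by
    intro w hw
    have hsum : Summable fun n => ‖S' n * w ^ n‖ := by
      refine Summable.of_nonneg_of_le (fun n => norm_nonneg _) (fun n => ?_)
        ((summable_geometric_of_lt_one (by positivity) hw).mul_left C)
      rw [norm_mul, norm_pow, mul_pow, mul_comm (‖w‖ ^ n), ← mul_assoc]
      gcongr; exact hSb n
    have hfin : ∀ n ∉ Finset.range m, c n * w ^ n = 0 := by
      intro n hn; rw [hcm n (by simpa using hn), zero_mul]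
    have hsumc : Summable fun n => ‖c n * w ^ n‖ :=
      summable_of_ne_finset_zero (s := Finset.range m) (fun n hn => by rw [hfin n hn, norm_zero])
    have hdeg : L.natDegree < m + 1 := by
      refine Nat.lt_succ_of_le (natDegree_le_iff_coeff_eq_zero.mpr fun n hn => ?_)
      rw [hL, hcm n hn.le]
    have hLw : L.eval w = ∑' n, c n * w ^ n := by
      rw [tsum_eq_sum (s := Finset.range (m + 1))
        (fun n hn => by rw [hcm n (by simp at hn; omega), zero_mul]), eval_eq_sum_range' hdeg]
      simp [hL]
    have hdL : w * (derivative L).eval w = ∑' n : ℕ, (n : ℂ) * c n * w ^ n := by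
      rw [tsum_eq_sum (s := Finset.range (m + 2))
        (fun n hn => by rw [hcm n (by simp at hn; omega), mul_zero, zero_mul])]
      rw [eval_eq_sum_range' (n := m + 1) (lt_of_le_of_lt (natDegree_derivative_le L) (by omega)), Finset.mul_sum, Finset.sum_range_succ' _ (m + 1)]
      simp only [Nat.cast_zero, zero_mul, add_zero, coeff_derivative, hL]
      refine Finset.sum_congr rfl fun n _ => ?_
      push_cast; ring
    rw [hLw, hdL, tsum_mul_tsum_eq_tsum_sum_antidiagonal_of_summable_norm hsumc hsum]
    congr 1; ext n
    rw [Finset.Nat.sum_antidiagonal_eq_sum_range_succ (f := fun i j => c i * w ^ i * (S' j * w ^ j)), ← Finset.sum_range_reflect]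
    rcases Nat.eq_zero_or_pos n with h0 | h0
    · subst h0; simp [hS']
    rw [hrec n h0, Finset.sum_range_succ', Finset.sum_mul]
    have e0 : n + 1 - 1 - 0 = n := by omega
    rw [e0]
    simp only [Nat.sub_self, hS', if_true, zero_mul, mul_zero, add_zero]
    rw [Finset.range_eq_Ico, Finset.sum_Ico_add' (fun j => c (n + 1 - 1 - j) * w ^ (n + 1 - 1 - j) * ((if n - (n + 1 - 1 - j) = 0 then 0 else S (n - (n + 1 - 1 - j))) * w ^ (n - (n + 1 - 1 - j)))) 0 n 1]
    have : Finset.Ico (0 + 1) (n + 1) = Finset.Icc 1 n := by ext; simp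
    rw [this]
    refine Finset.sum_congr rfl fun j hj => ?_
    rw [Finset.mem_Icc] at hj
    rw [show n - (n + 1 - 1 - j) = j by omega, show n + 1 - 1 - j = n - j by omega, if_neg (by omega)]
    rw [show w ^ n = w ^ (n - j) * w ^ j by rw [← pow_add]; congr 1; omega]
    ring
  -- factor L
  obtain ⟨M, hLM, hM⟩ := L.exists_eq_pow_rootMultiplicity_mul_and_not_dvd hL0 z
  set k := L.rootMultiplicity z with hk
  have hk1 : 1 ≤ k := by
    rw [hk, Nat.succ_le_iff, rootMultiplicity_pos hL0]; exact hroot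
  have hMz : M.eval z ≠ 0 := by rwa [Ne, ← IsRoot.def, ← dvd_iff_isRoot]
  obtain ⟨k', hk'⟩ : ∃ k', k = k' + 1 := ⟨k - 1, by omega⟩
  -- radius
  obtain ⟨ρ, hρ1, hρ2⟩ : ∃ ρ : ℝ, ‖z‖ < ρ ∧ ρ * R < 1 := by
    have : ‖z‖ < 1 / R := by rwa [lt_div_iff₀ hR]
    obtain ⟨ρ, h1, h2⟩ := exists_between this
    exact ⟨ρ, h1, by rwa [lt_div_iff₀ hR] at h2⟩
  have hρ0 : 0 < ρ := (norm_nonneg z).trans_lt hρ1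
  set D := ∑' n, C * (ρ * R) ^ n with hD
  have hGb : ∀ w : ℂ, ‖w‖ ≤ ρ → ‖∑' n, S' n * w ^ n‖ ≤ D := by
    intro w hw
    refine tsum_of_norm_bounded (((summable_geometric_of_lt_one (by positivity) hρ2).mul_left C).hasSum) fun n => ?_
    rw [norm_mul, norm_pow, mul_pow, mul_comm (ρ ^ n), ← mul_assoc]
    gcongr; exact hSb n
  -- bound near z
  have hnear : ∀ w : ℂ, ‖w‖ ≤ ρ → w ≠ z → 
      ‖w * ((k : ℂ) * M.eval w + (w - z) * (derivative M).eval w)‖ ≤ ‖w - z‖ * ‖M.eval w‖ * D := by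
    intro w hw hwz
    have h1 := hfun w (lt_of_le_of_lt (by gcongr) hρ2)
    have hwz' : w - z ≠ 0 := sub_ne_zero.mpr hwz
    have h2 : w * ((k : ℂ) * M.eval w + (w - z) * (derivative M).eval w) = (w - z) * M.eval w * ∑' n, S' n * w ^ n := by
      apply mul_left_cancel₀ (pow_ne_zero k' hwz')
      rw [hLM, hk'] at h1
      simp only [derivative_mul, derivative_X_sub_C_pow, eval_mul, eval_add, eval_pow, eval_sub, eval_X, eval_C, add_tsub_cancel_right, eval_natCast] at h1
      rw [hk']
      rw [pow_succ] at h1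
      linear_combination h1
    rw [h2, norm_mul, norm_mul]
    gcongr; exact hGb w hw
  have hlim : ‖z * ((k : ℂ) * M.eval z + (z - z) * (derivative M).eval z)‖ ≤ ‖z - z‖ * ‖M.eval z‖ * D := by
    have hcl1 : Continuous fun w : ℂ => ‖w * ((k : ℂ) * M.eval w + (w - z) * (derivative M).eval w)‖ := by
      have := M.continuous; have := (derivative M).continuous; fun_prop
    have hcl2 : Continuous fun w : ℂ => ‖w - z‖ * ‖M.eval w‖ * D := by
      have := M.continuous; fun_prop
    refine le_of_tendsto_of_tendsto (b := nhdsWithin z {z}ᶜ) (hcl1.tendsto z |>.mono_left nhdsWithin_le_nhds)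
      (hcl2.tendsto z |>.mono_left nhdsWithin_le_nhds) ?_
    have : ∀ᶠ w in nhds z, ‖w‖ < ρ := (continuous_norm.tendsto z).eventually_lt_const hρ1
    filter_upwards [nhdsWithin_le_nhds this, self_mem_nhdsWithin] with w hw1 hw2
    exact hnear w hw1.le hw2
  rw [sub_self, norm_zero, zero_mul, zero_mul, zero_mul, add_zero] at hlim
  have := norm_le_zero_iff.mp hlim
  have hk0 : (k : ℂ) ≠ 0 := by exact_mod_cast (by omega : k ≠ 0)
  exact (mul_ne_zero hz0 (mul_ne_zero hk0 hMz)) this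

theorem first_coeff_bound (c S : ℕ → ℂ) (m : ℕ) (C R : ℝ) (hR : 0 < R) (hc0 : c 0 = 1)
    (hcm : ∀ n, m ≤ n → c n = 0)
    (hrec : ∀ n : ℕ, 1 ≤ n → (n : ℂ) * c n = ∑ j ∈ Icc 1 n, S j * c (n - j))
    (hS : ∀ n, 1 ≤ n → ‖S n‖ ≤ C * R ^ n) : ‖S 1‖ ≤ m * R := by
  have h1 : S 1 = c 1 := by
    have := hrec 1 le_rfl
    simp [hc0] at this; exact this.symm
  have hm : 1 ≤ m := by
    by_contra h
    have := hcm 0 (by omega); rw [hc0] at this; simp at this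
  rcases Nat.eq_or_lt_of_le hm with hm1 | hm1
  · rw [h1, hcm 1 (by omega)]; simp; positivity
  set L : ℂ[X] := ∑ n ∈ range m, monomial n (c n) with hLdef
  have hL : ∀ n, L.coeff n = c n := by
    intro n
    rw [hLdef, finsetSum_coeff]
    simp only [coeff_monomial, Finset.sum_ite_eq', Finset.mem_range]
    split_ifs with h
    · rfl
    · exact (hcm n (by omega)).symm
  have hno := no_root c S m C R hR hc0 hcm hrec hS L hL
  set Q : ℂ[X] := reflect (m - 1) L with hQ
  have hQc : ∀ n ≤ m - 1, Q.coeff n = c (m - 1 - n) := by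
    intro n hn
    rw [hQ, coeff_reflect, revAt_le hn, hL]
  have hLdeg : L.natDegree ≤ m - 1 := by
    rw [natDegree_le_iff_coeff_eq_zero]
    intro n hn; rw [hL, hcm n (by omega)]
  have hQdeg : Q.natDegree ≤ m - 1 := by
    rw [natDegree_le_iff_coeff_eq_zero]
    intro n hn
    rw [hQ, coeff_reflect, revAt_eq_self_of_lt (by omega), hL, hcm n (by omega)]
  have hQtop : Q.coeff (m - 1) = 1 := by rw [hQc _ le_rfl, Nat.sub_self, hc0]
  have hQmon : Q.Monic := monic_of_natDegree_le_of_coeff_eq_one _ hQdeg hQtop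
  have hQd : Q.natDegree = m - 1 := by
    apply le_antisymm hQdeg
    apply le_natDegree_of_ne_zero; rw [hQtop]; simp
  have hnext : Q.nextCoeff = c 1 := by
    rw [nextCoeff_of_natDegree_pos (by omega), hQd, hQc _ (by omega)]
    congr 1; omega
  have hroots : ∀ w ∈ Q.roots, ‖w‖ ≤ R := by
    intro w hw
    by_contra hcon
    push Not at hcon
    have hw0 : w ≠ 0 := by rintro rfl; simp at hcon; linarith
    have hQw : Q.eval w = 0 := (mem_roots'.mp hw).2
    apply hno w⁻¹
    · rw [norm_inv, inv_mul_lt_iff₀ (by positivity)]; linarith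
    · let _ := invertibleOfNonzero (inv_ne_zero hw0)
      have := (eval₂_reflect_eq_zero_iff (RingHom.id ℂ) w⁻¹ (m - 1) L hLdeg).mp
        (by rw [invOf_eq_inv, inv_inv]; exact hQw)
      exact this
  rw [h1, ← hnext, (IsAlgClosed.splits Q).nextCoeff_eq_neg_sum_roots_of_monic hQmon, norm_neg]
  have hcard : (Q.roots.card : ℝ) ≤ m := by
    have := card_roots' Q
    exact_mod_cast (by omega : Q.roots.card ≤ m)
  have : ∀ s : Multiset ℂ, (∀ w ∈ s, ‖w‖ ≤ R) → ‖s.sum‖ ≤ s.card * R := by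
    intro s
    induction s using Multiset.induction_on with
    | empty => simp
    | cons a s ih =>
      intro h
      rw [Multiset.sum_cons, Multiset.card_cons]
      have h1 := norm_add_le a s.sum
      have h2 := ih fun w hw => h w (Multiset.mem_cons_of_mem hw)
      have h3 := h a (Multiset.mem_cons_self _ _)
      push_cast; linarith
  exact (this _ hroots).trans (by gcongr)

end TRM


namespace TRM
open Polynomial

lemma norm_sub_eq {K L : Type*} [Field K] [Field L] [Algebra K L] [FiniteDimensional K L]
    (c : K) (x : L) : Algebra.norm K (algebraMap K L c - x) =
      (minpoly K x).eval c ^ (Module.finrank K L / (minpoly K x).natDegree) := by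
  have hx : IsIntegral K x := Algebra.IsIntegral.isIntegral x
  set E := IntermediateField.adjoin K {x} with hE
  have hfr : Module.finrank K E = (minpoly K x).natDegree := IntermediateField.adjoin.finrank hx
  have hfr2 : Module.finrank K L / (minpoly K x).natDegree = Module.finrank E L := by
    rw [← hfr, ← Module.finrank_mul_finrank K E L, Nat.mul_div_cancel_left]
    exact Module.finrank_pos
  rw [hfr2, ← Algebra.norm_norm (S := E)]
  have h1 : algebraMap K L c - x = algebraMap E L (algebraMap K E c - IntermediateField.AdjoinSimple.gen K x) := by
    simp
  rw [h1, Algebra.norm_algebraMap, map_pow]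
  congr 1
  rw [Algebra.norm_apply, map_sub]
  have h2 : (Algebra.lmul K E) (algebraMap K E c) = algebraMap K (Module.End K E) c := by
    ext y; simp [Algebra.smul_def]
  rw [h2, ← LinearMap.eval_charpoly]
  congr 1
  set pb := IntermediateField.adjoin.powerBasis hx
  have h3 := charpoly_leftMulMatrix pb
  rw [← LinearMap.charpoly_toMatrix _ pb.basis]
  have h4 : pb.gen = IntermediateField.AdjoinSimple.gen K x := by simp [pb]
  rw [h4] at h3
  refine Eq.trans ?_ (h3.trans (IntermediateField.minpoly_gen K x))
  rfl

variable {p : ℕ} [Fact p.Prime]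

/-- number of elements with given minimal polynomial -/
lemma card_minpoly_eq (j : ℕ) (hj : j ≠ 0) (P : (ZMod p)[X]) (hP : P.Monic) (hi : Irreducible P) :
    (univ.filter (fun x : GaloisField p j => minpoly (ZMod p) x = P)).card
      = if P.natDegree ∣ j then P.natDegree else 0 := by
  classical
  have hfin : Module.finrank (ZMod p) (GaloisField p j) = j := GaloisField.finrank p hj
  split_ifs with h
  · have : Fact (Irreducible P) := ⟨hi⟩
    have hfr : Module.finrank (ZMod p) (AdjoinRoot P) = P.natDegree := by
      rw [(AdjoinRoot.powerBasis hi.ne_zero).finrank, AdjoinRoot.powerBasis_dim]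
    have : Finite (AdjoinRoot P) := by
      have : Module.Finite (ZMod p) (AdjoinRoot P) := (AdjoinRoot.powerBasis hi.ne_zero).finite
      exact Module.finite_of_finite (ZMod p)
    obtain ⟨φ⟩ : Nonempty (AdjoinRoot P →ₐ[ZMod p] GaloisField p j) := by
      apply FiniteField.nonempty_algHom_of_finrank_dvd
      rw [hfr, hfin]; exact h
    set y := φ (AdjoinRoot.root P)
    have hy : aeval y P = 0 := by
      rw [aeval_algHom_apply]; simp
    have hmp : P = minpoly (ZMod p) y := minpoly.eq_of_irreducible_of_monic hi hy hP
    have hsp : (P.map (algebraMap (ZMod p) (GaloisField p j))).Splits := by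
      rw [hmp]; exact Normal.splits inferInstance y
    have hsep : P.Separable := PerfectField.separable_of_irreducible hi
    have := card_rootSet_eq_natDegree hsep hsp
    rw [← this, ← Set.toFinset_card]
    congr 1
    ext x
    simp only [Set.mem_toFinset, mem_filter, mem_univ, true_and]
    rw [mem_rootSet_of_ne hi.ne_zero]
    constructor
    · intro hx; rw [← hx]; exact minpoly.aeval _ _
    · intro hx; exact (minpoly.eq_of_irreducible_of_monic hi hx hP).symm
  · rw [card_eq_zero, filter_eq_empty_iff]
    rintro x - hx
    apply h
    rw [← hx]
    have := minpoly.degree_dvd (K := ZMod p) (x := x) (Algebra.IsIntegral.isIntegral x)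
    rwa [hfin] at this

noncomputable def cp (j : ℕ) (x : GaloisField p j) : (ZMod p)[X] :=
  minpoly (ZMod p) x ^ (j / (minpoly (ZMod p) x).natDegree)

lemma cp_monic (j : ℕ) (x : GaloisField p j) : (cp j x).Monic :=
  (minpoly.monic (Algebra.IsIntegral.isIntegral x)).pow _

lemma cp_natDegree (j : ℕ) (hj : j ≠ 0) (x : GaloisField p j) : (cp j x).natDegree = j := by
  have := minpoly.degree_dvd (K := ZMod p) (x := x) (Algebra.IsIntegral.isIntegral x)
  rw [GaloisField.finrank p hj] at this
  rw [cp, natDegree_pow]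
  exact Nat.div_mul_cancel this

lemma dvd_count (g P : (ZMod p)[X]) (hg : g ≠ 0) (hP : P.Monic) (hi : Irreducible P) (t : ℕ) :
    P ^ t ∣ g ↔ t ≤ (UniqueFactorizationMonoid.normalizedFactors g).count P := by
  have := UniqueFactorizationMonoid.emultiplicity_eq_count_normalizedFactors hi hg
  rw [hP.normalize_eq_self] at this
  rw [pow_dvd_iff_le_emultiplicity, this]
  exact_mod_cast Iff.rfl

open UniqueFactorizationMonoid in
open scoped Classical in
lemma sum_card_cp (g : (ZMod p)[X]) (n : ℕ) (hg : g.Monic) (hn : g.natDegree = n) :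
    ∑ j ∈ Icc 1 n, (univ.filter (fun x : GaloisField p j => cp j x ∣ g)).card = n := by
  have hg0 := hg.ne_zero
  set T := (normalizedFactors g).toFinset with hT
  have hmem : ∀ P ∈ T, Irreducible P ∧ P.Monic ∧ P ∣ g := by
    intro P hP
    rw [hT, Multiset.mem_toFinset] at hP
    refine ⟨irreducible_of_normalized_factor _ hP, ?_, dvd_of_mem_normalizedFactors hP⟩
    rw [← normalize_normalized_factor P hP]
    exact monic_normalize (irreducible_of_normalized_factor _ hP).ne_zero
  have hprod : ∏ P ∈ T, P ^ (normalizedFactors g).count P = g := by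
    have h1 := prod_normalizedFactors_eq hg0
    rw [hg.normalize_eq_self, Finset.prod_multiset_count] at h1
    exact h1
  have hdeg : ∑ P ∈ T, (normalizedFactors g).count P * P.natDegree = n := by
    rw [← hn]; conv_rhs => rw [← hprod]
    rw [natDegree_prod_of_monic]
    · simp
    · intro P hP; exact ((hmem P hP).2.1).pow _
  have hle : ∀ P ∈ T, (normalizedFactors g).count P * P.natDegree ≤ n := by
    intro P hP; rw [← hdeg]
    exact Finset.single_le_sum (f := fun P => (normalizedFactors g).count P * P.natDegree) (fun _ _ => Nat.zero_le _) hP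
  have hstep : ∀ j ∈ Icc 1 n, (univ.filter (fun x : GaloisField p j => cp j x ∣ g)).card
      = ∑ P ∈ T, if P.natDegree ∣ j ∧ j / P.natDegree ≤ (normalizedFactors g).count P then P.natDegree else 0 := by
    intro j hj
    have hj1 : 1 ≤ j := (mem_Icc.mp hj).1
    have hj0 : j ≠ 0 := by omega
    rw [card_eq_sum_card_fiberwise (f := fun x => minpoly (ZMod p) x) (t := T)]
    · apply sum_congr rfl
      intro P hP
      obtain ⟨hPi, hPm, hPd⟩ := hmem P hP
      have e1 : (univ.filter (fun x : GaloisField p j => cp j x ∣ g)).filter (fun x => minpoly (ZMod p) x = P)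
        = if j / P.natDegree ≤ (normalizedFactors g).count P then univ.filter (fun x : GaloisField p j => minpoly (ZMod p) x = P) else ∅ := by
        ext x
        split_ifs with h
        · simp only [mem_filter, mem_univ, true_and, and_iff_right_iff_imp]
          intro hx
          rw [cp, hx, dvd_count g P hg0 hPm hPi]; exact h
        · simp only [mem_filter, mem_univ, true_and, notMem_empty, iff_false, not_and]
          intro hx hx2
          apply h
          rw [cp, hx2, dvd_count g P hg0 hPm hPi] at hx
          exact hx
      rw [e1]
      by_cases h : j / P.natDegree ≤ (normalizedFactors g).count P
      · simp only [h, if_true, and_true]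
        exact card_minpoly_eq j hj0 P hPm hPi
      · simp [h]
    · intro x hx
      simp only [coe_filter, mem_univ, true_and, Set.mem_ofPred_eq] at hx
      have hxi : IsIntegral (ZMod p) x := Algebra.IsIntegral.isIntegral x
      have h1 : minpoly (ZMod p) x ^ 1 ∣ g := by
        refine (pow_dvd_pow _ ?_).trans hx
        have := minpoly.degree_dvd (K := ZMod p) (x := x) hxi
        rw [GaloisField.finrank p hj0] at this
        exact Nat.div_pos (Nat.le_of_dvd hj1 this) (minpoly.natDegree_pos hxi)
      rw [dvd_count g _ hg0 (minpoly.monic hxi) (minpoly.irreducible hxi)] at h1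
      simp only [hT, mem_coe, Multiset.mem_toFinset]
      exact Multiset.one_le_count_iff_mem.mp h1
  rw [sum_congr rfl hstep, sum_comm]
  conv_rhs => rw [← hdeg]
  apply sum_congr rfl
  intro P hP
  obtain ⟨hPi, hPm, hPd⟩ := hmem P hP
  have hdp : 0 < P.natDegree := hPi.natDegree_pos
  rw [← sum_filter, sum_const, smul_eq_mul]
  congr 1
  set k := (normalizedFactors g).count P
  have : (Icc 1 n).filter (fun j => P.natDegree ∣ j ∧ j / P.natDegree ≤ k) = (Icc 1 k).image (fun t => P.natDegree * t) := by
    ext j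
    simp only [mem_filter, mem_Icc, mem_image]
    constructor
    · rintro ⟨⟨h1, h2⟩, ⟨t, rfl⟩, h4⟩
      rw [Nat.mul_div_cancel_left _ hdp] at h4
      exact ⟨t, ⟨Nat.pos_of_ne_zero (by rintro rfl; simp at h1), h4⟩, rfl⟩
    · rintro ⟨t, ⟨h1, h2⟩, rfl⟩
      rw [Nat.mul_div_cancel_left _ hdp]
      refine ⟨⟨Nat.mul_pos hdp h1, ?_⟩, dvd_mul_right _ _, h2⟩
      calc P.natDegree * t ≤ P.natDegree * k := Nat.mul_le_mul_left _ h2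
        _ ≤ n := by rw [mul_comm]; exact hle P hP
  rw [this, card_image_of_injective _ (fun a b hab => Nat.eq_of_mul_eq_mul_left hdp hab)]
  simp
end TRM


namespace TRM
open Polynomial

section
variable {p : ℕ} [Fact p.Prime]

lemma mon_finite (p : ℕ) [Fact p.Prime] (n : ℕ) : {g : (ZMod p)[X] | g.Monic ∧ g.natDegree = n}.Finite := by
  apply Set.finite_coe_iff.mp
  apply Finite.of_injective (fun g : {g : (ZMod p)[X] | g.Monic ∧ g.natDegree = n} => fun i : Fin (n+1) => g.1.coeff i)
  rintro ⟨g, hg⟩ ⟨h, hh⟩ hgh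
  simp only [Subtype.mk.injEq]
  ext i
  by_cases hi : i < n + 1
  · exact congrFun hgh ⟨i, hi⟩
  · rw [coeff_eq_zero_of_natDegree_lt, coeff_eq_zero_of_natDegree_lt]
    · rw [hh.2]; omega
    · rw [hg.2]; omega

noncomputable def Mon (p : ℕ) [Fact p.Prime] (n : ℕ) : Finset (ZMod p)[X] := (mon_finite p n).toFinset

lemma mem_Mon {n : ℕ} {g : (ZMod p)[X]} : g ∈ Mon p n ↔ g.Monic ∧ g.natDegree = n := by
  simp [Mon]

noncomputable def psi (χ : MulChar (ZMod p) ℂ) (s : Finset (ZMod p)) (e : ZMod p → ℕ) (g : (ZMod p)[X]) : ℂ :=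
  ∏ c ∈ s, χ (g.eval c) ^ e c

lemma psi_mul (χ : MulChar (ZMod p) ℂ) (s : Finset (ZMod p)) (e : ZMod p → ℕ) (g h : (ZMod p)[X]) :
    psi χ s e (g * h) = psi χ s e g * psi χ s e h := by
  simp [psi, mul_pow, prod_mul_distrib]

noncomputable def cc (χ : MulChar (ZMod p) ℂ) (s : Finset (ZMod p)) (e : ZMod p → ℕ) (n : ℕ) : ℂ :=
  ∑ g ∈ Mon p n, psi χ s e g

lemma cc_zero (χ : MulChar (ZMod p) ℂ) (s : Finset (ZMod p)) (e : ZMod p → ℕ) : cc χ s e 0 = 1 := by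
  have : Mon p 0 = {1} := by
    ext g
    rw [mem_Mon, mem_singleton]
    constructor
    · rintro ⟨h1, h2⟩; exact h1.natDegree_eq_zero.mp h2
    · rintro rfl; simp
  rw [cc, this]; simp [psi]

lemma cc_rec (χ : MulChar (ZMod p) ℂ) (s : Finset (ZMod p)) (e : ZMod p → ℕ) (n : ℕ) (hn : 1 ≤ n) :
    (n : ℂ) * cc χ s e n =
      ∑ j ∈ Icc 1 n, (∑ x : GaloisField p j, psi χ s e (cp j x)) * cc χ s e (n - j) := by
  classical
  have h1 : (n : ℂ) * cc χ s e n = ∑ g ∈ Mon p n, ∑ j ∈ Icc 1 n, ∑ x : GaloisField p j,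
      if cp j x ∣ g then psi χ s e g else 0 := by
    rw [cc, mul_sum]
    apply sum_congr rfl
    intro g hg
    rw [mem_Mon] at hg
    have := sum_card_cp g n hg.1 hg.2
    have h2 : (n : ℂ) = ∑ j ∈ Icc 1 n, ((univ.filter (fun x : GaloisField p j => cp j x ∣ g)).card : ℂ) := by
      exact_mod_cast this.symm
    rw [h2, sum_mul]
    apply sum_congr rfl
    intro j hj
    rw [← sum_filter, sum_const, nsmul_eq_mul]
  rw [h1, sum_comm]
  apply sum_congr rfl
  intro j hj
  rw [mem_Icc] at hj
  rw [sum_comm, sum_mul]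
  apply sum_congr rfl
  intro x _
  rw [← sum_filter, cc, mul_sum]
  symm
  have hcm := cp_monic j x
  have hcd := cp_natDegree j (by omega) x
  apply sum_bij (fun h _ => cp j x * h)
  · intro h hh
    rw [mem_Mon] at hh
    rw [mem_filter, mem_Mon]
    refine ⟨⟨hcm.mul hh.1, ?_⟩, dvd_mul_right _ _⟩
    rw [hcm.natDegree_mul hh.1, hcd, hh.2]; omega
  · intro a _ b _ hab
    exact mul_left_cancel₀ hcm.ne_zero hab
  · intro g hg
    rw [mem_filter, mem_Mon] at hg
    obtain ⟨⟨hg1, hg2⟩, h, rfl⟩ := hg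
    have hm : h.Monic := hcm.of_mul_monic_left hg1
    refine ⟨h, ?_, rfl⟩
    rw [mem_Mon]
    refine ⟨hm, ?_⟩
    rw [hcm.natDegree_mul hm, hcd] at hg2
    omega
  · intro h hh
    rw [psi_mul]

lemma cc_vanish (χ : MulChar (ZMod p) ℂ) (hχ : χ ≠ 1) (s : Finset (ZMod p)) (e : ZMod p → ℕ)
    (h0 : (0 : ZMod p) ∈ s) (he : e 0 = 1) (n : ℕ) (hn : s.card ≤ n) : cc χ s e n = 0 := by
  classical
  set w : (ZMod p)[X] := ∏ c ∈ s.erase 0, (X - C c) with hw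
  have hwd : w.natDegree < n := by
    rw [hw, natDegree_prod_of_monic _ _ (fun c _ => monic_X_sub_C c)]
    simp only [natDegree_X_sub_C, sum_const, smul_eq_mul, mul_one]
    rw [card_erase_of_mem h0]
    have := card_pos.mpr ⟨0, h0⟩
    omega
  have hw0 : w.eval 0 ≠ 0 := by
    rw [hw, eval_prod, prod_ne_zero_iff]
    intro c hc
    simpa using (mem_erase.mp hc).1
  have hwc : ∀ c ∈ s.erase 0, w.eval c = 0 := by
    intro c hc
    rw [hw, eval_prod]
    exact prod_eq_zero hc (by simp)
  have hmem : ∀ t : ZMod p, ∀ g ∈ Mon p n, g + C t * w ∈ Mon p n := by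
    intro t g hg
    rw [mem_Mon] at hg ⊢
    have hlt : (C t * w).natDegree < g.natDegree := by
      rw [hg.2]; exact (natDegree_C_mul_le _ _).trans_lt hwd
    refine ⟨hg.1.add_of_left ?_, ?_⟩
    · exact degree_lt_degree hlt
    · rw [natDegree_add_eq_left_of_natDegree_lt hlt, hg.2]
  have hshift : ∀ t : ZMod p, ∑ g ∈ Mon p n, psi χ s e (g + C t * w) = cc χ s e n := by
    intro t
    rw [cc]
    apply sum_nbij' (fun g => g + C t * w) (fun g => g + C (-t) * w)
    · exact hmem t
    · exact hmem (-t)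
    · intro g _; simp
    · intro g _; simp
    · intro g _; rfl
  have hsum : ∑ t : ZMod p, ∑ g ∈ Mon p n, psi χ s e (g + C t * w) = 0 := by
    rw [sum_comm]
    apply sum_eq_zero
    intro g _
    have h1 : ∀ t : ZMod p, psi χ s e (g + C t * w) = χ (g.eval 0 + t * w.eval 0) * ∏ c ∈ s.erase 0, χ (g.eval c) ^ e c := by
      intro t
      rw [psi, ← mul_prod_erase s _ h0, he, pow_one]
      simp only [eval_add, eval_mul, eval_C]
      congr 1
      apply prod_congr rfl
      intro c hc
      rw [hwc c hc]; simp
    rw [sum_congr rfl (fun t _ => h1 t), ← sum_mul]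
    have h2 : ∑ t : ZMod p, χ (g.eval 0 + t * w.eval 0) = 0 := by
      rw [← MulChar.sum_eq_zero_of_ne_one hχ]
      apply Fintype.sum_bijective (fun t => g.eval 0 + t * w.eval 0)
      · refine ⟨fun a b hab => ?_, fun b => ⟨(b - g.eval 0) / w.eval 0, by field_simp; ring⟩⟩
        exact mul_right_cancel₀ hw0 (add_left_cancel hab)
      · intro t; rfl
    rw [h2, zero_mul]
  rw [sum_congr rfl (fun t _ => hshift t), sum_const, card_univ, ZMod.card, nsmul_eq_mul] at hsum
  rcases mul_eq_zero.mp hsum with h | h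
  · exact absurd h (by exact_mod_cast (Fact.out : p.Prime).ne_zero)
  · exact h

/-- Weil bound for products of shifts -/
theorem weil0 (χ : MulChar (ZMod p) ℂ) (hχ : χ ≠ 1) (s : Finset (ZMod p)) (e : ZMod p → ℕ)
    (h0 : (0 : ZMod p) ∈ s) (he : e 0 = 1) :
    ‖∑ u : ZMod p, ∏ c ∈ s, χ (c - u) ^ e c‖ ≤ s.card * Real.sqrt p := by
  classical
  set h : (ZMod p)[X] := - ∏ c ∈ s.erase 0, (C c - X) ^ e c with hh
  set f : (ZMod p)[X] := ∏ c ∈ s, (C c - X) ^ e c with hf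
  have hfh : f = X * h := by
    rw [hf, hh, ← mul_prod_erase s _ h0, he]; simp
  have hh0 : h.eval 0 ≠ 0 := by
    rw [hh, eval_neg, neg_ne_zero, eval_prod, prod_ne_zero_iff]
    intro c hc
    simp [(mem_erase.mp hc).1]
  obtain ⟨C0, hC0⟩ := stepanov_sum p f h hfh hh0 χ hχ
  have hpp : 0 < (p : ℝ) := by exact_mod_cast (Fact.out : p.Prime).pos
  have hpsi : ∀ j, j ≠ 0 → ∀ x : GaloisField p j, χ (Algebra.norm (ZMod p) (aeval x f)) = psi χ s e (cp j x) := by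
    intro j hj x
    rw [hf, map_prod, map_prod, map_prod, psi]
    apply prod_congr rfl
    intro c hc
    rw [map_pow, map_pow, map_pow, map_sub, aeval_C, aeval_X, norm_sub_eq, GaloisField.finrank p hj, cp, eval_pow]
  have hrec := cc_rec χ s e
  have := first_coeff_bound (cc χ s e) (fun j => ∑ x : GaloisField p j, psi χ s e (cp j x)) s.card C0 (Real.sqrt p)
    (Real.sqrt_pos.mpr hpp) (cc_zero χ s e) (fun n hn => cc_vanish χ hχ s e h0 he n hn) hrec (by
      intro n hn
      have := hC0 n (by omega)
      rwa [sum_congr rfl (fun x _ => hpsi n (by omega) x)] at this)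
  have h1 := hrec 1 le_rfl
  simp only [Nat.cast_one, one_mul, Icc_self, sum_singleton, Nat.sub_self, cc_zero, mul_one] at h1
  rw [← h1] at this
  convert this using 2
  rw [cc]
  apply sum_bij (fun u _ => X - C u)
  · intro u _; rw [mem_Mon]; exact ⟨monic_X_sub_C u, natDegree_X_sub_C u⟩
  · intro a _ b _ hab; exact C_injective (sub_right_injective hab)
  · intro g hg
    rw [mem_Mon] at hg
    refine ⟨-g.coeff 0, mem_univ _, ?_⟩
    have := hg.1.as_sum
    rw [hg.2] at this
    rw [this]; simp
  · intro u _; simp [psi]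
end
end TRM


namespace TRM
section
variable {p : ℕ} [Fact p.Prime]
open scoped ComplexConjugate

lemma p_gt_two (χ : MulChar (ZMod p) ℂ) (hχ : χ ≠ 1) : 2 < p := by
  have h2 := (Fact.out : p.Prime).two_le
  rcases h2.lt_or_eq with h | h
  · exact h
  · exfalso
    apply hχ
    ext u
    subst h
    have : u = 1 := by
      revert u; decide
    rw [this]; simp

lemma chi_pow (χ : MulChar (ZMod p) ℂ) (hχ : χ ≠ 1) (x : ZMod p) : χ x ^ (p - 2) = conj (χ x) := by
  have hp := p_gt_two χ hχ
  by_cases hx : x = 0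
  · subst hx
    rw [MulChar.map_zero]
    rw [zero_pow (by omega)]; simp
  · have h1 : χ x ^ (p - 1) = 1 := by
      rw [← map_pow, ZMod.pow_card_sub_one_eq_one hx, map_one]
    have h2 : ‖χ x‖ = 1 := Complex.norm_eq_one_of_pow_eq_one h1 (by omega)
    have h3 : χ x * conj (χ x) = 1 := by
      rw [Complex.mul_conj, Complex.normSq_eq_norm_sq, h2]; simp
    have h4 : χ x ^ (p-1) = χ x * χ x ^ (p-2) := by
      rw [← pow_succ']; congr 1; omega
    have h5 : χ x ≠ 0 := by
      intro h; rw [h] at h2; simp at h2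
    apply mul_left_cancel₀ h5
    rw [h3, ← h4, h1]

/-- chi or its conjugate -/
noncomputable def chs (χ : MulChar (ZMod p) ℂ) (b : Bool) (x : ZMod p) : ℂ :=
  if b then conj (χ x) else χ x

lemma chs_le (χ : MulChar (ZMod p) ℂ) (b : Bool) (x : ZMod p) : ‖chs χ b x‖ ≤ 1 := by
  unfold chs
  split_ifs
  · rw [RCLike.norm_conj]; exact chi_le_one χ x
  · exact chi_le_one χ x

lemma conj_chs (χ : MulChar (ZMod p) ℂ) (b : Bool) (x : ZMod p) : conj (chs χ b x) = chs χ (!b) x := by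
  unfold chs
  cases b <;> simp

lemma weil_tuple0 (χ : MulChar (ZMod p) ℂ) (hχ : χ ≠ 1) {ι : Type*} [Fintype ι] (b : ι → ZMod p)
    (σ : ι → Bool) (i0 : ι) (hu : ∀ i, b i = b i0 → i = i0) (hs : σ i0 = false) :
    ‖∑ u : ZMod p, ∏ i, chs χ (σ i) (u - b i)‖ ≤ Fintype.card ι * Real.sqrt p := by
  classical
  set E : ι → ℕ := fun i => if σ i then p - 2 else 1 with hE
  have h1 : ∀ i x, chs χ (σ i) x = χ x ^ E i := by
    intro i x
    simp only [chs, hE]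
    split_ifs
    · rw [chi_pow χ hχ]
    · simp
  set s : Finset (ZMod p) := univ.image (fun i => b i0 - b i)
  set e : ZMod p → ℕ := fun c => ∑ i with b i0 - b i = c, E i
  have h0 : (0 : ZMod p) ∈ s := mem_image.mpr ⟨i0, mem_univ _, by simp⟩
  have he : e 0 = 1 := by
    have : univ.filter (fun i => b i0 - b i = 0) = {i0} := by
      ext i
      simp only [mem_filter, mem_univ, true_and, mem_singleton, sub_eq_zero]
      exact ⟨fun h => hu i h.symm, fun h => by rw [h]⟩
    simp only [e]
    rw [this, sum_singleton]; simp [hE, hs]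
  have hw := weil0 χ hχ s e h0 he
  have h2 : ∑ u : ZMod p, ∏ i, chs χ (σ i) (u - b i) = ∑ v : ZMod p, ∏ c ∈ s, χ (c - v) ^ e c := by
    symm
    apply Fintype.sum_bijective (fun v => b i0 - v)
    · exact (Equiv.subLeft (b i0)).bijective
    · intro v
      rw [← prod_fiberwise_of_maps_to (s := univ) (t := s) (g := fun i => b i0 - b i) (fun i _ => mem_image_of_mem _ (mem_univ i))]
      apply prod_congr rfl
      intro c _
      simp only [e]
      rw [← prod_pow_eq_pow_sum]
      apply prod_congr rfl
      intro i hi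
      rw [h1, ← (mem_filter.mp hi).2]
      congr 2; ring
  rw [h2]
  refine hw.trans ?_
  gcongr
  exact card_image_le

lemma weil_tuple (χ : MulChar (ZMod p) ℂ) (hχ : χ ≠ 1) {ι : Type*} [Fintype ι] (b : ι → ZMod p)
    (σ : ι → Bool) (i0 : ι) (hu : ∀ i, b i = b i0 → i = i0) :
    ‖∑ u : ZMod p, ∏ i, chs χ (σ i) (u - b i)‖ ≤ Fintype.card ι * Real.sqrt p := by
  by_cases hs : σ i0 = false
  · exact weil_tuple0 χ hχ b σ i0 hu hs
  · have := weil_tuple0 χ hχ b (fun i => !(σ i)) i0 hu (by simpa using hs)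
    rw [← RCLike.norm_conj] at this
    rw [map_sum] at this
    simp only [map_prod, conj_chs, Bool.not_not] at this
    exact this

lemma bad_card (S : Finset ℕ) (r : ℕ) (hr : 1 ≤ r) :
    ((Fintype.piFinset (fun _ : Fin r ⊕ Fin r => S)).filter
      (fun b => ∀ i0, ∃ i, b i = b i0 ∧ i ≠ i0)).card ≤ r ^ (2 * r) * S.card ^ r := by
  classical
  have hcard : (univ : Finset (((Fin r ⊕ Fin r) → Fin r))).card * (Fintype.piFinset (fun _ : Fin r => S)).card
      = r ^ (2 * r) * S.card ^ r := by
    simp [two_mul]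
  rw [← hcard, ← card_product]
  refine le_trans (card_le_card (t := ((univ : Finset (((Fin r ⊕ Fin r) → Fin r))) ×ˢ (Fintype.piFinset (fun _ : Fin r => S))).image (fun x => x.2 ∘ x.1)) ?_) card_image_le
  intro b hb
  rw [mem_filter, Fintype.mem_piFinset] at hb
  obtain ⟨hbS, hb⟩ := hb
  set T := univ.image b with hT
  have hT2 : T.card ≤ r := by
    have h1 := card_eq_sum_card_image b (univ : Finset (Fin r ⊕ Fin r))
    have h2 : ∑ c ∈ T, 2 ≤ ∑ c ∈ T, (univ.filter (fun i => b i = c)).card := by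
      apply sum_le_sum
      intro c hc
      obtain ⟨i0, -, rfl⟩ := mem_image.mp hc
      obtain ⟨i, hi, hne⟩ := hb i0
      exact one_lt_card.mpr ⟨i, by simp [hi], i0, by simp, hne⟩
    rw [← h1] at h2
    simp at h2
    omega
  have hne : (0 : ℕ) < r := hr
  set i0 : Fin r ⊕ Fin r := Sum.inl ⟨0, hne⟩
  rw [mem_image]
  refine ⟨(fun i => Fin.castLE hT2 (T.equivFin ⟨b i, mem_image_of_mem _ (mem_univ i)⟩),
    fun j => if h : j.1 < T.card then (T.equivFin.symm ⟨j.1, h⟩ : ℕ) else b i0), ?_, ?_⟩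
  · rw [mem_product, Fintype.mem_piFinset]
    refine ⟨mem_univ _, fun j => ?_⟩
    dsimp only
    split_ifs with h
    · have := (T.equivFin.symm ⟨j.1, h⟩).2
      obtain ⟨i, -, hi⟩ := mem_image.mp this
      rw [← hi]; exact hbS i
    · exact hbS i0
  · funext i
    simp

theorem moment (χ : MulChar (ZMod p) ℂ) (hχ : χ ≠ 1) (B r : ℕ) (hr : 1 ≤ r) (hB : B < p) :
    ∑ u : ZMod p, ∑ v : ZMod p, ‖∑ b ∈ Icc 1 B, χ (u - b) * conj (χ (v - b))‖ ^ (2 * r)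
      ≤ (r : ℝ) ^ (2 * r) * B ^ r * p ^ 2 + (2 * r) ^ 2 * B ^ (2 * r) * p := by
  classical
  set σ : Fin r ⊕ Fin r → Bool := fun i => i.isRight with hσ
  set PI := Fintype.piFinset (fun _ : Fin r ⊕ Fin r => Icc 1 B) with hPI
  have hexp : ∀ u v : ZMod p, ((‖∑ b ∈ Icc 1 B, χ (u - b) * conj (χ (v - b))‖ ^ (2 * r) : ℝ) : ℂ)
      = ∑ b ∈ PI, (∏ i, chs χ (σ i) (u - b i)) * ∏ i, chs χ (!(σ i)) (v - b i) := by
    intro u v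
    set T := ∑ b ∈ Icc 1 B, χ (u - b) * conj (χ (v - b)) with hT
    have h1 : ((‖T‖ ^ (2 * r) : ℝ) : ℂ) = ∏ i : Fin r ⊕ Fin r, ∑ b ∈ Icc 1 B, chs χ (σ i) (u - b) * chs χ (!(σ i)) (v - b) := by
      rw [Fintype.prod_sum_type]
      have e1 : ∑ b ∈ Icc 1 B, chs χ false (u - b) * chs χ (!false) (v - b) = T := by
        simp [chs, hT]
      have e2 : ∑ b ∈ Icc 1 B, chs χ true (u - b) * chs χ (!true) (v - b) = conj T := by
        simp [chs, hT, map_sum]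
      simp only [hσ, Sum.isRight_inl, Sum.isRight_inr]
      rw [prod_const, prod_const, e1, e2, card_univ, Fintype.card_fin, ← mul_pow, Complex.mul_conj, Complex.normSq_eq_norm_sq]
      push_cast
      rw [pow_mul]
    rw [h1, prod_univ_sum]
    apply sum_congr rfl
    intro b _
    rw [prod_mul_distrib]
  have hsum : ((∑ u : ZMod p, ∑ v : ZMod p, ‖∑ b ∈ Icc 1 B, χ (u - b) * conj (χ (v - b))‖ ^ (2 * r) : ℝ) : ℂ)
      = ∑ b ∈ PI, (∑ u : ZMod p, ∏ i, chs χ (σ i) (u - b i)) * (∑ v : ZMod p, ∏ i, chs χ (!(σ i)) (v - b i)) := by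
    push_cast
    simp only [← Complex.ofReal_pow, hexp]
    simp only [sum_mul_sum]
    rw [sum_comm]
    rw [sum_congr rfl (fun y _ => sum_comm)]
    rw [sum_comm]
    rw [sum_congr rfl (fun y _ => sum_comm)]
  set Bad := PI.filter (fun b => ∀ i0, ∃ i, b i = b i0 ∧ i ≠ i0) with hBad
  have hpos : 0 ≤ ∑ u : ZMod p, ∑ v : ZMod p, ‖∑ b ∈ Icc 1 B, χ (u - b) * conj (χ (v - b))‖ ^ (2 * r) := by
    positivity
  have htriv : ∀ (τ : Fin r ⊕ Fin r → Bool) (b : Fin r ⊕ Fin r → ℕ), ‖∑ u : ZMod p, ∏ i, chs χ (τ i) (u - b i)‖ ≤ p := by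
    intro τ b
    refine (norm_sum_le _ _).trans ?_
    refine (sum_le_sum (g := fun _ => (1 : ℝ)) ?_).trans ?_
    · intro u _
      rw [norm_prod]
      exact prod_le_one (fun _ _ => norm_nonneg _) (fun _ _ => chs_le _ _ _)
    · simp [ZMod.card]
  rw [← Complex.norm_of_nonneg hpos, hsum]
  refine (norm_sum_le _ _).trans ?_
  rw [← sum_filter_add_sum_filter_not PI (fun b => ∀ i0, ∃ i, b i = b i0 ∧ i ≠ i0)]
  apply add_le_add
  · refine (sum_le_card_nsmul _ _ ((p : ℝ) ^ 2) ?_).trans ?_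
    · intro b _
      rw [norm_mul, sq]
      exact mul_le_mul (htriv _ _) (htriv (fun i => !(σ i)) _) (norm_nonneg _) (by positivity)
    · rw [nsmul_eq_mul]
      have := bad_card (Icc 1 B) r hr
      have h2 : (Bad.card : ℝ) ≤ (r : ℝ) ^ (2 * r) * (B : ℝ) ^ r := by
        simp only [Nat.card_Icc, Nat.add_sub_cancel] at this
        exact_mod_cast this
      gcongr
  · refine (sum_le_card_nsmul _ _ ((2 * r : ℝ) ^ 2 * p) ?_).trans ?_
    · intro b hb
      rw [mem_filter, Fintype.mem_piFinset] at hb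
      obtain ⟨hbS, hb⟩ := hb
      push_neg at hb
      obtain ⟨i0, hi0⟩ := hb
      have hu : ∀ i, ((b i : ℕ) : ZMod p) = b i0 → i = i0 := by
        intro i hi
        apply hi0
        have h1 := (mem_Icc.mp (hbS i)).2
        have h2 := (mem_Icc.mp (hbS i0)).2
        have := (ZMod.natCast_eq_natCast_iff' _ _ _).mp hi
        rwa [Nat.mod_eq_of_lt (by omega), Nat.mod_eq_of_lt (by omega)] at this
      have k1 := weil_tuple χ hχ (fun i => ((b i : ℕ) : ZMod p)) σ i0 hu
      have k2 := weil_tuple χ hχ (fun i => ((b i : ℕ) : ZMod p)) (fun i => !(σ i)) i0 hu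
      rw [norm_mul]
      refine (mul_le_mul k1 k2 (norm_nonneg _) (by positivity)).trans (le_of_eq ?_)
      have : (Fintype.card (Fin r ⊕ Fin r) : ℝ) = 2 * r := by simp; ring
      rw [this]
      have hs : Real.sqrt p * Real.sqrt p = p := Real.mul_self_sqrt (by positivity)
      calc _ = (2 * r : ℝ) ^ 2 * (Real.sqrt p * Real.sqrt p) := by ring
        _ = _ := by rw [hs]
    · rw [nsmul_eq_mul]
      have h2 : ((PI.filter (fun b => ¬ ∀ i0, ∃ i, b i = b i0 ∧ i ≠ i0)).card : ℝ) ≤ (B : ℝ) ^ (2 * r) := by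
        have h3 : (PI.filter (fun b => ¬ ∀ i0, ∃ i, b i = b i0 ∧ i ≠ i0)).card ≤ PI.card := card_filter_le _ _
        have h4 : PI.card = B ^ (2 * r) := by
          rw [hPI]; simp [two_mul]
        rw [h4] at h3
        exact_mod_cast h3
      calc _ ≤ (B : ℝ) ^ (2 * r) * ((2 * r : ℝ) ^ 2 * p) := by gcongr
        _ = _ := by ring
end
end TRM


namespace TRM

lemma divisor_bound (ε : ℝ) (hε : 0 < ε) : ∃ C : ℝ, 1 ≤ C ∧ ∀ n : ℕ, n ≠ 0 →
    (n.divisors.card : ℝ) ≤ C * (n : ℝ) ^ ε := by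
  have hl2 : 0 < Real.log 2 := Real.log_pos (by norm_num)
  set C1 : ℝ := 1 + 1 / (ε * Real.log 2) with hC1
  have hC11 : 1 ≤ C1 := by
    have : 0 ≤ 1 / (ε * Real.log 2) := by positivity
    linarith
  set Q : ℕ := ⌈(2 : ℝ) ^ (1 / ε)⌉₊ with hQ
  refine ⟨C1 ^ Q, one_le_pow₀ hC11, ?_⟩
  intro n hn
  rw [Nat.card_divisors hn]
  push_cast
  have hfac : ∀ q ∈ n.primeFactors, ((n.factorization q : ℝ) + 1) ≤
      (if q < Q then C1 else 1) * ((q : ℝ) ^ (n.factorization q)) ^ ε := by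
    intro q hq
    have hqp := Nat.prime_of_mem_primeFactors hq
    have hq2 : (2 : ℝ) ≤ q := by exact_mod_cast hqp.two_le
    set v := n.factorization q
    have e1 : ((q : ℝ) ^ v) ^ ε = ((q : ℝ) ^ ε) ^ v := by
      rw [← Real.rpow_natCast, ← Real.rpow_natCast, ← Real.rpow_mul (by positivity), ← Real.rpow_mul (by positivity), mul_comm]
    rw [e1]
    split_ifs with h
    · have h2 : (2 : ℝ) ^ ε ≤ (q : ℝ) ^ ε := Real.rpow_le_rpow (by norm_num) hq2 hε.le
      have h3 : 1 + (v : ℝ) * (ε * Real.log 2) ≤ ((2 : ℝ) ^ ε) ^ v := by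
        have : ((2 : ℝ) ^ ε) ^ v = Real.exp ((v : ℝ) * (ε * Real.log 2)) := by
          rw [Real.rpow_def_of_pos (by norm_num), ← Real.exp_nat_mul]; congr 1; ring
        rw [this]
        linarith [Real.add_one_le_exp ((v : ℝ) * (ε * Real.log 2))]
      have h4 : ((2 : ℝ) ^ ε) ^ v ≤ ((q : ℝ) ^ ε) ^ v := by gcongr
      calc (v : ℝ) + 1 ≤ C1 * (1 + (v : ℝ) * (ε * Real.log 2)) := by
            rw [hC1]
            have hx : 0 < ε * Real.log 2 := by positivity
            have h5 : 1 / (ε * Real.log 2) * ((v : ℝ) * (ε * Real.log 2)) = v := by field_simp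
            have h6 : 0 ≤ (v : ℝ) * (ε * Real.log 2) := by positivity
            have h7 : 0 ≤ 1 / (ε * Real.log 2) := by positivity
            nlinarith
        _ ≤ C1 * ((q : ℝ) ^ ε) ^ v := by gcongr; linarith
    · rw [one_mul]
      have h2 : (2 : ℝ) ≤ (q : ℝ) ^ ε := by
        have : (2 : ℝ) ^ (1 / ε) ≤ q := by
          push Not at h
          exact (Nat.le_ceil _).trans (by exact_mod_cast h)
        calc (2 : ℝ) = ((2 : ℝ) ^ (1 / ε)) ^ ε := by
              rw [← Real.rpow_mul (by norm_num)]; field_simp; simp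
          _ ≤ _ := Real.rpow_le_rpow (by positivity) this hε.le
      calc (v : ℝ) + 1 ≤ 2 ^ v := by exact_mod_cast Nat.lt_two_pow_self
        _ ≤ _ := by gcongr
  calc ∏ q ∈ n.primeFactors, ((n.factorization q : ℝ) + 1)
      ≤ ∏ q ∈ n.primeFactors, (if q < Q then C1 else 1) * ((q : ℝ) ^ (n.factorization q)) ^ ε :=
        prod_le_prod (fun _ _ => by positivity) hfac
    _ = (∏ q ∈ n.primeFactors, (if q < Q then C1 else 1)) * (n : ℝ) ^ ε := by
        rw [prod_mul_distrib]
        congr 1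
        rw [Real.finsetProd_rpow _ _ (fun _ _ => by positivity)]
        congr 1
        have := Nat.prod_factorization_pow_eq_self hn
        conv_rhs => rw [← this]
        rw [Finsupp.prod]
        push_cast
        rfl
    _ ≤ C1 ^ Q * (n : ℝ) ^ ε := by
        gcongr
        rw [prod_ite, prod_const, prod_const_one, mul_one]
        apply pow_le_pow_right₀ hC11
        calc _ ≤ (range Q).card := card_le_card (by
              intro q hq; rw [mem_filter] at hq; exact mem_range.mpr hq.2)
          _ = Q := card_range Q

/-- Holder plus Cauchy with collisions -/
lemma holder {ι Y : Type*} [DecidableEq Y] (I : Finset ι) (Z : Finset Y) (φ : ι → Y)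
    (hφ : ∀ i ∈ I, φ i ∈ Z) (g : Y → ℝ) (hg : ∀ y, 0 ≤ g y) (r : ℕ) (hr : 1 ≤ r) :
    (∑ i ∈ I, g (φ i)) ^ (2 * r) ≤ (I.card : ℝ) ^ (2 * r - 2) *
      ((I ×ˢ I).filter (fun x => φ x.1 = φ x.2)).card * ∑ y ∈ Z, g y ^ (2 * r) := by
  classical
  have h1 : (∑ i ∈ I, g (φ i)) ^ r ≤ (I.card : ℝ) ^ (r - 1) * ∑ i ∈ I, g (φ i) ^ r := by
    obtain ⟨k, rfl⟩ : ∃ k, r = k + 1 := ⟨r - 1, by omega⟩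
    have := pow_sum_div_card_le_sum_pow (s := I) (f := fun i => g (φ i)) (fun i _ => hg _) k
    rcases I.eq_empty_or_nonempty with h | h
    · subst h; simp
    · have hc : (0 : ℝ) < I.card := by exact_mod_cast card_pos.mpr h
      rw [div_le_iff₀ (by positivity)] at this
      simp only [Nat.add_sub_cancel]
      linarith
  have h2 : ∑ i ∈ I, g (φ i) ^ r = ∑ y ∈ Z, ((I.filter (fun i => φ i = y)).card : ℝ) * g y ^ r := by
    rw [← sum_fiberwise_of_maps_to hφ]
    apply sum_congr rfl
    intro y _
    rw [sum_congr rfl (fun i hi => by rw [(mem_filter.mp hi).2]), sum_const, nsmul_eq_mul]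
  have h3 : (∑ y ∈ Z, ((I.filter (fun i => φ i = y)).card : ℝ) * g y ^ r) ^ 2 ≤
      (∑ y ∈ Z, ((I.filter (fun i => φ i = y)).card : ℝ) ^ 2) * ∑ y ∈ Z, (g y ^ r) ^ 2 :=
    sum_mul_sq_le_sq_mul_sq _ _ _
  have h4 : (∑ y ∈ Z, ((I.filter (fun i => φ i = y)).card : ℝ) ^ 2) = ((I ×ˢ I).filter (fun x => φ x.1 = φ x.2)).card := by
    rw [card_eq_sum_card_fiberwise (f := fun x => φ x.1) (t := Z)]
    · push_cast
      apply sum_congr rfl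
      intro y _
      rw [sq, ← Nat.cast_mul, ← card_product]
      congr 2
      ext ⟨i, j⟩
      simp only [mem_product, mem_filter]
      constructor
      · rintro ⟨⟨a, b⟩, c, d⟩; exact ⟨⟨⟨a, c⟩, by rw [b, d]⟩, b⟩
      · rintro ⟨⟨⟨a, c⟩, e⟩, b⟩; exact ⟨⟨a, b⟩, c, by rw [← e, b]⟩
    · intro x hx
      simp only [coe_filter, mem_product, Set.mem_ofPred_eq] at hx
      exact hφ _ hx.1.1
  have h5 : 0 ≤ ∑ i ∈ I, g (φ i) := sum_nonneg (fun _ _ => hg _)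
  calc (∑ i ∈ I, g (φ i)) ^ (2 * r) = ((∑ i ∈ I, g (φ i)) ^ r) ^ 2 := by rw [mul_comm, pow_mul]
    _ ≤ ((I.card : ℝ) ^ (r - 1) * ∑ i ∈ I, g (φ i) ^ r) ^ 2 := by gcongr
    _ = (I.card : ℝ) ^ (2 * r - 2) * (∑ i ∈ I, g (φ i) ^ r) ^ 2 := by
        rw [mul_pow, ← pow_mul]; congr 2; omega
    _ ≤ _ := by
        rw [h2, mul_assoc]
        gcongr
        refine h3.trans (le_of_eq ?_)
        rw [h4]
        congr 1
        apply sum_congr rfl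
        intro y _
        rw [← pow_mul, mul_comm]
end TRM


namespace TRM

lemma core_lt (a a' k k' m1 m2 n m1' m2' n' : ℕ) (ha : 0 < a) (ha' : 0 < a') (hn : 0 < n) (hn' : 0 < n')
    (hlt : m1 < m2)
    (E1 : a' * (k + m1 * n) = a * (k' + m1' * n')) (E2 : a' * (k + m2 * n) = a * (k' + m2' * n')) :
    m1' < m2' ∧ a' * (m2 - m1) * n = a * (m2' - m1') * n' := by
  obtain ⟨e, rfl⟩ := Nat.exists_eq_add_of_lt hlt
  have hpos : 0 < a' * (e + 1) * n := by positivity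
  have hE : a * (k' + m2' * n') = a * (k' + m1' * n') + a' * (e + 1) * n := by
    rw [← E1, ← E2]; ring
  have hlt' : m1' < m2' := by
    by_contra h
    push Not at h
    have : a * (k' + m2' * n') ≤ a * (k' + m1' * n') := by gcongr
    omega
  refine ⟨hlt', ?_⟩
  obtain ⟨f, rfl⟩ := Nat.exists_eq_add_of_lt hlt'
  have h1 : m1 + e + 1 - m1 = e + 1 := by omega
  have h2 : m1' + f + 1 - m1' = f + 1 := by omega
  rw [h1, h2]
  nlinarith

/-- distance -/
def dd (x y : ℕ) : ℕ := (x - y) + (y - x)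

lemma core (a a' k k' m1 m2 n m1' m2' n' : ℕ) (ha : 0 < a) (ha' : 0 < a') (hn : 0 < n) (hn' : 0 < n')
    (hne : m1 ≠ m2)
    (E1 : a' * (k + m1 * n) = a * (k' + m1' * n')) (E2 : a' * (k + m2 * n) = a * (k' + m2' * n')) :
    (m1 < m2 ↔ m1' < m2') ∧ a' * dd m1 m2 * n = a * dd m1' m2' * n' := by
  rcases lt_or_gt_of_ne hne with h | h
  · obtain ⟨h1, h2⟩ := core_lt a a' k k' m1 m2 n m1' m2' n' ha ha' hn hn' h E1 E2
    have e1 : dd m1 m2 = m2 - m1 := by unfold dd; omega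
    have e2 : dd m1' m2' = m2' - m1' := by unfold dd; omega
    rw [e1, e2]; exact ⟨⟨fun _ => h1, fun _ => h⟩, h2⟩
  · obtain ⟨h1, h2⟩ := core_lt a a' k k' m2 m1 n m2' m1' n' ha ha' hn hn' h E2 E1
    have e1 : dd m1 m2 = m1 - m2 := by unfold dd; omega
    have e2 : dd m1' m2' = m1' - m2' := by unfold dd; omega
    rw [e1, e2]; exact ⟨⟨fun _ => by omega, fun _ => by omega⟩, h2⟩

/-- index set (m1,m2,k,n,a) -/
def Iset (K M N A : ℕ) : Finset (ℕ × ℕ × ℕ × ℕ × ℕ) :=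
  (Icc 1 M ×ˢ Icc 1 M ×ˢ Icc 1 (2 * K) ×ˢ Icc 1 N ×ˢ Icc 1 A).filter (fun x => x.1 ≠ x.2.1)

lemma mem_Iset {K M N A m1 m2 k n a : ℕ} : (m1, m2, k, n, a) ∈ Iset K M N A ↔
    (1 ≤ m1 ∧ m1 ≤ M) ∧ (1 ≤ m2 ∧ m2 ≤ M) ∧ (1 ≤ k ∧ k ≤ 2 * K) ∧ (1 ≤ n ∧ n ≤ N) ∧ (1 ≤ a ∧ a ≤ A) ∧ m1 ≠ m2 := by
  simp only [Iset, mem_filter, mem_product, mem_Icc]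
  tauto

/-- integer collision -/
def Coll (x y : ℕ × ℕ × ℕ × ℕ × ℕ) : Prop :=
  y.2.2.2.2 * (x.2.2.1 + x.1 * x.2.2.2.1) = x.2.2.2.2 * (y.2.2.1 + y.1 * y.2.2.2.1) ∧
  y.2.2.2.2 * (x.2.2.1 + x.2.1 * x.2.2.2.1) = x.2.2.2.2 * (y.2.2.1 + y.2.1 * y.2.2.2.1)

instance (x y) : Decidable (Coll x y) := by unfold Coll; infer_instance

lemma kq (n k1 k2 m1 m2 : ℕ) (h1 : 1 ≤ k1) (h2 : 1 ≤ k2) (hn : 0 < n) (hq : (k1 - 1) / n = (k2 - 1) / n)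
    (h : k1 + m1 * n = k2 + m2 * n) : k1 = k2 ∧ m1 = m2 := by
  have hm : (k1 - 1) % n = (k2 - 1) % n := by
    have e1 : (k1 - 1 + m1 * n) % n = (k2 - 1 + m2 * n) % n := by congr 1; omega
    simpa using e1
  have hk : k1 - 1 = k2 - 1 := by
    rw [← Nat.div_add_mod (k1 - 1) n, ← Nat.div_add_mod (k2 - 1) n, hq, hm]
  have hk' : k1 = k2 := by omega
  refine ⟨hk', ?_⟩
  subst hk'
  exact Nat.eq_of_mul_eq_mul_right hn (by omega)

lemma coll_card (K M N A : ℕ) :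
    ((Iset K M N A ×ˢ Iset K M N A).filter (fun x => Coll x.1 x.2)).card ≤
      ∑ t ∈ Icc 1 A ×ˢ Icc 1 M ×ˢ Icc 1 N, ((t.1 * t.2.1 * t.2.2).divisors.card) ^ 2 * ((2 * K) * M * 2 * (2 * K / t.2.2 + 1)) := by
  classical
  set T : Finset (Σ _ : ℕ × ℕ × ℕ, ℕ × ℕ × ℕ × ℕ × Bool × ℕ) :=
    (Icc 1 A ×ˢ Icc 1 M ×ˢ Icc 1 N).sigma (fun t => (t.1 * t.2.1 * t.2.2).divisors ×ˢ (t.1 * t.2.1 * t.2.2).divisors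
      ×ˢ Icc 1 (2 * K) ×ˢ Icc 1 M ×ˢ (univ : Finset Bool) ×ˢ range (2 * K / t.2.2 + 1)) with hT
  have hTc : T.card = ∑ t ∈ Icc 1 A ×ˢ Icc 1 M ×ˢ Icc 1 N, ((t.1 * t.2.1 * t.2.2).divisors.card) ^ 2 * ((2 * K) * M * 2 * (2 * K / t.2.2 + 1)) := by
    rw [hT, card_sigma]
    apply sum_congr rfl
    intro t _
    simp only [card_product, Nat.card_Icc, card_univ, Fintype.card_bool, card_range]
    simp only [Nat.add_sub_cancel]
    ring
  rw [← hTc]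
  apply card_le_card_of_injOn (fun x => (⟨(x.1.2.2.2.2, dd x.2.1 x.2.2.1, x.2.2.2.2.1),
    (x.2.2.2.2.2, x.1.2.2.2.1, x.1.2.2.1, x.1.1, decide (x.1.1 < x.1.2.1), (x.2.2.2.1 - 1) / x.2.2.2.2.1)⟩ : Σ _ : ℕ × ℕ × ℕ, ℕ × ℕ × ℕ × ℕ × Bool × ℕ))
  · rintro ⟨⟨m1, m2, k, n, a⟩, ⟨m1', m2', k', n', a'⟩⟩ hx
    rw [mem_coe, mem_filter, mem_product, mem_Iset, mem_Iset] at hx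
    simp only [Coll] at hx
    obtain ⟨⟨⟨h1, h2, h3, h4, h5, h6⟩, ⟨g1, g2, g3, g4, g5, g6⟩⟩, E1, E2⟩ := hx
    obtain ⟨hs, hd⟩ := core a a' k k' m1 m2 n m1' m2' n' h5.1 g5.1 h4.1 g4.1 h6 E1 E2
    simp only [hT, coe_sigma, Set.mem_sigma_iff, mem_coe, mem_product, mem_Icc, Nat.mem_divisors, mem_univ, mem_range, true_and]
    have hdd : 1 ≤ dd m1' m2' ∧ dd m1' m2' ≤ M := by unfold dd; omega
    have hX : a * dd m1' m2' * n' ≠ 0 := by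
      have : 0 < a * dd m1' m2' * n' := Nat.mul_pos (Nat.mul_pos h5.1 hdd.1) g4.1
      omega
    refine ⟨⟨h5, hdd, g4⟩, ⟨⟨dd m1 m2 * n, ?_⟩, hX⟩, ⟨⟨a' * dd m1 m2, ?_⟩, hX⟩, h3, h1, ?_⟩
    · rw [← hd]; ring
    · rw [← hd]; ring
    · have : (k' - 1) / n' ≤ 2 * K / n' := Nat.div_le_div_right (by omega)
      omega
  · rintro ⟨⟨m1, m2, k, n, a⟩, ⟨m1', m2', k', n', a'⟩⟩ hx ⟨⟨l1, l2, j, q, b⟩, ⟨l1', l2', j', q', b'⟩⟩ hy hxy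
    rw [mem_coe, mem_filter, mem_product, mem_Iset, mem_Iset] at hx hy
    simp only [Coll] at hx hy
    obtain ⟨⟨⟨h1, h2, h3, h4, h5, h6⟩, ⟨g1, g2, g3, g4, g5, g6⟩⟩, E1, E2⟩ := hx
    obtain ⟨⟨⟨h1', h2', h3', h4', h5', h6'⟩, ⟨g1', g2', g3', g4', g5', g6'⟩⟩, E1', E2'⟩ := hy
    obtain ⟨hs, hd⟩ := core a a' k k' m1 m2 n m1' m2' n' h5.1 g5.1 h4.1 g4.1 h6 E1 E2
    obtain ⟨hs', hd'⟩ := core b b' j j' l1 l2 q l1' l2' q' h5'.1 g5'.1 h4'.1 g4'.1 h6' E1' E2'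
    simp only [Sigma.mk.injEq, Prod.mk.injEq, heq_eq_eq, decide_eq_decide] at hxy
    obtain ⟨⟨rfl, hdd, rfl⟩, rfl, rfl, rfl, rfl, hsg, hq⟩ := hxy
    rw [← hdd, ← hd] at hd'
    have hdd2 : dd m1 m2 = dd m1 l2 := by
      have := Nat.eq_of_mul_eq_mul_right h4.1 hd'
      exact (Nat.eq_of_mul_eq_mul_left g5.1 this).symm
    have hm2 : m2 = l2 := by unfold dd at hdd2; omega
    subst hm2
    rw [E1] at E1'
    obtain ⟨hk, hm⟩ := kq n' k' j' m1' l1' g3.1 g3'.1 g4.1 hq (Nat.eq_of_mul_eq_mul_left h5.1 E1')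
    subst hk hm
    have hm2 : m2' = l2' := by unfold dd at hdd; omega
    subst hm2
    rfl
end TRM


namespace TRM
section
variable {p : ℕ} [Fact p.Prime]
open scoped ComplexConjugate

noncomputable def TT (χ : MulChar (ZMod p) ℂ) (B : ℕ) (y : ZMod p × ZMod p) : ℝ :=
  ‖∑ b ∈ Icc 1 B, χ (y.1 - b) * conj (χ (y.2 - b))‖

noncomputable def phi (p : ℕ) [Fact p.Prime] (x : ℕ × ℕ × ℕ × ℕ × ℕ) : ZMod p × ZMod p :=
  (((x.2.2.1 : ZMod p) + x.1 * x.2.2.2.1) / x.2.2.2.2, ((x.2.2.1 : ZMod p) + x.2.1 * x.2.2.2.1) / x.2.2.2.2)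

lemma TT_le (χ : MulChar (ZMod p) ℂ) (B : ℕ) (y : ZMod p × ZMod p) : TT χ B y ≤ B := by
  unfold TT
  refine (norm_sum_le _ _).trans ?_
  refine (sum_le_card_nsmul _ _ (1 : ℝ) ?_).trans (by simp)
  intro b _
  rw [norm_mul, RCLike.norm_conj]
  exact mul_le_one₀ (chi_le_one _ _) (norm_nonneg _) (chi_le_one _ _)

lemma chi_norm (χ : MulChar (ZMod p) ℂ) (a : ZMod p) (ha : a ≠ 0) : ‖χ a‖ = 1 := by
  have h1 : χ a ^ (p - 1) = 1 := by
    rw [← map_pow, ZMod.pow_card_sub_one_eq_one ha, map_one]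
  have := (Fact.out : p.Prime).two_le
  exact Complex.norm_eq_one_of_pow_eq_one h1 (by omega)

lemma expand_b (χ : MulChar (ZMod p) ℂ) (α : ℕ → ℂ) (hα : ∀ m, ‖α m‖ ≤ 1) (M B k n a : ℕ)
    (ha : (a : ZMod p) ≠ 0) :
    ∑ b ∈ Icc 1 B, ‖∑ m ∈ Icc 1 M, α m * χ ((k : ZMod p) - a * b + m * n)‖ ^ 2 ≤
      ∑ m1 ∈ Icc 1 M, ∑ m2 ∈ Icc 1 M, TT χ B (phi p (m1, m2, k, n, a)) := by
  have h1 : ((∑ b ∈ Icc 1 B, ‖∑ m ∈ Icc 1 M, α m * χ ((k : ZMod p) - a * b + m * n)‖ ^ 2 : ℝ) : ℂ) =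
      ∑ m1 ∈ Icc 1 M, ∑ m2 ∈ Icc 1 M, (α m1 * conj (α m2)) *
        ∑ b ∈ Icc 1 B, χ (((k : ZMod p) + m1 * n) / a - b) * conj (χ (((k : ZMod p) + m2 * n) / a - b)) := by
    push_cast
    have h2 : ∀ b ∈ Icc 1 B, ((‖∑ m ∈ Icc 1 M, α m * χ ((k : ZMod p) - a * b + m * n)‖ : ℂ)) ^ 2 =
        ∑ m1 ∈ Icc 1 M, ∑ m2 ∈ Icc 1 M, (α m1 * conj (α m2)) *
          (χ (((k : ZMod p) + m1 * n) / a - b) * conj (χ (((k : ZMod p) + m2 * n) / a - b))) := by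
      intro b _
      rw [← Complex.mul_conj', map_sum, sum_mul_sum]
      apply sum_congr rfl
      intro m1 _
      apply sum_congr rfl
      intro m2 _
      have e : ∀ m : ℕ, χ ((k : ZMod p) - a * b + m * n) = χ a * χ (((k : ZMod p) + m * n) / a - b) := by
        intro m
        rw [← map_mul]
        congr 1
        field_simp
        ring
      rw [e m1, e m2]
      have hn : χ (a : ZMod p) * conj (χ (a : ZMod p)) = 1 := by
        rw [Complex.mul_conj', chi_norm χ _ ha]; simp
      simp only [map_mul]
      linear_combination (α m1 * conj (α m2)) *
          (χ (((k : ZMod p) + m1 * n) / a - b) * conj (χ (((k : ZMod p) + m2 * n) / a - b))) * hn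
    rw [sum_congr rfl h2, sum_comm]
    apply sum_congr rfl
    intro m1 _
    rw [sum_comm]
    apply sum_congr rfl
    intro m2 _
    rw [mul_sum]
  have hpos : 0 ≤ ∑ b ∈ Icc 1 B, ‖∑ m ∈ Icc 1 M, α m * χ ((k : ZMod p) - a * b + m * n)‖ ^ 2 := by positivity
  rw [← Complex.norm_of_nonneg hpos, h1]
  refine (norm_sum_le _ _).trans (sum_le_sum fun m1 _ => (norm_sum_le _ _).trans (sum_le_sum fun m2 _ => ?_))
  rw [norm_mul, norm_mul, RCLike.norm_conj]
  have : ‖α m1‖ * ‖α m2‖ ≤ 1 := mul_le_one₀ (hα _) (norm_nonneg _) (hα _)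
  exact mul_le_of_le_one_left (norm_nonneg _) this

lemma step1 (χ : MulChar (ZMod p) ℂ) (α : ℕ → ℂ) (hα : ∀ m, ‖α m‖ ≤ 1) (K M N A B : ℕ)
    (hAB : A * B ≤ K) (hA : A < p) :
    (A * B : ℝ) * ∑ k ∈ Icc 1 K, ∑ n ∈ Icc 1 N, ‖∑ m ∈ Icc 1 M, α m * χ ((k : ZMod p) + m * n)‖ ^ 2
      ≤ M * (2 * K) * N * A * B + ∑ i ∈ Iset K M N A, TT χ B (phi p i) := by
  classical
  set F : ZMod p → ℕ → ℝ := fun x n => ‖∑ m ∈ Icc 1 M, α m * χ (x + m * n)‖ ^ 2 with hF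
  have hF0 : ∀ x n, 0 ≤ F x n := fun x n => by positivity
  have hshift : ∀ a ∈ Icc 1 A, ∀ b ∈ Icc 1 B, ∑ k ∈ Icc 1 K, ∑ n ∈ Icc 1 N, F k n ≤
      ∑ k ∈ Icc 1 (2 * K), ∑ n ∈ Icc 1 N, F ((k : ZMod p) - a * b) n := by
    intro a ha b hb
    rw [mem_Icc] at ha hb
    have hab : a * b ≤ K := (Nat.mul_le_mul ha.2 hb.2).trans hAB
    have h1 : ∑ k ∈ Icc 1 K, ∑ n ∈ Icc 1 N, F k n =
        ∑ k ∈ (Icc 1 K).image (fun k => k + a * b), ∑ n ∈ Icc 1 N, F ((k : ZMod p) - a * b) n := by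
      rw [sum_image (fun x _ y _ h => Nat.add_right_cancel h)]
      apply sum_congr rfl
      intro k _
      push_cast
      rw [add_sub_cancel_right]
    rw [h1]
    apply sum_le_sum_of_subset_of_nonneg
    · intro k hk
      obtain ⟨j, hj, rfl⟩ := mem_image.mp hk
      rw [mem_Icc] at hj ⊢
      constructor <;> omega
    · intro k _ _
      exact sum_nonneg fun n _ => hF0 _ _
  have h1 : (A * B : ℝ) * ∑ k ∈ Icc 1 K, ∑ n ∈ Icc 1 N, F k n ≤
      ∑ a ∈ Icc 1 A, ∑ b ∈ Icc 1 B, ∑ k ∈ Icc 1 (2 * K), ∑ n ∈ Icc 1 N, F ((k : ZMod p) - a * b) n := by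
    have := sum_le_sum fun a ha => sum_le_sum fun b hb => hshift a ha b hb
    refine le_trans (le_of_eq ?_) this
    simp [mul_assoc]
  refine h1.trans ?_
  have h2 : ∑ a ∈ Icc 1 A, ∑ b ∈ Icc 1 B, ∑ k ∈ Icc 1 (2 * K), ∑ n ∈ Icc 1 N, F ((k : ZMod p) - a * b) n
      ≤ ∑ a ∈ Icc 1 A, ∑ k ∈ Icc 1 (2 * K), ∑ n ∈ Icc 1 N, ∑ m1 ∈ Icc 1 M, ∑ m2 ∈ Icc 1 M, TT χ B (phi p (m1, m2, k, n, a)) := by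
    apply sum_le_sum
    intro a ha
    rw [sum_comm]
    apply sum_le_sum
    intro k hk
    rw [sum_comm]
    apply sum_le_sum
    intro n hn
    apply expand_b χ α hα M B k n a
    rw [mem_Icc] at ha
    intro h0
    rw [ZMod.natCast_eq_zero_iff] at h0
    have := Nat.le_of_dvd (by omega) h0
    omega
  refine h2.trans ?_
  have h3 : ∑ a ∈ Icc 1 A, ∑ k ∈ Icc 1 (2 * K), ∑ n ∈ Icc 1 N, ∑ m1 ∈ Icc 1 M, ∑ m2 ∈ Icc 1 M, TT χ B (phi p (m1, m2, k, n, a))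
      = ∑ m1 ∈ Icc 1 M, ∑ m2 ∈ Icc 1 M, ∑ k ∈ Icc 1 (2 * K), ∑ n ∈ Icc 1 N, ∑ a ∈ Icc 1 A, TT χ B (phi p (m1, m2, k, n, a)) := by
    have e1 : ∑ a ∈ Icc 1 A, ∑ k ∈ Icc 1 (2 * K), ∑ n ∈ Icc 1 N, ∑ m1 ∈ Icc 1 M, ∑ m2 ∈ Icc 1 M, TT χ B (phi p (m1, m2, k, n, a))
      = ∑ y ∈ Icc 1 A ×ˢ Icc 1 (2 * K) ×ˢ Icc 1 N ×ˢ Icc 1 M ×ˢ Icc 1 M, TT χ B (phi p (y.2.2.2.1, y.2.2.2.2, y.2.1, y.2.2.1, y.1)) := by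
      simp only [sum_product]
    have e2 : ∑ m1 ∈ Icc 1 M, ∑ m2 ∈ Icc 1 M, ∑ k ∈ Icc 1 (2 * K), ∑ n ∈ Icc 1 N, ∑ a ∈ Icc 1 A, TT χ B (phi p (m1, m2, k, n, a))
      = ∑ y ∈ Icc 1 M ×ˢ Icc 1 M ×ˢ Icc 1 (2 * K) ×ˢ Icc 1 N ×ˢ Icc 1 A, TT χ B (phi p y) := by
      simp only [sum_product]
    rw [e1, e2]
    apply sum_nbij' (fun y => (y.2.2.2.1, y.2.2.2.2, y.2.1, y.2.2.1, y.1)) (fun y => (y.2.2.2.2, y.2.2.1, y.2.2.2.1, y.1, y.2.1))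
    · intro y hy
      simp only [mem_product] at hy ⊢
      tauto
    · intro y hy
      simp only [mem_product] at hy ⊢
      tauto
    · intro y _; rfl
    · intro y _; rfl
    · intro y _; rfl
  have e2 : ∑ m1 ∈ Icc 1 M, ∑ m2 ∈ Icc 1 M, ∑ k ∈ Icc 1 (2 * K), ∑ n ∈ Icc 1 N, ∑ a ∈ Icc 1 A, TT χ B (phi p (m1, m2, k, n, a))
      = ∑ y ∈ Icc 1 M ×ˢ Icc 1 M ×ˢ Icc 1 (2 * K) ×ˢ Icc 1 N ×ˢ Icc 1 A, TT χ B (phi p y) := by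
    simp only [sum_product]
  rw [h3, e2, ← sum_filter_not_add_sum_filter _ (fun x => x.1 ≠ x.2.1)]
  apply add_le_add _ le_rfl
  set Dg := (Icc 1 M ×ˢ Icc 1 M ×ˢ Icc 1 (2 * K) ×ˢ Icc 1 N ×ˢ Icc 1 A).filter (fun x : ℕ × ℕ × ℕ × ℕ × ℕ => ¬ x.1 ≠ x.2.1) with hDg
  have hc : Dg.card ≤ M * (2 * K) * N * A := by
    have : (Icc 1 M ×ˢ Icc 1 (2 * K) ×ˢ Icc 1 N ×ˢ Icc 1 A).card = M * (2 * K) * N * A := by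
      simp only [card_product, Nat.card_Icc, Nat.add_sub_cancel]; ring
    rw [← this]
    apply card_le_card_of_injOn (fun x => (x.1, x.2.2))
    · intro x hx
      simp only [hDg, mem_coe, mem_filter, mem_product] at hx ⊢
      tauto
    · rintro ⟨a1, a2, a3⟩ hx ⟨b1, b2, b3⟩ hy hxy
      simp only [hDg, mem_coe, mem_filter, not_not] at hx hy
      simp only [Prod.mk.injEq] at hxy ⊢
      obtain ⟨rfl, rfl⟩ := hxy
      exact ⟨rfl, hx.2.symm.trans hy.2, rfl⟩
  refine (sum_le_card_nsmul _ _ (B : ℝ) (fun x _ => TT_le χ B _)).trans ?_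
  rw [nsmul_eq_mul]
  gcongr
  exact_mod_cast hc

lemma coll_of_phi (K M N A : ℕ) (hp : A * (2 * K + M * N) < p)
    (x y : ℕ × ℕ × ℕ × ℕ × ℕ) (hx : x ∈ Iset K M N A) (hy : y ∈ Iset K M N A) (h : phi p x = phi p y) : Coll x y := by
  obtain ⟨m1, m2, k, n, a⟩ := x
  obtain ⟨m1', m2', k', n', a'⟩ := y
  rw [mem_Iset] at hx hy
  obtain ⟨h1, h2, h3, h4, h5, h6⟩ := hx
  obtain ⟨g1, g2, g3, g4, g5, g6⟩ := hy
  have hKMN : 0 < 2 * K + M * N := by omega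
  have hAp : A < p := lt_of_le_of_lt (Nat.le_mul_of_pos_right A hKMN) hp
  have ha0 : ∀ a, 1 ≤ a → a ≤ A → (a : ZMod p) ≠ 0 := by
    intro a h1 h2 h0
    rw [ZMod.natCast_eq_zero_iff] at h0
    have := Nat.le_of_dvd (by omega) h0
    omega
  have hlt : ∀ a k m n, a ≤ A → k ≤ 2 * K → m ≤ M → n ≤ N → a * (k + m * n) < p := by
    intro a k m n e1 e2 e3 e4
    refine lt_of_le_of_lt ?_ hp
    gcongr
  have key : ∀ a a' k k' m m' n n' : ℕ, (a : ZMod p) ≠ 0 → (a' : ZMod p) ≠ 0 → a' * (k + m * n) < p → a * (k' + m' * n') < p →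
      ((k : ZMod p) + m * n) / a = ((k' : ZMod p) + m' * n') / a' → a' * (k + m * n) = a * (k' + m' * n') := by
    intro a a' k k' m m' n n' e1 e2 e3 e4 e5
    rw [div_eq_div_iff e1 e2] at e5
    have : ((a' * (k + m * n) : ℕ) : ZMod p) = ((a * (k' + m' * n') : ℕ) : ZMod p) := by
      push_cast; linear_combination e5
    rw [ZMod.natCast_eq_natCast_iff', Nat.mod_eq_of_lt e3, Nat.mod_eq_of_lt e4] at this
    exact this
  simp only [phi, Prod.mk.injEq] at h
  exact ⟨key _ _ _ _ _ _ _ _ (ha0 a h5.1 h5.2) (ha0 a' g5.1 g5.2) (hlt _ _ _ _ g5.2 h3.2 h1.2 h4.2) (hlt _ _ _ _ h5.2 g3.2 g1.2 g4.2) h.1,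
    key _ _ _ _ _ _ _ _ (ha0 a h5.1 h5.2) (ha0 a' g5.1 g5.2) (hlt _ _ _ _ g5.2 h3.2 h2.2 h4.2) (hlt _ _ _ _ h5.2 g3.2 g2.2 g4.2) h.2⟩

lemma J_le (K M N A : ℕ) (hp : A * (2 * K + M * N) < p) (D : ℝ) (hD0 : 0 ≤ D)
    (hD : ∀ x : ℕ, 1 ≤ x → x ≤ A * M * N → (x.divisors.card : ℝ) ≤ D) :
    (((Iset K M N A ×ˢ Iset K M N A).filter (fun x => phi p x.1 = phi p x.2)).card : ℝ) ≤
      D ^ 2 * (4 * A * K * M ^ 2) * (N + 2 * K * (1 + Real.log N)) := by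
  have h1 : ((Iset K M N A ×ˢ Iset K M N A).filter (fun x => phi p x.1 = phi p x.2)).card ≤
      ((Iset K M N A ×ˢ Iset K M N A).filter (fun x => Coll x.1 x.2)).card := by
    apply card_le_card
    intro x hx
    rw [mem_filter, mem_product] at hx ⊢
    exact ⟨hx.1, coll_of_phi K M N A hp x.1 x.2 hx.1.1 hx.1.2 hx.2⟩
  have h2 := h1.trans (coll_card K M N A)
  have h3 : (((Iset K M N A ×ˢ Iset K M N A).filter (fun x => phi p x.1 = phi p x.2)).card : ℝ) ≤
    ∑ t ∈ Icc 1 A ×ˢ Icc 1 M ×ˢ Icc 1 N, D ^ 2 * ((2 * K) * M * 2 * (2 * K * (t.2.2 : ℝ)⁻¹ + 1)) := by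
    refine (Nat.cast_le.mpr h2).trans ?_
    push_cast
    apply sum_le_sum
    intro t ht
    simp only [mem_product, mem_Icc] at ht
    have k1 := hD (t.1 * t.2.1 * t.2.2) (Nat.mul_pos (Nat.mul_pos ht.1.1 ht.2.1.1) ht.2.2.1)
      (Nat.mul_le_mul (Nat.mul_le_mul ht.1.2 ht.2.1.2) ht.2.2.2)
    have k2 : ((2 * K / t.2.2 : ℕ) : ℝ) ≤ 2 * K * (t.2.2 : ℝ)⁻¹ := by
      refine (Nat.cast_div_le).trans (le_of_eq ?_)
      push_cast
      rw [div_eq_mul_inv]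
    gcongr
  refine h3.trans ?_
  simp only [sum_product, sum_const, Nat.card_Icc, Nat.add_sub_cancel, nsmul_eq_mul]
  rw [← mul_sum, ← mul_sum, sum_add_distrib, ← mul_sum]
  have hh : ∑ n ∈ Icc 1 N, ((n : ℝ))⁻¹ ≤ 1 + Real.log N := by
    have := harmonic_le_one_add_log N
    rw [harmonic_eq_sum_Icc] at this
    push_cast at this
    exact this
  have e : ∑ n ∈ Icc 1 N, (1 : ℝ) = N := by simp
  rw [e]
  calc _ = D ^ 2 * (4 * A * K * M ^ 2) * (N + 2 * K * ∑ n ∈ Icc 1 N, ((n : ℝ))⁻¹) := by ring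
    _ ≤ _ := by gcongr
end
end TRM


namespace TRM
section
variable {p : ℕ} [Fact p.Prime]
open scoped ComplexConjugate

lemma off_le (χ : MulChar (ZMod p) ℂ) (hχ : χ ≠ 1) (K M N A B r : ℕ) (hr : 1 ≤ r) (hB : B < p) (Jb θ : ℝ) (hθ : 0 ≤ θ)
    (hJ : (((Iset K M N A ×ˢ Iset K M N A).filter (fun x => phi p x.1 = phi p x.2)).card : ℝ) ≤ Jb)
    (hh : Jb * ((r : ℝ) ^ (2 * r) * B ^ r * p ^ 2 + (2 * r) ^ 2 * B ^ (2 * r) * p) ≤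
      ((M : ℝ) ^ 2 * (2 * K) * N * A) ^ 2 * B ^ (2 * r) * θ ^ (2 * r)) :
    ∑ i ∈ Iset K M N A, TT χ B (phi p i) ≤ ((M : ℝ) ^ 2 * (2 * K) * N * A) * B * θ := by
  classical
  set L : ℝ := (M : ℝ) ^ 2 * (2 * K) * N * A with hL
  have hL0 : 0 ≤ L := by positivity
  have hI : ((Iset K M N A).card : ℝ) ≤ L := by
    have : (Iset K M N A).card ≤ M ^ 2 * (2 * K) * N * A := by
      refine (card_filter_le _ _).trans (le_of_eq ?_)
      simp only [card_product, Nat.card_Icc, Nat.add_sub_cancel]; ring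
    rw [hL]; exact_mod_cast this
  have h1 := holder (Iset K M N A) univ (phi p) (fun _ _ => mem_univ _) (TT χ B) (fun y => norm_nonneg _) r hr
  have h2 : ∑ y : ZMod p × ZMod p, TT χ B y ^ (2 * r) ≤
      (r : ℝ) ^ (2 * r) * B ^ r * p ^ 2 + (2 * r) ^ 2 * B ^ (2 * r) * p := by
    rw [Fintype.sum_prod_type]
    exact moment χ hχ B r hr hB
  have h3 : (∑ i ∈ Iset K M N A, TT χ B (phi p i)) ^ (2 * r) ≤ (L * B * θ) ^ (2 * r) := by
    refine h1.trans ?_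
    have hs0 : 0 ≤ ∑ y : ZMod p × ZMod p, TT χ B y ^ (2 * r) := sum_nonneg fun y _ => pow_nonneg (norm_nonneg _) _
    have hJ0 : 0 ≤ Jb := le_trans (Nat.cast_nonneg _) hJ
    calc _ ≤ L ^ (2 * r - 2) * Jb * ((r : ℝ) ^ (2 * r) * B ^ r * p ^ 2 + (2 * r) ^ 2 * B ^ (2 * r) * p) := by gcongr
      _ ≤ L ^ (2 * r - 2) * (L ^ 2 * B ^ (2 * r) * θ ^ (2 * r)) := by
          rw [mul_assoc]; gcongr
      _ = (L * B * θ) ^ (2 * r) := by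
          have : L ^ (2 * r) = L ^ (2 * r - 2) * L ^ 2 := by rw [← pow_add]; congr 1; omega
          have e : (L * B * θ) ^ (2 * r) = L ^ (2 * r) * B ^ (2 * r) * θ ^ (2 * r) := by
            clear_value L
            rw [mul_pow, mul_pow]
          rw [e, this]
          clear_value L
          ring
  exact le_of_pow_le_pow_left₀ (by omega) (by positivity) h3

lemma S_sq (χ : MulChar (ZMod p) ℂ) (hχ : χ ≠ 1) (α : ℕ → ℂ) (hα : ∀ m, ‖α m‖ ≤ 1)
    (β : ℕ → ℕ → ℂ) (hβ : ∀ k n, ‖β k n‖ ≤ 1) (K M N A B r : ℕ) (hr : 1 ≤ r) (hB : B < p) (hA1 : 1 ≤ A) (hB1 : 1 ≤ B)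
    (hAB : A * B ≤ K) (hA : A < p) (Jb θ : ℝ) (hθ : 0 ≤ θ)
    (hJ : (((Iset K M N A ×ˢ Iset K M N A).filter (fun x => phi p x.1 = phi p x.2)).card : ℝ) ≤ Jb)
    (hh : Jb * ((r : ℝ) ^ (2 * r) * B ^ r * p ^ 2 + (2 * r) ^ 2 * B ^ (2 * r) * p) ≤
      ((M : ℝ) ^ 2 * (2 * K) * N * A) ^ 2 * B ^ (2 * r) * θ ^ (2 * r)) :
    ‖∑ k ∈ Icc 1 K, ∑ m ∈ Icc 1 M, ∑ n ∈ Icc 1 N, α m * β k n * χ ((k : ZMod p) + m * n)‖ ^ 2 ≤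
      (K : ℝ) ^ 2 * N ^ 2 * (2 * M + 2 * M ^ 2 * θ) := by
  have h1 := off_le χ hχ K M N A B r hr hB Jb θ hθ hJ hh
  have h2 := step1 χ α hα K M N A B hAB hA
  set W := ∑ k ∈ Icc 1 K, ∑ n ∈ Icc 1 N, ‖∑ m ∈ Icc 1 M, α m * χ ((k : ZMod p) + m * n)‖ ^ 2 with hW
  have hA' : (0 : ℝ) < A := by exact_mod_cast hA1
  have hB' : (0 : ℝ) < B := by exact_mod_cast hB1
  have h3 : W ≤ K * N * (2 * M + 2 * M ^ 2 * θ) := by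
    have : (A * B : ℝ) * W ≤ (A * B : ℝ) * (K * N * (2 * M + 2 * M ^ 2 * θ)) := by
      refine h2.trans ?_
      refine le_trans (add_le_add_right h1 _) (le_of_eq ?_)
      ring
    exact le_of_mul_le_mul_left this (by positivity)
  have h4 : ‖∑ k ∈ Icc 1 K, ∑ m ∈ Icc 1 M, ∑ n ∈ Icc 1 N, α m * β k n * χ ((k : ZMod p) + m * n)‖ ≤
      ∑ x ∈ Icc 1 K ×ˢ Icc 1 N, 1 * ‖∑ m ∈ Icc 1 M, α m * χ ((x.1 : ZMod p) + m * x.2)‖ := by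
    rw [sum_product]
    refine (norm_sum_le _ _).trans (sum_le_sum fun k _ => ?_)
    rw [sum_comm]
    refine (norm_sum_le _ _).trans (sum_le_sum fun n _ => ?_)
    have : ∑ m ∈ Icc 1 M, α m * β k n * χ ((k : ZMod p) + m * n) = β k n * ∑ m ∈ Icc 1 M, α m * χ ((k : ZMod p) + m * n) := by
      rw [mul_sum]; exact sum_congr rfl fun m _ => by ring
    rw [this, norm_mul]
    gcongr
    exact hβ k n
  calc _ ≤ (∑ x ∈ Icc 1 K ×ˢ Icc 1 N, 1 * ‖∑ m ∈ Icc 1 M, α m * χ ((x.1 : ZMod p) + m * x.2)‖) ^ 2 := by gcongr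
    _ ≤ (∑ x ∈ Icc 1 K ×ˢ Icc 1 N, (1 : ℝ) ^ 2) * ∑ x ∈ Icc 1 K ×ˢ Icc 1 N, ‖∑ m ∈ Icc 1 M, α m * χ ((x.1 : ZMod p) + m * x.2)‖ ^ 2 :=
        sum_mul_sq_le_sq_mul_sq _ _ _
    _ = (K * N : ℝ) * W := by
        rw [hW, sum_product (f := fun x : ℕ × ℕ => ‖∑ m ∈ Icc 1 M, α m * χ ((x.1 : ZMod p) + m * x.2)‖ ^ 2)]
        simp
    _ ≤ (K * N : ℝ) * (K * N * (2 * M + 2 * M ^ 2 * θ)) := by gcongr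
    _ = _ := by ring

lemma S_triv (χ : MulChar (ZMod p) ℂ) (α : ℕ → ℂ) (hα : ∀ m, ‖α m‖ ≤ 1)
    (β : ℕ → ℕ → ℂ) (hβ : ∀ k n, ‖β k n‖ ≤ 1) (K M N : ℕ) :
    ‖∑ k ∈ Icc 1 K, ∑ m ∈ Icc 1 M, ∑ n ∈ Icc 1 N, α m * β k n * χ ((k : ZMod p) + m * n)‖ ≤ (K : ℝ) * M * N := by
  have : ∑ k ∈ Icc 1 K, ∑ m ∈ Icc 1 M, ∑ n ∈ Icc 1 N, (1 : ℝ) = (K : ℝ) * M * N := by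
    simp [mul_assoc]
  rw [← this]
  refine (norm_sum_le _ _).trans (sum_le_sum fun k _ => (norm_sum_le _ _).trans (sum_le_sum fun m _ => (norm_sum_le _ _).trans (sum_le_sum fun n _ => ?_)))
  rw [norm_mul, norm_mul]
  exact mul_le_one₀ (mul_le_one₀ (hα _) (norm_nonneg _) (hβ _ _)) (norm_nonneg _) (chi_le_one _ _)
end

lemma floor_half (x : ℝ) (hx : 1 ≤ x) : x / 2 ≤ (⌊x⌋₊ : ℝ) := by
  have h1 := Nat.lt_floor_add_one x
  have h2 : (1 : ℝ) ≤ ⌊x⌋₊ := by exact_mod_cast Nat.floor_pos.mpr hx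
  linarith

/-- pure real inequality -/
lemma real_ineq (D h q K M N A P E cr Cd ch T : ℝ) (hP : 0 < P) (hE : 1 ≤ E) (hq : 0 < q)
    (hK : q ≤ K) (hM : q ≤ M) (hN : q ≤ N) (hA : K ≤ 2 * E * A) (hA0 : 0 ≤ A) (hcr : 0 ≤ cr) (hCd : 0 ≤ Cd)
    (hD0 : 0 ≤ D) (hD : D ≤ Cd * E) (hh1 : 1 ≤ h) (hh : h ≤ ch * E)
    (hq5 : 32 * q ^ 5 = P * E ^ 5) (hT : 192 * Cd ^ 2 * ch * cr ≤ T * E) (hT0 : 0 ≤ T) :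
    D ^ 2 * (4 * A * K * M ^ 2) * (N + 2 * K * h) * (P * cr) ≤ (M ^ 2 * (2 * K) * N * A) ^ 2 * T := by
  have hK0 : 0 < K := by linarith
  have hM0 : 0 < M := by linarith
  have hN0 : 0 < N := by linarith
  have hE0 : 0 < E := by linarith
  have hch : 0 ≤ ch := by
    by_contra hc
    push Not at hc
    nlinarith
  have s1 : q * (N + 2 * K * h) ≤ 3 * (ch * E) * (N * K) := by
    have a1 : q * N ≤ (ch * E) * (N * K) := by
      calc q * N ≤ K * N := by gcongr
        _ = 1 * (N * K) := by ring
        _ ≤ (ch * E) * (N * K) := by gcongr; linarith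
    have a2 : q * (2 * K * h) ≤ 2 * (ch * E) * (N * K) := by
      calc q * (2 * K * h) ≤ N * (2 * K * (ch * E)) := by gcongr
        _ = _ := by ring
    linarith
  have s2 : q ^ 4 * (N * K) * K ≤ M ^ 2 * K * N * (N * K) * (2 * E * A) := by
    have : q ^ 4 ≤ M ^ 2 * K * N := by
      calc q ^ 4 = q ^ 2 * q * q := by ring
        _ ≤ M ^ 2 * K * N := by gcongr
    gcongr
  -- multiply target by q
  have hq0 : 0 < q * q ^ 4 * K := by positivity
  have s3 : D ^ 2 * (P * cr) * (6 * ch * E ^ 2) ≤ q ^ 5 * T := by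
    have b1 : D ^ 2 * (P * cr) * (6 * ch * E ^ 2) ≤ (Cd * E) ^ 2 * (P * cr) * (6 * ch * E ^ 2) := by gcongr
    have b2 : (Cd * E) ^ 2 * (P * cr) * (6 * ch * E ^ 2) * 32 = (192 * Cd ^ 2 * ch * cr) * (P * E ^ 4) := by ring
    have b3 : (192 * Cd ^ 2 * ch * cr) * (P * E ^ 4) ≤ T * E * (P * E ^ 4) := by gcongr
    have b4 : T * E * (P * E ^ 4) = 32 * q ^ 5 * T := by rw [hq5]; ring
    linarith
  have s4 : D ^ 2 * (4 * A * K * M ^ 2) * (N + 2 * K * h) * (P * cr) * (q ^ 5) ≤ (M ^ 2 * (2 * K) * N * A) ^ 2 * T * q ^ 5 := by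
    calc D ^ 2 * (4 * A * K * M ^ 2) * (N + 2 * K * h) * (P * cr) * (q ^ 5)
        = D ^ 2 * (P * cr) * (4 * A * M ^ 2) * (q * (N + 2 * K * h)) * (q ^ 4 * K) := by ring
      _ ≤ D ^ 2 * (P * cr) * (4 * A * M ^ 2) * (3 * (ch * E) * (N * K)) * (q ^ 4 * K) := by gcongr
      _ = D ^ 2 * (P * cr) * (4 * A * M ^ 2) * (3 * (ch * E)) * (q ^ 4 * (N * K) * K) := by ring
      _ ≤ D ^ 2 * (P * cr) * (4 * A * M ^ 2) * (3 * (ch * E)) * (M ^ 2 * K * N * (N * K) * (2 * E * A)) := by gcongr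
      _ = (M ^ 2 * (2 * K) * N * A) ^ 2 * (D ^ 2 * (P * cr) * (6 * ch * E ^ 2)) := by ring
      _ ≤ (M ^ 2 * (2 * K) * N * A) ^ 2 * (q ^ 5 * T) := by gcongr
      _ = _ := by ring
  exact le_of_mul_le_mul_right s4 (by positivity)

set_option maxHeartbeats 4000000 in
theorem main_bound (η : ℝ) (hη : 0 < η) (hη2 : η < 1 / 40) : ∃ κ : ℝ, 0 < κ ∧ ∃ C : ℝ, 0 < C ∧
    ∀ (p : ℕ) [Fact p.Prime] (χ : MulChar (ZMod p) ℂ), χ ≠ 1 → ∀ (α : ℕ → ℂ), (∀ m, ‖α m‖ ≤ 1) →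
    ∀ (β : ℕ → ℕ → ℂ), (∀ k n, ‖β k n‖ ≤ 1) → ∀ K M N : ℝ,
        (p : ℝ) ^ ((1 : ℝ) / 5 + η) ≤ K → K < (p : ℝ) ^ ((1 : ℝ) / 4 - η) →
        (p : ℝ) ^ ((1 : ℝ) / 5 + η) ≤ M → M < (p : ℝ) ^ ((1 : ℝ) / 4 - η) →
        (p : ℝ) ^ ((1 : ℝ) / 5 + η) ≤ N → N < (p : ℝ) ^ ((1 : ℝ) / 4 - η) →
      ‖∑ k ∈ Icc 1 ⌊K⌋₊, ∑ m ∈ Icc 1 ⌊M⌋₊, ∑ n ∈ Icc 1 ⌊N⌋₊, α m * β k n * χ ((k : ZMod p) + m * n)‖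
        ≤ C * (K * M * N) * (p : ℝ) ^ (-κ) := by
  obtain ⟨Cd, hCd1, hCd⟩ := divisor_bound η hη
  set r : ℕ := ⌈1 / η⌉₊ with hrdef
  have hr : 1 ≤ r := Nat.ceil_pos.mpr (by positivity)
  have hrη : 1 ≤ η * r := by
    have := Nat.le_ceil (1 / η)
    rw [div_le_iff₀ hη] at this
    linarith
  have hr0 : (0 : ℝ) < r := by exact_mod_cast hr
  set cr : ℝ := (r : ℝ) ^ (2 * r) * 2 ^ r + (2 * r) ^ 2 with hcr
  set ch : ℝ := 1 + 1 / η with hch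
  have hcr0 : 0 ≤ cr := by positivity
  have hch0 : 0 ≤ ch := by positivity
  set cθ : ℝ := 1 + 192 * Cd ^ 2 * ch * cr with hcθ
  have hX0 : 0 ≤ 192 * Cd ^ 2 * ch * cr := by positivity
  have hcθ1 : 1 ≤ cθ := by linarith
  refine ⟨η / (4 * r), by positivity, 81 + 2 * (2 + cθ), by positivity, ?_⟩
  intro p hpF χ hχ α hα β hβ K0 M0 N0 hK1 hK2 hM1 hM2 hN1 hN2
  have hp2 : 2 ≤ p := hpF.out.two_le
  have hP1 : (1 : ℝ) < p := by exact_mod_cast (by omega : 1 < p)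
  have hP0 : (0 : ℝ) < p := by linarith
  have hlow1 : (1 : ℝ) ≤ (p : ℝ) ^ ((1 : ℝ) / 5 + η) := Real.one_le_rpow hP1.le (by positivity)
  set κ : ℝ := η / (4 * r) with hκ
  have hκ0 : 0 < κ := by positivity
  have hκη : κ ≤ η := by
    rw [hκ, div_le_iff₀ (by positivity)]
    have : (1 : ℝ) ≤ r := by exact_mod_cast hr
    nlinarith
  have hpκ : 0 < (p : ℝ) ^ (-κ) := by positivity
  set K := ⌊K0⌋₊ with hK
  set M := ⌊M0⌋₊ with hM
  set N := ⌊N0⌋₊ with hN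
  have hK0 : 1 ≤ K0 := hlow1.trans hK1
  have hM0 : 1 ≤ M0 := hlow1.trans hM1
  have hN0 : 1 ≤ N0 := hlow1.trans hN1
  have hKle : (K : ℝ) ≤ K0 := Nat.floor_le (by linarith)
  have hMle : (M : ℝ) ≤ M0 := Nat.floor_le (by linarith)
  have hNle : (N : ℝ) ≤ N0 := Nat.floor_le (by linarith)
  by_cases hp81 : p ≤ 81
  · refine (S_triv χ α hα β hβ K M N).trans ?_
    have h1 : 1 ≤ (81 + 2 * (2 + cθ)) * (p : ℝ) ^ (-κ) := by
      have h2 : (p : ℝ) ^ (-1 : ℝ) ≤ (p : ℝ) ^ (-κ) := Real.rpow_le_rpow_of_exponent_le hP1.le (by linarith)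
      rw [Real.rpow_neg_one] at h2
      have h3 : (p : ℝ) ≤ 81 := by exact_mod_cast hp81
      calc (1 : ℝ) = p * (p : ℝ)⁻¹ := by field_simp
        _ ≤ (81 + 2 * (2 + cθ)) * (p : ℝ) ^ (-κ) := by
          gcongr; linarith
    have h4 : (K : ℝ) * M * N ≤ K0 * M0 * N0 := by gcongr
    have h5 : 0 ≤ K0 * M0 * N0 := by positivity
    calc _ ≤ K0 * M0 * N0 := h4
      _ ≤ (K0 * M0 * N0) * ((81 + 2 * (2 + cθ)) * (p : ℝ) ^ (-κ)) := le_mul_of_one_le_right h5 h1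
      _ = _ := by ring
  push Not at hp81
  -- the large case
  set E : ℝ := (p : ℝ) ^ η with hE
  have hE1 : 1 ≤ E := Real.one_le_rpow hP1.le hη.le
  set B := ⌊E⌋₊ with hB
  have hBE : (B : ℝ) ≤ E := Nat.floor_le (by linarith)
  have hB1 : 1 ≤ B := Nat.floor_pos.mpr hE1
  have hBhalf : E / 2 ≤ B := floor_half E hE1
  have hEp : E < p := by
    calc E < (p : ℝ) ^ (1 : ℝ) := Real.rpow_lt_rpow_of_exponent_lt hP1 (by linarith)
      _ = p := Real.rpow_one _
  have hBp : B < p := by exact_mod_cast (hBE.trans_lt hEp)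
  have hEK : E ≤ K0 := by
    refine le_trans ?_ hK1
    exact Real.rpow_le_rpow_of_exponent_le hP1.le (by linarith)
  have hBK : B ≤ K := Nat.floor_le_floor hEK
  set A := K / B with hA
  have hA1 : 1 ≤ A := Nat.div_pos hBK hB1
  have hABK : A * B ≤ K := Nat.div_mul_le_self K B
  have hKA : K ≤ 2 * (B * A) := by
    have := Nat.lt_mul_div_succ K hB1
    have h2 : B ≤ B * A := Nat.le_mul_of_pos_right B hA1
    change K < B * (A + 1) at this
    rw [mul_add, mul_one] at this
    omega
  have hAK : A ≤ K := Nat.div_le_self K B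
  -- size bounds
  set z : ℝ := (p : ℝ) ^ ((1 : ℝ) / 4) with hz
  have hz4 : z ^ 4 = p := by
    rw [hz, ← Real.rpow_natCast, ← Real.rpow_mul hP0.le]; norm_num
  have hz0 : 0 < z := by positivity
  have hz3 : 3 < z := by
    by_contra h
    push Not at h
    have : z ^ 4 ≤ 3 ^ 4 := by gcongr
    rw [hz4] at this
    have h81 : (81 : ℝ) < p := by exact_mod_cast hp81
    linarith
  have hup : (p : ℝ) ^ ((1 : ℝ) / 4 - η) ≤ z := Real.rpow_le_rpow_of_exponent_le hP1.le (by linarith)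
  have hKz : (K : ℝ) ≤ z := by linarith
  have hMz : (M : ℝ) ≤ z := by linarith
  have hNz : (N : ℝ) ≤ z := by linarith
  have hAz : (A : ℝ) ≤ z := le_trans (by exact_mod_cast hAK) hKz
  have hbig : A * (2 * K + M * N) < p := by
    have : (A : ℝ) * (2 * K + M * N) < p := by
      calc (A : ℝ) * (2 * K + M * N) ≤ z * (2 * z + z * z) := by gcongr
        _ ≤ 3 * z ^ 3 := by nlinarith [mul_pos hz0 hz0]
        _ < z * z ^ 3 := by gcongr
        _ = p := by rw [← hz4]; ring
    exact_mod_cast this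
  have hAp : A < p := by
    refine lt_of_le_of_lt ?_ hbig
    apply Nat.le_mul_of_pos_right
    have : 1 ≤ K := hA1.trans hAK
    omega
  -- divisor bound
  have hD : ∀ x : ℕ, 1 ≤ x → x ≤ A * M * N → (x.divisors.card : ℝ) ≤ Cd * E := by
    intro x hx1 hx2
    refine (hCd x (by omega)).trans ?_
    have : x ≤ p := by
      refine hx2.trans (le_trans ?_ hbig.le)
      rw [mul_assoc]; gcongr; omega
    rw [hE]
    gcongr
  have hJ := J_le (p := p) K M N A hbig (Cd * E) (by positivity) hD
  set T : ℝ := cθ * (p : ℝ) ^ (-η) with hT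
  set θ : ℝ := cθ * (p : ℝ) ^ (-(2 * κ)) with hθ
  have hθT : T ≤ θ ^ (2 * r) := by
    rw [hθ, mul_pow, hT]
    have e1 : ((p : ℝ) ^ (-(2 * κ))) ^ (2 * r) = (p : ℝ) ^ (-η) := by
      rw [← Real.rpow_natCast, ← Real.rpow_mul hP0.le]
      congr 1
      push_cast
      rw [hκ]; field_simp; ring
    rw [e1]
    gcongr
    exact le_self_pow₀ hcθ1 (by omega)
  have hTE : 192 * Cd ^ 2 * ch * cr ≤ T * E := by
    have : (p : ℝ) ^ (-η) * E = 1 := by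
      rw [hE, ← Real.rpow_add hP0]; simp
    have e : T * E = cθ := by rw [hT, mul_assoc, this, mul_one]
    rw [e]; linarith only [hcθ]
  have hq : ∀ y : ℝ, (p : ℝ) ^ ((1 : ℝ) / 5 + η) ≤ y → (p : ℝ) ^ ((1 : ℝ) / 5 + η) / 2 ≤ (⌊y⌋₊ : ℝ) := by
    intro y hy
    refine le_trans ?_ (floor_half y (hlow1.trans hy))
    linarith
  set q : ℝ := (p : ℝ) ^ ((1 : ℝ) / 5 + η) / 2 with hqdef
  have hq0 : 0 < q := by positivity
  have hq5 : 32 * q ^ 5 = p * E ^ 5 := by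
    rw [hqdef, div_pow, ← Real.rpow_natCast, ← Real.rpow_mul hP0.le, hE, ← Real.rpow_natCast ((p : ℝ) ^ η), ← Real.rpow_mul hP0.le]
    have : ((1 : ℝ) / 5 + η) * (5 : ℕ) = 1 + η * (5 : ℕ) := by push_cast; ring
    rw [this, Real.rpow_add hP0, Real.rpow_one]
    ring
  have hlog : 1 + Real.log N ≤ ch * E := by
    have hN1' : (1 : ℝ) ≤ N := by exact_mod_cast Nat.floor_pos.mpr hN0
    have hNp : (N : ℝ) ≤ p := by
      rw [← hz4]
      refine hNz.trans ?_
      exact le_self_pow₀ (by linarith) (by norm_num)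
    have h1 : Real.log N ≤ Real.log p := Real.log_le_log (by linarith) hNp
    have h2 : Real.log p ≤ E / η := Real.log_le_rpow_div hP0.le hη
    rw [hch]
    have : (1 + 1 / η) * E = E + E / η := by ring
    rw [this]
    linarith only [h1, h2, hE1]
  have hlog1 : 1 ≤ 1 + Real.log N := by
    have hN1' : (1 : ℝ) ≤ N := by exact_mod_cast Nat.floor_pos.mpr hN0
    linarith [Real.log_nonneg hN1']
  have hKA' : (K : ℝ) ≤ 2 * E * A := by
    have : (K : ℝ) ≤ 2 * (B * A) := by exact_mod_cast hKA
    calc (K : ℝ) ≤ 2 * (B * A) := this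
      _ ≤ 2 * (E * A) := by gcongr
      _ = _ := by ring
  have hreal := real_ineq (Cd * E) (1 + Real.log N) q K M N A p E cr Cd ch T hP0 hE1 hq0 (hq K0 hK1) (hq M0 hM1) (hq N0 hN1)
    hKA' (by positivity) hcr0 (by linarith) (by positivity) le_rfl hlog1 hlog hq5 hTE (by positivity)
  have hmom : (r : ℝ) ^ (2 * r) * B ^ r * p ^ 2 + (2 * r) ^ 2 * B ^ (2 * r) * p ≤ B ^ (2 * r) * (p * cr) := by
    have h1 : (p : ℝ) ≤ 2 ^ r * B ^ r := by
      rw [← mul_pow]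
      calc (p : ℝ) = (p : ℝ) ^ (1 : ℝ) := (Real.rpow_one _).symm
        _ ≤ (p : ℝ) ^ (η * r) := Real.rpow_le_rpow_of_exponent_le hP1.le hrη
        _ = E ^ r := by rw [Real.rpow_mul hP0.le, Real.rpow_natCast]
        _ ≤ (2 * B) ^ r := by gcongr; linarith
    calc (r : ℝ) ^ (2 * r) * B ^ r * p ^ 2 + (2 * r) ^ 2 * B ^ (2 * r) * p
        = (r : ℝ) ^ (2 * r) * B ^ r * p * p + (2 * r) ^ 2 * B ^ (2 * r) * p := by ring
      _ ≤ (r : ℝ) ^ (2 * r) * B ^ r * p * (2 ^ r * B ^ r) + (2 * r) ^ 2 * B ^ (2 * r) * p := by gcongr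
      _ = B ^ (2 * r) * (p * cr) := by rw [hcr, two_mul r, pow_add, pow_add]; ring
  have hSq := S_sq χ hχ α hα β hβ K M N A B r hr hBp hA1 hB1 hABK hAp _ θ (by positivity) hJ (by
    have hJ0 : 0 ≤ (Cd * E) ^ 2 * (4 * A * K * M ^ 2) * (N + 2 * K * (1 + Real.log N)) := by positivity
    calc _ ≤ (Cd * E) ^ 2 * (4 * A * K * M ^ 2) * (N + 2 * K * (1 + Real.log N)) * (B ^ (2 * r) * (p * cr)) := by gcongr
      _ = ((Cd * E) ^ 2 * (4 * A * K * M ^ 2) * (N + 2 * K * (1 + Real.log N)) * (p * cr)) * B ^ (2 * r) := by ring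
      _ ≤ (((M : ℝ) ^ 2 * (2 * K) * N * A) ^ 2 * T) * B ^ (2 * r) := by gcongr
      _ ≤ (((M : ℝ) ^ 2 * (2 * K) * N * A) ^ 2 * θ ^ (2 * r)) * B ^ (2 * r) := by gcongr
      _ = _ := by ring)
  have hMbig : 1 ≤ M * (2 * (p : ℝ) ^ (-(2 * κ))) := by
    have h1 := hq M0 hM1
    have h2 : (p : ℝ) ^ ((1 : ℝ) / 5 + η) * (p : ℝ) ^ (-(2 * κ)) ≥ 1 := by
      rw [← Real.rpow_add hP0]
      apply Real.one_le_rpow hP1.le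
      linarith
    calc (1 : ℝ) ≤ (p : ℝ) ^ ((1 : ℝ) / 5 + η) * (p : ℝ) ^ (-(2 * κ)) := h2
      _ = q * (2 * (p : ℝ) ^ (-(2 * κ))) := by rw [hqdef]; ring
      _ ≤ _ := by gcongr
  have hfin : ‖∑ k ∈ Icc 1 K, ∑ m ∈ Icc 1 M, ∑ n ∈ Icc 1 N, α m * β k n * χ ((k : ZMod p) + m * n)‖ ^ 2 ≤
      ((81 + 2 * (2 + cθ)) * (K0 * M0 * N0) * (p : ℝ) ^ (-κ)) ^ 2 := by
    have hk2 : ((p : ℝ) ^ (-κ)) ^ 2 = (p : ℝ) ^ (-(2 * κ)) := by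
      rw [← Real.rpow_natCast, ← Real.rpow_mul hP0.le]; congr 1; push_cast; ring
    calc _ ≤ _ := hSq
      _ ≤ (K : ℝ) ^ 2 * N ^ 2 * (2 * M * (M * (2 * (p : ℝ) ^ (-(2 * κ)))) + 2 * M ^ 2 * θ) := by
          have hMM : (2 * M : ℝ) ≤ 2 * M * (M * (2 * (p : ℝ) ^ (-(2 * κ)))) :=
            le_mul_of_one_le_right (by positivity) hMbig
          exact mul_le_mul_of_nonneg_left (add_le_add_left hMM _) (by positivity)
      _ = (K * M * N) ^ 2 * (2 * (2 + cθ)) * (p : ℝ) ^ (-(2 * κ)) := by rw [hθ]; ring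
      _ ≤ (K0 * M0 * N0) ^ 2 * (81 + 2 * (2 + cθ)) ^ 2 * (p : ℝ) ^ (-(2 * κ)) := by
          gcongr
          nlinarith
      _ = _ := by rw [← hk2]; ring
  exact le_of_pow_le_pow_left₀ (by norm_num) (by positivity) hfin
end TRM

theorem trilinear_rational_multiplicative (η : ℝ) (hη : 0 < η) (d₁ d₂ : ℕ)
    (hd₁ : 0 < d₁) (hd₂ : 0 < d₂) :
    ∃ κ : ℝ, 0 < κ ∧ ∃ C : ℝ, 0 < C ∧ ∀ (p : ℕ), p.Prime →
      ∀ (χ : MulChar (ZMod p) ℂ), χ ≠ 1 →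
      ∀ (P₁ P₂ : Polynomial (ZMod p)), P₁ ≠ 0 → P₂ ≠ 0 →
        P₁.natDegree ≤ d₁ → P₂.natDegree ≤ d₁ →
      ∀ (Q₁ Q₂ : MvPolynomial (Fin 2) (ZMod p)), Q₁ ≠ 0 → Q₂ ≠ 0 →
        Q₁.totalDegree ≤ d₂ → Q₂.totalDegree ≤ d₂ →
      ∀ (K M N : ℝ),
        (p : ℝ) ^ ((1 : ℝ) / 5 + η) ≤ K → K < (p : ℝ) ^ ((1 : ℝ) / 4 - η) →
        (p : ℝ) ^ ((1 : ℝ) / 5 + η) ≤ M → M < (p : ℝ) ^ ((1 : ℝ) / 4 - η) →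
        (p : ℝ) ^ ((1 : ℝ) / 5 + η) ≤ N → N < (p : ℝ) ^ ((1 : ℝ) / 4 - η) →
      ‖∑ k ∈ Icc 1 ⌊K⌋₊, ∑ m ∈ Icc 1 ⌊M⌋₊, ∑ n ∈ Icc 1 ⌊N⌋₊,
          if Polynomial.eval (m : ZMod p) P₁ ≠ 0 ∧ Polynomial.eval (m : ZMod p) P₂ ≠ 0 ∧
              MvPolynomial.eval ![(k : ZMod p), (n : ZMod p)] Q₁ ≠ 0 ∧
              MvPolynomial.eval ![(k : ZMod p), (n : ZMod p)] Q₂ ≠ 0 then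
            χ (((k + m * n : ℕ) : ZMod p) *
              (Polynomial.eval (m : ZMod p) P₁ * (Polynomial.eval (m : ZMod p) P₂)⁻¹) *
              (MvPolynomial.eval ![(k : ZMod p), (n : ZMod p)] Q₁ *
                (MvPolynomial.eval ![(k : ZMod p), (n : ZMod p)] Q₂)⁻¹))
          else 0‖ ≤ C * (K * M * N) * (p : ℝ) ^ (-κ) := by
  by_cases hη2 : η < 1 / 40
  · obtain ⟨κ, hκ, C, hC, hmain⟩ := TRM.main_bound η hη hη2
    refine ⟨κ, hκ, C, hC, ?_⟩
    intro p hp χ hχ P₁ P₂ _ _ _ _ Q₁ Q₂ _ _ _ _ K M N hK1 hK2 hM1 hM2 hN1 hN2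
    have : Fact p.Prime := ⟨hp⟩
    have key := hmain p χ hχ
      (fun m => χ (Polynomial.eval (m : ZMod p) P₁ * (Polynomial.eval (m : ZMod p) P₂)⁻¹))
      (fun m => TRM.chi_le_one χ _)
      (fun k n => χ (MvPolynomial.eval ![(k : ZMod p), (n : ZMod p)] Q₁ *
                (MvPolynomial.eval ![(k : ZMod p), (n : ZMod p)] Q₂)⁻¹))
      (fun k n => TRM.chi_le_one χ _) K M N hK1 hK2 hM1 hM2 hN1 hN2
    convert key using 2
    refine sum_congr rfl fun k _ => sum_congr rfl fun m _ => sum_congr rfl fun n _ => ?_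
    split_ifs with h
    · rw [map_mul, map_mul]
      push_cast
      ring
    · symm
      have h0 : χ (0 : ZMod p) = 0 := MulChar.map_zero χ
      by_cases c1 : Polynomial.eval (m : ZMod p) P₁ = 0
      · simp [c1, h0]
      by_cases c2 : Polynomial.eval (m : ZMod p) P₂ = 0
      · simp [c2, h0]
      by_cases c3 : MvPolynomial.eval ![(k : ZMod p), (n : ZMod p)] Q₁ = 0
      · simp [c3, h0]
      by_cases c4 : MvPolynomial.eval ![(k : ZMod p), (n : ZMod p)] Q₂ = 0
      · simp [c4, h0]
      exact absurd ⟨c1, c2, c3, c4⟩ h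
  · refine ⟨1, one_pos, 1, one_pos, ?_⟩
    intro p hp χ hχ P₁ P₂ _ _ _ _ Q₁ Q₂ _ _ _ _ K M N hK1 hK2 hM1 hM2 hN1 hN2
    exfalso
    have hP1 : (1 : ℝ) ≤ p := by exact_mod_cast hp.one_lt.le
    have h1 := hK1.trans_lt hK2
    have h2 : (p : ℝ) ^ ((1 : ℝ) / 4 - η) ≤ (p : ℝ) ^ ((1 : ℝ) / 5 + η) :=
      Real.rpow_le_rpow_of_exponent_le hP1 (by linarith)
    linarith
end

section
/- Fix a positive integer r, a real number c₀ with 0 < c₀ < 1, and a real number η > 0. Then there exists a constant P, depending only on (r, c₀, η), such that: for every prime p ≥ P; for all real numbers M, N ≥ 1 satisfying M⁴·N² ≥ p^{1 + 1/r + η}; and for all sets ℳ, 𝒩 of integers with ℳ ⊆ [M, 2M] ∩ [1, p], 𝒩 ⊆ [N, 2N] ∩ [1, p], #ℳ ≥ c₀·M, and #𝒩 ≥ c₀·N; there exist m ∈ ℳ, n ∈ 𝒩, and a positive integer k with k ≤ p^{1 + 1/r + η}·(M·N)^{−2} + p^η such that m·n + k is a quadratic residue modulo p. -/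
open Finset

/-- An integer `x` is a quadratic residue modulo the prime `p`. -/
def IsQuadRes (p : ℕ) (x : ℤ) : Prop :=
  ¬ ((p : ℤ) ∣ x) ∧ ∃ y : ℤ, y ^ 2 ≡ x [ZMOD (p : ℤ)]


open Polynomial in
/-- differential operators: `D^k (Q f^h) = f^(h-k) opQ k Q` -/
noncomputable def opQ {F : Type*} [Field F] (f : F[X]) (h : ℕ) : ℕ → F[X] →ₗ[F] F[X]
  | 0 => LinearMap.id
  | k + 1 => (LinearMap.mulLeft F f) ∘ₗ derivative ∘ₗ (opQ f h k)
      + (LinearMap.mulLeft F (C ((h - k : ℕ) : F) * derivative f)) ∘ₗ (opQ f h k)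

open Polynomial in
lemma opQ_spec {F : Type*} [Field F] (f : F[X]) (h : ℕ) (Q : F[X]) (k : ℕ) (hk : k ≤ h) :
    derivative^[k] (Q * f ^ h) = f ^ (h - k) * opQ f h k Q := by
  induction k with
  | zero => simp [opQ, mul_comm]
  | succ k ih =>
    rw [Function.iterate_succ_apply', ih (by omega)]
    obtain ⟨e, he⟩ : ∃ e, h - k = e + 1 := ⟨h - k - 1, by omega⟩
    have he' : h - (k + 1) = e := by omega
    rw [he']
    simp only [opQ, LinearMap.add_apply, LinearMap.comp_apply, LinearMap.mulLeft_apply, he,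
      derivative_mul, derivative_pow]
    simp only [Nat.add_sub_cancel]
    ring

open Polynomial in
lemma opQ_natDegree {F : Type*} [Field F] (f : F[X]) (h m d : ℕ) (hm : f.natDegree ≤ m)
    (Q : F[X]) (hQ : Q.natDegree ≤ d) (k : ℕ) :
    (opQ f h k Q).natDegree ≤ d + k * m := by
  induction k with
  | zero => simpa [opQ] using hQ
  | succ k ih =>
    simp only [opQ, LinearMap.add_apply, LinearMap.comp_apply, LinearMap.mulLeft_apply]
    refine natDegree_add_le_of_degree_le ?_ ?_
    · refine natDegree_mul_le.trans ?_
      have := natDegree_derivative_le (opQ f h k Q)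
      have : (k+1) * m = k * m + m := by ring
      omega
    · refine natDegree_mul_le.trans ?_
      have h1 := natDegree_derivative_le f
      have h2 := natDegree_C_mul_le ((h - k : ℕ) : F) (derivative f)
      have : (k+1) * m = k * m + m := by ring
      omega

open Polynomial in
lemma derivative_iter_Xpow {p : ℕ} [Fact p.Prime] (R : (ZMod p)[X]) (j k : ℕ) :
    derivative^[k] (X ^ (p * j) * R) = X ^ (p * j) * derivative^[k] R := by
  induction k with
  | zero => simp
  | succ k ih =>
    rw [Function.iterate_succ_apply', ih, Function.iterate_succ_apply', derivative_mul]
    simp [derivative_X_pow]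

open Polynomial in
lemma block_coeff {p h J : ℕ} [Fact p.Prime] (hh : h < p) (P : Fin J → (ZMod p)[X])
    (hP : ∀ j, P j ∈ degreeLT (ZMod p) h) (n : ℕ)
    (hn : (∑ j : Fin J, X ^ (p * (j : ℕ)) * P j).coeff n ≠ 0) : n % p < h := by
  rw [finsetSum_coeff] at hn
  obtain ⟨j, -, hj⟩ := Finset.exists_ne_zero_of_sum_ne_zero hn
  rw [coeff_X_pow_mul'] at hj
  split_ifs at hj with h1
  · have h2 : n - p * j < h := by
      by_contra hc
      apply hj
      exact coeff_eq_zero_of_degree_lt (lt_of_lt_of_le (mem_degreeLT.1 (hP j)) (by exact_mod_cast not_lt.1 hc))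
    obtain ⟨e, rfl⟩ := Nat.exists_eq_add_of_le h1
    simp at h2 ⊢
    rwa [Nat.mod_eq_of_lt (by omega)]
  · exact absurd rfl hj

open Polynomial in
lemma block_zero {p h J : ℕ} [Fact p.Prime] (hh : h < p) (P : Fin J → (ZMod p)[X])
    (hP : ∀ j, P j ∈ degreeLT (ZMod p) h) 
    (hn : (∑ j : Fin J, X ^ (p * (j : ℕ)) * P j) = 0) (j : Fin J) : P j = 0 := by
  have hc : ∀ j i, h ≤ i → (P j).coeff i = 0 := fun j i hi =>
    coeff_eq_zero_of_degree_lt (lt_of_lt_of_le (mem_degreeLT.1 (hP j)) (by exact_mod_cast hi))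
  ext i
  by_cases hi : h ≤ i
  · simp [hc j i hi]
  have h1 := congrArg (fun q => q.coeff (p * j + i)) hn
  simp only [finsetSum_coeff, coeff_zero] at h1
  rw [Finset.sum_eq_single j] at h1
  · rw [coeff_X_pow_mul', if_pos (by omega), Nat.add_sub_cancel_left] at h1
    simpa using h1
  · intro b _ hb
    rw [coeff_X_pow_mul']
    split_ifs with h2
    · apply hc
      by_contra h3
      apply hb
      have hp : 0 < p := (Fact.out : p.Prime).pos
      have e1 : (p * (j:ℕ) + i) / p = j := by
        rw [Nat.mul_add_div hp, Nat.div_eq_of_lt (by omega)]; simp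
      have e2 : (p * (j:ℕ) + i) / p = b := by
        rw [show p * (j:ℕ) + i = p * (b:ℕ) + (p * (j:ℕ) + i - p * b) by omega]
        rw [Nat.mul_add_div hp, Nat.div_eq_of_lt (by omega)]; simp
      exact Fin.ext (e2.symm.trans e1)
    · rfl
  · simp

open Polynomial in
lemma nonvanish {p h J : ℕ} [Fact p.Prime] (hh : 2 * h < p) (P Q : Fin J → (ZMod p)[X])
    (hP : ∀ j, P j ∈ degreeLT (ZMod p) h) (hQ : ∀ j, Q j ∈ degreeLT (ZMod p) h)
    (f g : (ZMod p)[X]) (hf : f = X * g) (hg : g.coeff 0 ≠ 0)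
    (h0 : ∑ j : Fin J, X ^ (p * (j : ℕ)) * (P j + Q j * f ^ h) = 0) : (∀ j, P j = 0) ∧ ∀ j, Q j = 0 := by
  set A := ∑ j : Fin J, X ^ (p * (j : ℕ)) * P j with hA
  set B := ∑ j : Fin J, X ^ (p * (j : ℕ)) * Q j with hB
  have hAB : A + B * f ^ h = 0 := by
    rw [← h0, hA, hB, Finset.sum_mul, ← Finset.sum_add_distrib]
    exact Finset.sum_congr rfl fun j _ => by ring
  have hg0 : g ≠ 0 := by rintro rfl; simp at hg
  have hf0 : f ≠ 0 := by rw [hf]; exact mul_ne_zero X_ne_zero hg0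
  have hB0 : B = 0 := by
    by_contra hB0
    have hA0 : A = -(B * f ^ h) := eq_neg_of_add_eq_zero_left hAB
    have hA1 : A ≠ 0 := by
      rw [hA0]; exact neg_ne_zero.2 (mul_ne_zero hB0 (pow_ne_zero _ hf0))
    have hgt : g.natTrailingDegree = 0 := by
      rw [natTrailingDegree_eq_zero]; right; exact hg
    have htf : (f ^ h).natTrailingDegree = h := by
      have h1 : f.natTrailingDegree = 1 := by
        rw [hf, natTrailingDegree_mul X_ne_zero hg0, hgt]; simp
      have h2 : ∀ n : ℕ, (f ^ n).natTrailingDegree = n := by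
        intro n
        induction n with
        | zero => simp
        | succ n ih => rw [pow_succ, natTrailingDegree_mul (pow_ne_zero _ hf0) hf0, ih, h1]
      exact h2 h
    have ht : A.natTrailingDegree = B.natTrailingDegree + h := by
      rw [hA0, natTrailingDegree_neg, natTrailingDegree_mul hB0 (pow_ne_zero _ hf0), htf]
    have e1 := block_coeff (by omega) P hP A.natTrailingDegree (by
      rw [← hA]; exact (trailingCoeff_nonzero_iff_nonzero.2 hA1))
    have e2 := block_coeff (by omega) Q hQ B.natTrailingDegree (by
      rw [← hB]; exact (trailingCoeff_nonzero_iff_nonzero.2 hB0))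
    rw [ht, Nat.add_mod, Nat.mod_eq_of_lt (show h < p by omega), Nat.mod_eq_of_lt (by omega)] at e1
    omega
  have hA0 : A = 0 := by simpa [hB0] using hAB
  exact ⟨block_zero (by omega) P hP hA0, block_zero (by omega) Q hQ hB0⟩


open Polynomial in
/-- the linear system of Stepanov's method -/
noncomputable def stepMap {p : ℕ} [Fact p.Prime] (f : (ZMod p)[X]) (s : ZMod p) (h J k : ℕ) :
    ((Fin J → degreeLT (ZMod p) h) × (Fin J → degreeLT (ZMod p) h)) →ₗ[ZMod p] (ZMod p)[X] where
  toFun v := ∑ j : Fin J, X ^ (j : ℕ) *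
    (f ^ k * (derivative^[k] (v.1 j : (ZMod p)[X])) + C s * opQ f h k (v.2 j : (ZMod p)[X]))
  map_add' v w := by
    rw [← Finset.sum_add_distrib]
    refine Finset.sum_congr rfl fun j _ => ?_
    simp only [Prod.fst_add, Prod.snd_add, Pi.add_apply, Submodule.coe_add, iterate_map_add,
      map_add]
    ring
  map_smul' c v := by
    simp only [RingHom.id_apply]
    rw [Finset.smul_sum]
    refine Finset.sum_congr rfl fun j _ => ?_
    simp only [Prod.smul_fst, Prod.smul_snd, Pi.smul_apply, Submodule.coe_smul,
      iterate_derivative_smul, map_smul]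
    simp only [smul_eq_C_mul]
    ring

open Polynomial in
lemma stepMap_natDegree {p : ℕ} [Fact p.Prime] (f : (ZMod p)[X]) (s : ZMod p) (h J k m : ℕ)
    (hh : 0 < h) (hm : f.natDegree ≤ m) (v) :
    (stepMap f s h J k v).natDegree < J + h + k * m := by
  have key : ∀ j : Fin J, (X ^ (j : ℕ) *
    (f ^ k * (derivative^[k] (v.1 j : (ZMod p)[X])) + C s * opQ f h k (v.2 j : (ZMod p)[X]))).natDegree ≤ J + h + k * m - 1 := by
    intro j
    have hd : ∀ w : degreeLT (ZMod p) h, (w : (ZMod p)[X]).natDegree ≤ h - 1 := by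
      intro w
      have := mem_degreeLT.1 w.2
      by_cases h0 : (w : (ZMod p)[X]) = 0
      · simp [h0]
      · have := (natDegree_lt_iff_degree_lt h0).2 this
        omega
    refine natDegree_mul_le.trans ?_
    have h1 : (f ^ k * (derivative^[k] (v.1 j : (ZMod p)[X])) + C s * opQ f h k (v.2 j : (ZMod p)[X])).natDegree ≤ (h - 1) + k * m := by
      refine natDegree_add_le_of_degree_le ?_ ?_
      · refine natDegree_mul_le.trans ?_
        have e1 : (f ^ k).natDegree ≤ k * m := natDegree_pow_le.trans (Nat.mul_le_mul_left _ hm)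
        have e2 := natDegree_iterate_derivative (v.1 j : (ZMod p)[X]) k
        have e3 := hd (v.1 j)
        omega
      · exact (natDegree_C_mul_le _ _).trans (opQ_natDegree f h m (h-1) hm _ (hd _) k)
    have := j.2
    have e4 : (X ^ (j:ℕ) : (ZMod p)[X]).natDegree ≤ j := natDegree_X_pow_le _
    omega
  have : (stepMap f s h J k v).natDegree ≤ J + h + k * m - 1 :=
    natDegree_sum_le_of_forall_le univ _ fun j _ => key j
  omega

open Polynomial in
lemma stepanov {p : ℕ} [Fact p.Prime] (h J l m : ℕ) (hp : p = 2 * h + 1) (hl : l ≤ h)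
    (f g : (ZMod p)[X]) (hf : f = X * g) (hg : g.coeff 0 ≠ 0) (hm : f.natDegree ≤ m)
    (s : ZMod p) (hs : s ≠ 0) (S : Finset (ZMod p)) (hS : ∀ x ∈ S, eval x f ^ h = s)
    (hcount : l * (J + h + l * m) < 2 * J * h) : l * #S ≤ p * J + m * h := by
  have hh : 0 < h := by
    rcases Nat.eq_zero_or_pos h with h0 | h0
    · subst h0; simp at hcount
    · exact h0
  set E := J + h + l * m with hE
  let Φ : ((Fin J → degreeLT (ZMod p) h) × (Fin J → degreeLT (ZMod p) h)) →ₗ[ZMod p]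
      (Fin l → Fin E → ZMod p) :=
    LinearMap.pi fun k => LinearMap.pi fun i => (lcoeff (ZMod p) i) ∘ₗ (stepMap f s h J k)
  have : FiniteDimensional (ZMod p) (degreeLT (ZMod p) h) :=
    LinearEquiv.finiteDimensional (degreeLTEquiv (ZMod p) h).symm
  have hfr : Module.finrank (ZMod p) (degreeLT (ZMod p) h) = h := by
    rw [(degreeLTEquiv (ZMod p) h).finrank_eq]; simp
  have hker : LinearMap.ker Φ ≠ ⊥ := by
    apply LinearMap.ker_ne_bot_of_finrank_lt
    rw [Module.finrank_prod, Module.finrank_pi_fintype, Module.finrank_pi_fintype]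
    simp only [hfr, Module.finrank_pi_fintype, Module.finrank_self, Finset.sum_const,
      Finset.card_univ, Fintype.card_fin, smul_eq_mul, mul_one]
    nlinarith
  obtain ⟨v, hv, hv0⟩ := Submodule.exists_mem_ne_zero_of_ne_bot hker
  have hz : ∀ k, k < l → stepMap f s h J k v = 0 := by
    intro k hk
    have hd := stepMap_natDegree f s h J k m hh hm v
    ext i
    by_cases hi : i < E
    · have := congrFun (congrFun (LinearMap.mem_ker.1 hv) ⟨k, hk⟩) ⟨i, hi⟩
      simpa [Φ] using this
    · rw [coeff_zero]
      apply coeff_eq_zero_of_natDegree_lt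
      have : k * m ≤ l * m := Nat.mul_le_mul_right _ hk.le
      omega
  set G : (ZMod p)[X] := ∑ j : Fin J, X ^ (p * (j : ℕ)) *
    ((v.1 j : (ZMod p)[X]) + (v.2 j : (ZMod p)[X]) * f ^ h) with hG
  have hG0 : G ≠ 0 := by
    intro h0
    obtain ⟨a, b⟩ := nonvanish (by omega) (fun j => (v.1 j : (ZMod p)[X]))
      (fun j => (v.2 j : (ZMod p)[X])) (fun j => (v.1 j).2) (fun j => (v.2 j).2) f g hf hg h0
    apply hv0
    ext j : 2
    · exact Subtype.ext (a j)
    · exact Subtype.ext (b j)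
  have hder : ∀ k, k < l → ∀ x ∈ S, (derivative^[k] G).IsRoot x := by
    intro k hk x hx
    have e1 : derivative^[k] G = ∑ j : Fin J, X ^ (p * (j : ℕ)) *
        (derivative^[k] (v.1 j : (ZMod p)[X]) + f ^ (h - k) * opQ f h k (v.2 j : (ZMod p)[X])) := by
      rw [hG, iterate_derivative_sum]
      refine Finset.sum_congr rfl fun j _ => ?_
      rw [derivative_iter_Xpow, iterate_map_add, opQ_spec _ _ _ _ (by omega)]
    have hfx : eval x f ≠ 0 := by
      intro h0
      have := hS x hx
      rw [h0, zero_pow (by omega)] at this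
      exact hs this.symm
    have e2 : eval x f ^ k * eval x (derivative^[k] G) = eval x (stepMap f s h J k v) := by
      rw [e1]
      simp only [stepMap, LinearMap.coe_mk, AddHom.coe_mk, eval_finsetSum, Finset.mul_sum]
      refine Finset.sum_congr rfl fun j _ => ?_
      simp only [eval_mul, eval_add, eval_pow, eval_X, eval_C]
      rw [pow_mul, ZMod.pow_card, ← hS x hx]
      have : eval x f ^ h = eval x f ^ k * eval x f ^ (h - k) := by
        rw [← pow_add]; congr 1; omega
      rw [this]; ring
    rw [hz k hk, eval_zero] at e2
    exact (mul_eq_zero.1 e2).resolve_left (pow_ne_zero _ hfx)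
  have hdvd : ∏ x ∈ S, (X - C x) ^ l ∣ G := by
    apply Finset.prod_dvd_of_coprime
    · intro x _ y _ hxy
      exact (pairwise_coprime_X_sub_C Function.injective_id hxy).pow
    · intro x hx
      rw [← le_rootMultiplicity_iff hG0]
      rcases Nat.eq_zero_or_pos l with h0 | h0
      · omega
      have : l - 1 < G.rootMultiplicity x := by
        apply lt_rootMultiplicity_of_isRoot_iterate_derivative_of_mem_nonZeroDivisors' hG0
        · intro k hk; exact hder k (by omega) x hx
        · intro k hk hk0
          apply mem_nonZeroDivisors_of_ne_zero
          rw [Ne, ZMod.natCast_eq_zero_iff]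
          intro hd
          have := Nat.le_of_dvd (by omega) hd
          omega
      omega
  have h1 := natDegree_le_of_dvd hdvd hG0
  have h2 : (∏ x ∈ S, (X - C x) ^ l : (ZMod p)[X]).natDegree = l * #S := by
    rw [natDegree_prod_of_monic]
    · simp [mul_comm]
    · intro x _; exact (monic_X_sub_C x).pow _
  rw [h2] at h1
  refine h1.trans ?_
  refine natDegree_sum_le_of_forall_le _ _ fun j _ => ?_
  have hd : ∀ w : degreeLT (ZMod p) h, (w : (ZMod p)[X]).natDegree ≤ h := by
    intro w
    exact natDegree_le_of_degree_le (mem_degreeLT.1 w.2).le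
  have e1 : (X ^ (p * (j:ℕ)) : (ZMod p)[X]).natDegree ≤ p * j := natDegree_X_pow_le _
  have e2 : (f ^ h).natDegree ≤ h * m := natDegree_pow_le.trans (Nat.mul_le_mul_left _ hm)
  have e3 : ((v.1 j : (ZMod p)[X]) + (v.2 j : (ZMod p)[X]) * f ^ h).natDegree ≤ h + h * m := by
    refine natDegree_add_le_of_degree_le ((hd _).trans (by omega)) ?_
    refine natDegree_mul_le.trans ?_
    have := hd (v.2 j)
    omega
  refine natDegree_mul_le.trans ?_
  have e4 : p * (j:ℕ) + p ≤ p * J := by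
    have := j.2
    calc p * (j:ℕ) + p = p * (j + 1) := by ring
      _ ≤ _ := Nat.mul_le_mul_left _ this
  have e5 : h * m = m * h := mul_comm _ _
  omega


open Polynomial in
lemma count_bound {p : ℕ} [Fact p.Prime] (h m : ℕ) (hp : p = 2 * h + 1)
    (hbig : (12 * m + 7) ^ 2 ≤ p) (hm1 : 1 ≤ m)
    (f g : (ZMod p)[X]) (hf : f = X * g) (hg : g.coeff 0 ≠ 0) (hm : f.natDegree ≤ m)
    (s : ZMod p) (hs : s ≠ 0) (S : Finset (ZMod p)) (hS : ∀ x ∈ S, eval x f ^ h = s) :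
    (#S : ℝ) ≤ p / 2 + (13 * m + 7) * √p := by
  set J := Nat.sqrt p with hJ
  have hJc : 12 * m + 7 ≤ J := Nat.le_sqrt'.2 hbig
  have hJ2 : J * J ≤ p := Nat.sqrt_le p
  have hJ3 : p < (J + 1) * (J + 1) := Nat.lt_succ_sqrt p
  obtain ⟨l, hl⟩ : ∃ l, l + (12 * m + 7) = 2 * J := ⟨2 * J - (12 * m + 7), by omega⟩
  have hlJ : J ≤ l := by omega
  have hlh : l ≤ h := by nlinarith
  have hl2 : l ≤ 2 * J := by omega
  have hh : 0 < h := by omega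
  have hcount : l * (J + h + l * m) < 2 * J * h := by
    have e1 : l * (J + l * m) ≤ 2 * J * (J + 2 * J * m) := by gcongr
    have e2 : 2 * J * (J + 2 * J * m) = (J * J) * (2 + 4 * m) := by ring
    have e3 : (J * J) * (2 + 4 * m) ≤ (3 * h) * (2 + 4 * m) :=
      Nat.mul_le_mul_right _ (by omega)
    have e4 : (l + (12 * m + 7)) * h = 2 * J * h := by rw [hl]
    nlinarith
  have key := stepanov h J l m hp hlh f g hf hg hm s hs S hS hcount
  have key' : (l : ℝ) * #S ≤ p * J + m * h := by exact_mod_cast key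
  have hlR : (l : ℝ) + (12 * m + 7) = 2 * J := by exact_mod_cast hl
  have hlJR : (J : ℝ) ≤ l := by exact_mod_cast hlJ
  have hpR : (p : ℝ) = 2 * h + 1 := by exact_mod_cast hp
  have hsq : √(p:ℝ) * √p = p := Real.mul_self_sqrt (by positivity)
  have hJ1 : (1:ℝ) ≤ J := by exact_mod_cast (by omega : 1 ≤ J)
  have hs1 : √(p:ℝ) ≤ J + 1 := by
    rw [Real.sqrt_le_left (by positivity)]
    have : (p:ℝ) ≤ (J + 1) * (J + 1) := by exact_mod_cast hJ3.le
    nlinarith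
  have hs0 : 0 ≤ √(p:ℝ) := Real.sqrt_nonneg _
  have hls : (p : ℝ) / 2 ≤ l * √p := by nlinarith
  have hl0 : (0:ℝ) < l := by linarith
  refine le_of_mul_le_mul_left (key'.trans ?_) hl0
  have hmR : (1:ℝ) ≤ m := by exact_mod_cast hm1
  have : (13 * (m:ℝ) + 7) * (p / 2) ≤ (13 * m + 7) * (l * √p) := by gcongr
  have e5 : (l:ℝ) = 2 * J - (12 * m + 7) := by linarith
  have e6 : (l:ℝ) * (p / 2 + (13 * m + 7) * √p) = l * (p / 2) + (13 * m + 7) * (l * √p) := by ring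
  rw [e6]
  have e7 : (l:ℝ) * (p / 2) = J * p - (12 * m + 7) * (p / 2) := by rw [e5]; ring
  have e8 : (m:ℝ) * h ≤ m * (p / 2) := by gcongr; linarith
  rw [e7]
  nlinarith

open Polynomial in
lemma charsum_bound {p : ℕ} [Fact p.Prime] (h m : ℕ) (hp : p = 2 * h + 1)
    (hbig : (12 * m + 7) ^ 2 ≤ p) (A : Finset (ZMod p)) (hA : A.Nonempty) (hAm : #A ≤ m) :
    |((∑ x : ZMod p, ∏ t ∈ A, quadraticChar (ZMod p) (x + t) : ℤ) : ℝ)|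
      ≤ 2 * ((13 * m + 7) * √p) + m := by
  classical
  obtain ⟨t1, ht1⟩ := hA
  have hm1 : 1 ≤ m := le_trans (Finset.card_pos.2 ⟨t1, ht1⟩) hAm
  set g : (ZMod p)[X] := ∏ t ∈ A.erase t1, (X + C (t - t1)) with hgdef
  set f : (ZMod p)[X] := ∏ t ∈ A, (X + C (t - t1)) with hfdef
  have hf : f = X * g := by
    rw [hfdef, ← Finset.mul_prod_erase A _ ht1]; simp [hgdef]
  have hg : g.coeff 0 ≠ 0 := by
    rw [coeff_zero_eq_eval_zero, hgdef, eval_prod, Finset.prod_ne_zero_iff]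
    intro t ht
    simpa [sub_eq_zero] using (Finset.mem_erase.1 ht).1
  have hdeg : f.natDegree = #A := by
    rw [hfdef, natDegree_prod_of_monic _ _ (fun t _ => monic_X_add_C _)]
    simp only [natDegree_X_add_C, Finset.sum_const, smul_eq_mul, mul_one]
  have hf0 : f ≠ 0 := by
    rw [hfdef, Finset.prod_ne_zero_iff]; intro t _; exact (monic_X_add_C _).ne_zero
  set χ := quadraticChar (ZMod p) with hχ
  have hsum : ∑ x : ZMod p, ∏ t ∈ A, χ (x + t) = ∑ x : ZMod p, χ (eval x f) := by
    rw [← Equiv.sum_comp (Equiv.addRight t1) (fun x => χ (eval x f))]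
    refine Finset.sum_congr rfl fun x _ => ?_
    rw [hfdef, eval_prod, map_prod]
    refine Finset.prod_congr rfl fun t _ => ?_
    simp only [Equiv.coe_addRight, eval_add, eval_X, eval_C]
    congr 1; ring
  have hchar : ringChar (ZMod p) ≠ 2 := by
    rw [ZMod.ringChar_zmod_n]; omega
  have hcard : Fintype.card (ZMod p) / 2 = h := by rw [ZMod.card]; omega
  have hN : ∀ s : ℤ, (s = 1 ∨ s = -1) →
      (#{x : ZMod p | χ (eval x f) = s} : ℝ) ≤ p / 2 + (13 * m + 7) * √p := by
    intro s hs
    refine count_bound h m hp hbig hm1 f g hf hg (hdeg.trans_le hAm) (s : ZMod p) ?_ _ ?_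
    · rcases hs with rfl | rfl <;> simp
    · intro x hx
      have hx' := (Finset.mem_filter.1 hx).2
      rw [← hx', hχ, quadraticChar_eq_pow_of_char_ne_two' hchar, hcard]
  have hz : #{x : ZMod p | χ (eval x f) = 0} ≤ m := by
    refine le_trans ?_ ((card_roots' f).trans (hdeg.trans_le hAm))
    refine le_trans (Finset.card_le_card (t := f.roots.toFinset) ?_) (Multiset.toFinset_card_le _)
    intro x hx
    have hx' := (Finset.mem_filter.1 hx).2
    rw [hχ, quadraticChar_eq_zero_iff] at hx'
    simp [hf0, hx']
  have htri : ∀ a : ZMod p, χ a = 0 ∨ χ a = 1 ∨ χ a = -1 := by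
    intro a
    by_cases ha : a = 0
    · left; rw [ha, hχ, quadraticChar_zero]
    · right; exact quadraticChar_dichotomy ha
  have hone : p = #{x : ZMod p | χ (eval x f) = 0} + #{x : ZMod p | χ (eval x f) = 1}
      + #{x : ZMod p | χ (eval x f) = -1} := by
    have : Fintype.card (ZMod p) = p := ZMod.card p
    rw [← Finset.card_univ] at this
    conv_lhs => rw [← this]
    rw [Finset.card_filter, Finset.card_filter, Finset.card_filter, ← Finset.sum_add_distrib,
      ← Finset.sum_add_distrib, Finset.card_eq_sum_ones]
    refine Finset.sum_congr rfl fun x _ => ?_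
    rcases htri (eval x f) with h0 | h0 | h0 <;> rw [h0] <;> simp
  have hval : ∑ x : ZMod p, χ (eval x f) = (#{x : ZMod p | χ (eval x f) = 1} : ℤ)
      - #{x : ZMod p | χ (eval x f) = -1} := by
    rw [Finset.card_filter, Finset.card_filter]
    push_cast
    rw [← Finset.sum_sub_distrib]
    refine Finset.sum_congr rfl fun x _ => ?_
    rcases htri (eval x f) with h0 | h0 | h0 <;> rw [h0] <;> simp
  rw [hsum, hval]
  have a1 := hN 1 (Or.inl rfl)
  have a2 := hN (-1) (Or.inr rfl)
  have a3 : (p:ℝ) = #{x : ZMod p | χ (eval x f) = 0} + #{x : ZMod p | χ (eval x f) = 1}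
      + #{x : ZMod p | χ (eval x f) = -1} := by exact_mod_cast hone
  have a4 : (#{x : ZMod p | χ (eval x f) = 0} : ℝ) ≤ m := by exact_mod_cast hz
  push_cast
  rw [abs_le]
  constructor <;> linarith

lemma bad_count {p : ℕ} [Fact p.Prime] (h m : ℕ) (hp : p = 2 * h + 1)
    (hbig : (12 * m + 7) ^ 2 ≤ p) (hpm : p ≤ 2 ^ m) (s : ℤ) (hs : s = 1 ∨ s = -1)
    (S : Finset (ZMod p))
    (hS : ∀ y ∈ S, ∀ t ∈ Icc 1 m, quadraticChar (ZMod p) (y + (t : ℕ)) = 0 ∨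
      quadraticChar (ZMod p) (y + (t : ℕ)) = s) :
    (#S : ℝ) ≤ 50 * m * √p := by
  classical
  set χ := quadraticChar (ZMod p) with hχ
  have hm1 : 1 ≤ m := by
    rcases Nat.eq_zero_or_pos m with h0 | h0
    · subst h0; simp at hpm; have := (Fact.out : p.Prime).two_le; omega
    · exact h0
  set T : Finset (ZMod p) := (Icc 1 m).image (fun t : ℕ => (t : ZMod p)) with hT
  have hTc : #T = m := by
    rw [hT, Finset.card_image_of_injOn, Nat.card_Icc]; · simp
    intro a ha b hb hab
    simp only [coe_Icc, Set.mem_Icc] at ha hb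
    have hmp : m < p := by nlinarith
    have := (ZMod.natCast_eq_natCast_iff' a b p).1 hab
    rwa [Nat.mod_eq_of_lt (by omega), Nat.mod_eq_of_lt (by omega)] at this
  set S1 : Finset (ZMod p) := univ.filter (fun y => ∀ t ∈ T, χ (y + t) = s) with hS1
  have hsub : S ⊆ S1 ∪ T.image (fun t => -t) := by
    intro y hy
    by_cases hz : ∃ t ∈ T, χ (y + t) = 0
    · obtain ⟨t, ht, h0⟩ := hz
      rw [hχ, quadraticChar_eq_zero_iff] at h0
      exact Finset.mem_union_right _ (Finset.mem_image.2 ⟨t, ht, (eq_neg_of_add_eq_zero_left h0).symm⟩)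
    · push Not at hz
      refine Finset.mem_union_left _ (Finset.mem_filter.2 ⟨mem_univ _, fun t ht => ?_⟩)
      have h1 := hz t ht
      obtain ⟨n, hn, rfl⟩ := Finset.mem_image.1 ht
      exact (hS y hy n hn).resolve_left h1
  have hcardS : #S ≤ #S1 + m := by
    refine (Finset.card_le_card hsub).trans ((Finset.card_union_le _ _).trans ?_)
    have := Finset.card_image_le (s := T) (f := fun t => -t)
    omega
  have hss : s * s = 1 := by rcases hs with rfl | rfl <;> simp
  have hnn : ∀ a : ZMod p, 0 ≤ 1 + s * χ a := by
    intro a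
    by_cases ha : a = 0
    · rw [ha, hχ, quadraticChar_zero]; norm_num
    · rcases quadraticChar_dichotomy ha with h0 | h0 <;> rw [hχ, h0] <;> rcases hs with rfl | rfl <;> simp
  have hlow : (#S1 : ℤ) * 2 ^ m ≤ ∑ x : ZMod p, ∏ t ∈ T, (1 + s * χ (x + t)) := by
    calc (#S1 : ℤ) * 2 ^ m = ∑ x ∈ S1, ∏ t ∈ T, (1 + s * χ (x + t)) := by
          rw [Finset.sum_congr rfl (g := fun _ => (2:ℤ) ^ m)]
          · simp
          · intro x hx
            rw [Finset.prod_congr rfl (g := fun _ => (2:ℤ))]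
            · simp [hTc]
            · intro t ht
              rw [(Finset.mem_filter.1 hx).2 t ht, hss]; norm_num
      _ ≤ _ := Finset.sum_le_sum_of_subset_of_nonneg (Finset.subset_univ _)
          fun x _ _ => Finset.prod_nonneg fun t _ => hnn _
  have hexp : ∑ x : ZMod p, ∏ t ∈ T, (1 + s * χ (x + t))
      = ∑ A ∈ T.powerset, s ^ #A * ∑ x : ZMod p, ∏ t ∈ A, χ (x + t) := by
    simp_rw [Finset.prod_one_add, Finset.prod_mul_distrib, Finset.prod_const]
    rw [Finset.sum_comm]
    simp_rw [Finset.mul_sum]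
  set E : ℝ := 2 * ((13 * m + 7) * √p) + m with hE
  have hE0 : 0 ≤ E := by positivity
  have hup : ((∑ x : ZMod p, ∏ t ∈ T, (1 + s * χ (x + t)) : ℤ) : ℝ) ≤ p + 2 ^ m * E := by
    rw [hexp, ← Finset.sum_erase_add _ _ (Finset.empty_mem_powerset T)]
    push_cast
    have h1 : ∑ A ∈ T.powerset.erase ∅, (s:ℝ) ^ #A * ∑ x : ZMod p, ∏ t ∈ A, (χ (x + t) : ℝ)
        ≤ 2 ^ m * E := by
      calc _ ≤ ∑ A ∈ T.powerset.erase ∅, E := by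
            refine Finset.sum_le_sum fun A hA => ?_
            obtain ⟨hA0, hAT⟩ := Finset.mem_erase.1 hA
            have hc := charsum_bound h m hp hbig A (Finset.nonempty_iff_ne_empty.2 hA0)
              ((Finset.card_le_card (Finset.mem_powerset.1 hAT)).trans hTc.le)
            push_cast at hc
            refine le_trans (le_abs_self _) ?_
            rw [abs_mul, abs_pow]
            have : |(s:ℝ)| = 1 := by rcases hs with rfl | rfl <;> simp
            rw [this, one_pow, one_mul]
            exact hc
        _ ≤ ∑ A ∈ T.powerset, E :=
            Finset.sum_le_sum_of_subset_of_nonneg (Finset.erase_subset _ _) fun _ _ _ => hE0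
        _ = 2 ^ m * E := by simp [hTc]
    simp only [Finset.card_empty, pow_zero, Finset.prod_empty, Finset.sum_const, Finset.card_univ,
      ZMod.card, nsmul_eq_mul, mul_one, one_mul]
    linarith
  have hlow' : (#S1 : ℝ) * 2 ^ m ≤ p + 2 ^ m * E := by
    refine le_trans ?_ hup
    exact_mod_cast hlow
  have hpm' : (p:ℝ) ≤ 2 ^ m := by exact_mod_cast hpm
  have hS1E : (#S1 : ℝ) ≤ 1 + E := by
    have : (0:ℝ) < 2 ^ m := by positivity
    refine le_of_mul_le_mul_right (hlow'.trans ?_) this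
    linarith
  have hcR : (#S : ℝ) ≤ #S1 + m := by exact_mod_cast hcardS
  have hmR : (1:ℝ) ≤ m := by exact_mod_cast hm1
  have hsp : (1:ℝ) ≤ √p := by
    rw [Real.one_le_sqrt]; exact_mod_cast (Fact.out : p.Prime).one_le
  have : (m:ℝ) ≤ m * √p := by nlinarith
  have h3 : √(p:ℝ) ≤ m * √p := by nlinarith
  have h4 : E = 26 * (m * √p) + 14 * √p + m := by rw [hE]; ring
  nlinarith


lemma divisor_bound (δ : ℝ) (hδ : 0 < δ) :
    ∃ C : ℝ, 1 ≤ C ∧ ∀ n : ℕ, n ≠ 0 → (#n.divisors : ℝ) ≤ C * (n : ℝ) ^ δ := by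
  obtain ⟨Q, hQ⟩ := exists_nat_gt ((2:ℝ) ^ (1 / δ))
  set D : ℝ := 1 + 1 / (δ * Real.log 2) with hD
  have hlog : 0 < Real.log 2 := Real.log_pos (by norm_num)
  have hD1 : 1 ≤ D := by
    have : 0 < 1 / (δ * Real.log 2) := by positivity
    linarith
  have hsmall : ∀ q : ℕ, 2 ≤ q → ∀ a : ℕ, ((a:ℝ) + 1) ≤ D * ((q:ℝ) ^ a) ^ δ := by
    intro q hq a
    have hq' : (2:ℝ) ≤ q := by exact_mod_cast hq
    have h1 : ((2:ℝ) ^ a) ^ δ ≤ ((q:ℝ) ^ a) ^ δ := by gcongr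
    have h2 : ((2:ℝ) ^ a) ^ δ = Real.exp (a * (δ * Real.log 2)) := by
      rw [Real.rpow_def_of_pos (by positivity), Real.log_pow]; congr 1; ring
    have h3 := Real.add_one_le_exp ((a:ℝ) * (δ * Real.log 2))
    have h4 : (1:ℝ) ≤ Real.exp (a * (δ * Real.log 2)) := Real.one_le_exp (by positivity)
    have h5 : (a:ℝ) ≤ 1 / (δ * Real.log 2) * Real.exp (a * (δ * Real.log 2)) := by
      rw [div_mul_eq_mul_div, le_div_iff₀ (by positivity)]
      linarith
    have h6 : D * ((2:ℝ) ^ a) ^ δ ≤ D * ((q:ℝ) ^ a) ^ δ := by gcongr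
    rw [h2] at h6
    have : D * Real.exp (a * (δ * Real.log 2)) = Real.exp (a * (δ * Real.log 2)) +
      1 / (δ * Real.log 2) * Real.exp (a * (δ * Real.log 2)) := by rw [hD]; ring
    linarith
  have hlarge : ∀ q : ℕ, Q ≤ q → ∀ a : ℕ, ((a:ℝ) + 1) ≤ ((q:ℝ) ^ a) ^ δ := by
    intro q hq a
    have h1 : (2:ℝ) ^ (1 / δ) ≤ q := hQ.le.trans (by exact_mod_cast hq)
    have h2 : (2:ℝ) ≤ (q:ℝ) ^ δ := by
      calc (2:ℝ) = ((2:ℝ) ^ (1 / δ)) ^ δ := by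
            rw [← Real.rpow_mul (by norm_num)]; field_simp; simp
        _ ≤ _ := by gcongr
    have h3 : ((q:ℝ) ^ a) ^ δ = ((q:ℝ) ^ δ) ^ a := by
      rw [← Real.rpow_natCast, ← Real.rpow_natCast, ← Real.rpow_mul (by positivity),
        ← Real.rpow_mul (by positivity), mul_comm]
    rw [h3]
    calc ((a:ℝ) + 1) ≤ 2 ^ a := by exact_mod_cast Nat.lt_two_pow_self (n := a)
      _ ≤ _ := by gcongr
  refine ⟨D ^ Q, one_le_pow₀ hD1, fun n hn => ?_⟩
  rw [Nat.card_divisors hn]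
  have hn' : (n:ℝ) ^ δ = ∏ q ∈ n.primeFactors, ((q:ℝ) ^ (n.factorization q)) ^ δ := by
    rw [Real.finsetProd_rpow _ _ (fun i _ => by positivity)]
    congr 1
    conv_lhs => rw [← Nat.prod_factorization_pow_eq_self hn]
    simp [Finsupp.prod]
  push_cast
  calc ∏ q ∈ n.primeFactors, ((n.factorization q : ℝ) + 1)
      ≤ ∏ q ∈ n.primeFactors, ((if q < Q then D else 1) * ((q:ℝ) ^ (n.factorization q)) ^ δ) := by
        refine Finset.prod_le_prod (fun _ _ => by positivity) fun q hq => ?_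
        split_ifs with h
        · exact hsmall q (Nat.prime_of_mem_primeFactors hq).two_le _
        · rw [one_mul]; exact hlarge q (by omega) _
    _ = (∏ q ∈ n.primeFactors, (if q < Q then D else 1)) * (n:ℝ) ^ δ := by
        rw [Finset.prod_mul_distrib, hn']
    _ ≤ D ^ Q * (n:ℝ) ^ δ := by
        gcongr
        rw [← Finset.prod_filter, Finset.prod_const]
        refine pow_le_pow_right₀ hD1 ?_
        refine (Finset.card_le_card (t := Finset.range Q) ?_).trans (by simp)
        intro q hq
        simpa using (Finset.mem_filter.1 hq).2


/-- the product of a triple -/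
def tprod3 (q : ℕ × ℕ × ℕ) : ℕ := q.1 * q.2.1 * q.2.2

/-- the residue `m n / b` -/
def tval (p : ℕ) [Fact p.Prime] (q : ℕ × ℕ × ℕ) : ZMod p :=
  ((q.1 : ZMod p) * (q.2.1 : ZMod p)) * ((q.2.2 : ZMod p))⁻¹

lemma energy_bound {p : ℕ} [Fact p.Prime] (A N : Finset ℕ) (B H D : ℕ) (hB : B < p)
    (hA : ∀ a ∈ A, 1 ≤ a) (hN : ∀ a ∈ N, 1 ≤ a)
    (hH : ∀ q ∈ A ×ˢ N ×ˢ Icc 1 B, tprod3 q ≤ H)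
    (hD : ∀ Z, 1 ≤ Z → Z ≤ H → #Z.divisors ≤ D) :
    #(A ×ˢ N ×ˢ Icc 1 B) ≤
      #((A ×ˢ N ×ˢ Icc 1 B).image (tval p)) * (D ^ 2 * (H / p + 1)) := by
  classical
  set T := A ×ˢ N ×ˢ Icc 1 B with hT
  set V := T.image (tval p) with hV
  have hpp : 0 < p := (Fact.out : p.Prime).pos
  have hmem : ∀ q : ℕ × ℕ × ℕ, q ∈ T ↔ q.1 ∈ A ∧ q.2.1 ∈ N ∧ 1 ≤ q.2.2 ∧ q.2.2 ≤ B := by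
    intro q; simp [hT, Finset.mem_product]
  have hpos : ∀ q ∈ T, 1 ≤ tprod3 q := by
    intro q hq
    obtain ⟨h1, h2, h3, h4⟩ := (hmem q).1 hq
    exact Nat.mul_pos (Nat.mul_pos (hA _ h1) (hN _ h2)) h3
  have hbne : ∀ b : ℕ, 1 ≤ b → b ≤ B → (b : ZMod p) ≠ 0 := by
    intro b h1 h2 h0
    rw [ZMod.natCast_eq_zero_iff] at h0
    have := Nat.le_of_dvd h1 h0
    omega
  -- number of triples with given product
  have step1 : ∀ Z, 1 ≤ Z → Z ≤ H → #{q ∈ T | tprod3 q = Z} ≤ D ^ 2 := by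
    intro Z h1 h2
    calc #{q ∈ T | tprod3 q = Z} ≤ #(Z.divisors ×ˢ Z.divisors) := by
          apply Finset.card_le_card_of_injOn (fun q => (q.1, q.2.1))
          · intro q hq
            obtain ⟨hq, hqZ⟩ := Finset.mem_filter.1 hq
            simp only [coe_product, Set.mem_prod, mem_coe, Nat.mem_divisors]
            refine ⟨⟨⟨q.2.1 * q.2.2, ?_⟩, by omega⟩, ⟨⟨q.1 * q.2.2, ?_⟩, by omega⟩⟩ <;>
              rw [← hqZ, tprod3] <;> ring
          · intro q hq q' hq' he
            obtain ⟨hq, hqZ⟩ := Finset.mem_filter.1 hq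
            obtain ⟨hq', hqZ'⟩ := Finset.mem_filter.1 hq'
            obtain ⟨a, b, c⟩ := q
            obtain ⟨a', b', c'⟩ := q'
            simp only [Prod.mk.injEq] at he
            obtain ⟨rfl, rfl⟩ := he
            have hq := (hmem _).1 hq
            simp only at hq
            have h5 : 0 < a * b := Nat.mul_pos (hA _ hq.1) (hN _ hq.2.1)
            simp only [tprod3] at hqZ hqZ'
            have : c = c' := Nat.eq_of_mul_eq_mul_left h5 (hqZ.trans hqZ'.symm)
            rw [this]
      _ = #Z.divisors ^ 2 := by rw [Finset.card_product]; ring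
      _ ≤ D ^ 2 := Nat.pow_le_pow_left (hD Z h1 h2) 2
  have step2 : ∀ a : ℕ, #{q ∈ T | tprod3 q % p = a} ≤ D ^ 2 * (H / p + 1) := by
    intro a
    have hc : #{Z ∈ Icc 1 H | Z % p = a} ≤ H / p + 1 := by
      rw [← Finset.card_range (H / p + 1)]
      apply Finset.card_le_card_of_injOn (fun Z => Z / p)
      · intro Z hZ
        simp only [coe_filter, mem_Icc, Set.mem_ofPred_eq] at hZ
        simp only [coe_range, Set.mem_Iio]
        exact Nat.lt_succ_of_le (Nat.div_le_div_right hZ.1.2)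
      · intro Z hZ Z' hZ' he
        simp only [coe_filter, mem_Icc, Set.mem_ofPred_eq] at hZ hZ'
        simp only at he
        rw [← Nat.div_add_mod Z p, ← Nat.div_add_mod Z' p, he, hZ.2, hZ'.2]
    refine (Finset.card_le_mul_card_image_of_maps_to (f := tprod3)
      (t := {Z ∈ Icc 1 H | Z % p = a}) ?_ (D ^ 2) ?_).trans (Nat.mul_le_mul_left _ hc)
    · intro q hq
      obtain ⟨hq, hqa⟩ := Finset.mem_filter.1 hq
      exact Finset.mem_filter.2 ⟨Finset.mem_Icc.2 ⟨hpos q hq, hH q hq⟩, hqa⟩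
    · intro Z hZ
      obtain ⟨hZ, -⟩ := Finset.mem_filter.1 hZ
      obtain ⟨h1, h2⟩ := Finset.mem_Icc.1 hZ
      refine le_trans (Finset.card_le_card ?_) (step1 Z h1 h2)
      exact Finset.filter_subset_filter _ (Finset.filter_subset _ _)
  -- energy
  have step3 : #((T ×ˢ T).filter (fun u => tval p u.1 = tval p u.2))
      ≤ #((T ×ˢ T).filter (fun u => tprod3 u.2 % p = tprod3 u.1 % p)) := by
    apply Finset.card_le_card_of_injOn
      (fun u => ((u.1.1, u.1.2.1, u.2.2.2), (u.2.1, u.2.2.1, u.1.2.2)))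
    · intro u hu
      obtain ⟨hu, he⟩ := Finset.mem_filter.1 hu
      obtain ⟨hu1, hu2⟩ := Finset.mem_product.1 hu
      rw [hmem] at hu1 hu2
      refine Finset.mem_coe.2 (Finset.mem_filter.2 ⟨Finset.mem_product.2 ⟨(hmem _).2 ?_, (hmem _).2 ?_⟩, ?_⟩)
      · exact ⟨hu1.1, hu1.2.1, hu2.2.2⟩
      · exact ⟨hu2.1, hu2.2.1, hu1.2.2⟩
      · simp only [tprod3]
        rw [← ZMod.natCast_eq_natCast_iff']
        have n1 := hbne _ hu1.2.2.1 hu1.2.2.2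
        have n2 := hbne _ hu2.2.2.1 hu2.2.2.2
        simp only [tval] at he
        push_cast
        field_simp at he
        linear_combination -he
    · intro u _ u' _ he
      obtain ⟨⟨a, b, c⟩, a', b', c'⟩ := u
      obtain ⟨⟨d, e, f⟩, d', e', f'⟩ := u'
      simp only [Prod.mk.injEq] at he ⊢
      tauto
  have step4 : #((T ×ˢ T).filter (fun u => tprod3 u.2 % p = tprod3 u.1 % p))
      ≤ #T * (D ^ 2 * (H / p + 1)) := by
    rw [Finset.card_filter, Finset.sum_product]
    calc _ ≤ ∑ q ∈ T, (D ^ 2 * (H / p + 1)) := by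
          refine Finset.sum_le_sum fun q _ => ?_
          rw [← Finset.card_filter]
          simpa using step2 (tprod3 q % p)
      _ = _ := by simp
  have step5 : #T ^ 2 ≤ #V * #((T ×ˢ T).filter (fun u => tval p u.1 = tval p u.2)) := by
    have h1 : #T = ∑ y ∈ V, #{q ∈ T | tval p q = y} :=
      Finset.card_eq_sum_card_image (tval p) T
    have h2 : #((T ×ˢ T).filter (fun u => tval p u.1 = tval p u.2))
        = ∑ y ∈ V, #{q ∈ T | tval p q = y} ^ 2 := by
      rw [Finset.card_eq_sum_card_fiberwise (f := fun u => tval p u.1) (t := V)]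
      · refine Finset.sum_congr rfl fun y _ => ?_
        rw [sq, ← Finset.card_product]
        congr 1
        ext u
        simp only [Finset.mem_filter, Finset.mem_product]
        constructor
        · rintro ⟨⟨⟨a, b⟩, c⟩, rfl⟩; exact ⟨⟨a, rfl⟩, b, c.symm⟩
        · rintro ⟨⟨a, rfl⟩, b, c⟩; exact ⟨⟨⟨a, b⟩, c.symm⟩, rfl⟩
      · intro u hu
        obtain ⟨hu, -⟩ := Finset.mem_filter.1 hu
        exact Finset.mem_image_of_mem _ (Finset.mem_product.1 hu).1
    rw [h2]
    conv_lhs => rw [h1]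
    exact sq_sum_le_card_mul_sum_sq
  rcases Nat.eq_zero_or_pos #T with h0 | h0
  · rw [h0]; exact Nat.zero_le _
  · have : #T * #T ≤ #T * (#V * (D ^ 2 * (H / p + 1))) := by
      calc #T * #T = #T ^ 2 := by ring
        _ ≤ #V * (#T * (D ^ 2 * (H / p + 1))) :=
          step5.trans (Nat.mul_le_mul_left _ (step3.trans step4))
        _ = _ := by ring
    exact Nat.le_of_mul_le_mul_left this h0


lemma exists_filter {α : Type*} (V : Finset α) (Q : α → Prop) :
    ∃ W : Finset α, ∀ y, y ∈ W ↔ y ∈ V ∧ Q y := by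
  classical
  exact ⟨V.filter Q, fun y => Finset.mem_filter⟩

lemma core_bound {p : ℕ} [Fact p.Prime] (h L : ℕ) (hp : p = 2 * h + 1)
    (hbig : (12 * L + 7) ^ 2 ≤ p) (hpL : p ≤ 2 ^ L)
    (A N : Finset ℕ) (B H D : ℕ) (hB : B < p)
    (hA : ∀ a ∈ A, 1 ≤ a) (hN : ∀ a ∈ N, 1 ≤ a)
    (hH : ∀ q ∈ A ×ˢ N ×ˢ Icc 1 B, tprod3 q ≤ H)
    (hD : ∀ Z, 1 ≤ Z → Z ≤ H → #Z.divisors ≤ D)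
    (hno : ∀ a ∈ A, ∀ n ∈ N, ∀ b ∈ Icc 1 B, ∀ t ∈ Icc 1 L,
      quadraticChar (ZMod p) ((a : ZMod p) * n + b * t) ≠ 1) :
    ((#A : ℝ) * #N * B) ≤ (100 * L * √p) * ((D : ℝ) ^ 2 * ((H : ℝ) / p + 1)) := by
  have he := energy_bound (p := p) A N B H D hB hA hN hH hD
  set T := A ×ˢ N ×ˢ Icc 1 B with hT
  set V := T.image (tval p) with hV
  have hcT : #T = #A * #N * B := by simp [hT, Finset.card_product, mul_assoc]
  have key : ∀ y ∈ V, ∃ s : ℤ, (s = 1 ∨ s = -1) ∧ ∀ t ∈ Icc 1 L,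
      quadraticChar (ZMod p) (y + (t : ℕ)) = 0 ∨ quadraticChar (ZMod p) (y + (t : ℕ)) = s := by
    intro y hy
    obtain ⟨⟨a, n, b⟩, hq, rfl⟩ := Finset.mem_image.1 hy
    simp only [hT, Finset.mem_product] at hq
    obtain ⟨ha, hn, hb⟩ := hq
    have hb' := Finset.mem_Icc.1 hb
    have hb0 : (b : ZMod p) ≠ 0 := by
      intro h0
      rw [ZMod.natCast_eq_zero_iff] at h0
      have := Nat.le_of_dvd hb'.1 h0
      omega
    have hbi : ((b : ZMod p))⁻¹ ≠ 0 := inv_ne_zero hb0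
    have hs := quadraticChar_dichotomy hbi
    refine ⟨-quadraticChar (ZMod p) ((b : ZMod p))⁻¹, ?_, ?_⟩
    · rcases hs with hs | hs <;> simp [hs]
    · intro t ht
      have e1 : tval p (a, n, b) + (t : ℕ) = ((a : ZMod p) * n + b * t) * ((b : ZMod p))⁻¹ := by
        simp only [tval]
        field_simp
      rw [e1, map_mul]
      have h1 := hno a ha n hn b hb t ht
      by_cases hz : ((a : ZMod p) * n + b * t) = 0
      · left; rw [hz]; simp
      · right
        rcases quadraticChar_dichotomy hz with h2 | h2
        · exact absurd h2 h1
        · rw [h2]; ring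
  have hex : ∀ s : ℤ, ∃ W : Finset (ZMod p), ∀ y, y ∈ W ↔ y ∈ V ∧ ∀ t ∈ Icc 1 L,
      quadraticChar (ZMod p) (y + (t : ℕ)) = 0 ∨ quadraticChar (ZMod p) (y + (t : ℕ)) = s := by
    intro s
    exact exists_filter V _
  obtain ⟨V1, hV1⟩ := hex 1
  obtain ⟨V2, hV2⟩ := hex (-1)
  have b1 := bad_count h L hp hbig hpL 1 (Or.inl rfl) V1 (fun y hy => ((hV1 y).1 hy).2)
  have b2 := bad_count h L hp hbig hpL (-1) (Or.inr rfl) V2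
    (fun y hy => ((hV2 y).1 hy).2)
  have hVV : #V ≤ #V1 + #V2 := by
    refine le_trans (Finset.card_le_card ?_) (Finset.card_union_le V1 V2)
    intro y hy
    obtain ⟨s, rfl | rfl, hs⟩ := key y hy
    · exact Finset.mem_union_left _ ((hV1 y).2 ⟨hy, hs⟩)
    · exact Finset.mem_union_right _ ((hV2 y).2 ⟨hy, hs⟩)
  have hVr : (#V : ℝ) ≤ 100 * L * √p := by
    have : (#V : ℝ) ≤ #V1 + #V2 := by exact_mod_cast hVV
    linarith
  have her : ((#T : ℕ) : ℝ) ≤ #V * ((D : ℝ) ^ 2 * (((H / p : ℕ) : ℝ) + 1)) := by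
    exact_mod_cast he
  rw [hcT] at her
  push_cast at her
  refine her.trans ?_
  have : ((H / p : ℕ) : ℝ) ≤ (H : ℝ) / p := Nat.cast_div_le
  gcongr

lemma quadRes_of_char {p : ℕ} [Fact p.Prime] (x : ℤ)
    (hx : quadraticChar (ZMod p) ((x : ℤ) : ZMod p) = 1) : IsQuadRes p x := by
  have h0 : ((x : ℤ) : ZMod p) ≠ 0 := by
    intro h; rw [h] at hx; simp at hx
  refine ⟨fun hd => h0 ((ZMod.intCast_zmod_eq_zero_iff_dvd x p).2 hd), ?_⟩
  obtain ⟨z, hz⟩ := (quadraticChar_one_iff_isSquare h0).1 hx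
  obtain ⟨y, rfl⟩ := ZMod.intCast_surjective z
  refine ⟨y, ?_⟩
  rw [← ZMod.intCast_eq_intCast_iff]
  push_cast
  rw [hz]; ring

/-- the choice of threshold -/
lemma threshold (c C e : ℝ) (hc : 0 < c) (he : 0 < e) (he1 : e ≤ 1 / 4) :
    ∃ P : ℝ, ∀ x : ℝ, P ≤ x → 5 ≤ x ∧ Real.logb 2 x + 1 ≤ x ^ (e / 8) ∧
      800 * C ^ 2 < c ^ 2 * x ^ (e / 4) ∧ 361 * x ^ (e / 4) ≤ x := by
  have t1 := (tendsto_rpow_atTop (y := e / 8) (by positivity)).eventually_ge_atTop 2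
  have t2 := (tendsto_rpow_atTop (y := e / 4) (by positivity)).eventually_gt_atTop
    (800 * C ^ 2 / c ^ 2)
  have t3 := (tendsto_rpow_atTop (y := (1 - e / 4)) (by linarith)).eventually_ge_atTop 361
  have t4 := (isLittleO_log_rpow_atTop (r := e / 8) (by positivity)).bound
    (c := Real.log 2 / 2) (by have := Real.log_pos one_lt_two; positivity)
  have t5 := Filter.eventually_ge_atTop (5 : ℝ)
  obtain ⟨P, hP⟩ := Filter.eventually_atTop.1 (t1.and (t2.and (t3.and (t4.and t5))))
  refine ⟨P, fun x hx => ?_⟩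
  obtain ⟨h1, h2, h3, h4, h5⟩ := hP x hx
  have hx0 : 0 < x := by linarith
  have hl2 := Real.log_pos one_lt_two
  refine ⟨h5, ?_, ?_, ?_⟩
  · rw [Real.norm_of_nonneg (Real.log_nonneg (by linarith)),
      Real.norm_of_nonneg (by positivity)] at h4
    have : Real.logb 2 x ≤ x ^ (e / 8) / 2 := by
      rw [Real.logb, div_le_iff₀ hl2]; linarith
    linarith
  · rw [div_lt_iff₀ (by positivity)] at h2
    linarith
  · calc 361 * x ^ (e / 4) ≤ x ^ (1 - e / 4) * x ^ (e / 4) := by gcongr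
      _ = x := by rw [← Real.rpow_add hx0]; simp



lemma real_contra (c C L s q x w B D H : ℝ) (hc : 0 < c) (hL : 1 ≤ L)
    (hs : 0 < s) (hsx : s ^ 2 = x) (hLq : L ≤ q) (hqs : q ^ 8 ≤ s) (hw : 1 ≤ w)
    (hbig : 800 * C ^ 2 < c ^ 2 * q ^ 2)
    (hB : (x * q ^ 8 / w ^ 2 + q ^ 8) / (2 * L) ≤ B ∨ x / 2 ≤ B)
    (hD0 : 0 ≤ D) (hH0 : 0 ≤ H) (hD : D ≤ C * q ^ 2) (hH : H ≤ 4 * w * B)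
    (hmain : c ^ 2 * (w * B) ≤ (100 * L * s) * (D ^ 2 * (H / x + 1))) : False := by
  have hL0 : 0 < L := by linarith
  have hq0 : 0 < q := by linarith
  have hx0 : 0 < x := by rw [← hsx]; positivity
  have hw0 : 0 < w := by linarith
  have hX : s * q ^ 8 / (2 * L) ≤ w * B := by
    rcases hB with hB | hB
    · have h1 : s ≤ w * (x / w ^ 2 + 1) := by
        have e : w * (x / w ^ 2 + 1) = x / w + w := by field_simp
        rw [e]
        rcases le_total s w with h | h
        · have : 0 ≤ x / w := by positivity
          linarith
        · have : s ≤ x / w := by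
            rw [le_div_iff₀ hw0, ← hsx]; nlinarith
          linarith
      calc s * q ^ 8 / (2 * L) ≤ (w * (x / w ^ 2 + 1)) * q ^ 8 / (2 * L) := by gcongr
        _ = w * ((x * q ^ 8 / w ^ 2 + q ^ 8) / (2 * L)) := by ring
        _ ≤ w * B := by gcongr
    · calc s * q ^ 8 / (2 * L) ≤ s * s / (2 * 1) := by gcongr
        _ = 1 * (x / 2) := by rw [← hsx]; ring
        _ ≤ w * B := by gcongr
  have hyx : s * q ^ 8 / (2 * L) ≤ x / 2 := by
    calc s * q ^ 8 / (2 * L) ≤ s * s / (2 * 1) := by gcongr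
        _ = (x / 2) := by rw [← hsx]; ring
  set X := w * B with hXd
  set y := s * q ^ 8 / (2 * L) with hy
  have hy0 : 0 < y := by positivity
  set W := 100 * L * s * (C * q ^ 2) ^ 2 with hW
  have hWy : 4 * W < c ^ 2 * y := by
    have : c ^ 2 * y = c ^ 2 * (s * q ^ 8) / (2 * L) := by rw [hy]; ring
    rw [this, lt_div_iff₀ (by positivity)]
    calc 4 * W * (2 * L) = L ^ 2 * (s * q ^ 4 * (800 * C ^ 2)) := by rw [hW]; ring
      _ ≤ q ^ 2 * (s * q ^ 4 * (800 * C ^ 2)) := by gcongr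
      _ < q ^ 2 * (s * q ^ 4 * (c ^ 2 * q ^ 2)) := by gcongr
      _ = _ := by ring
  have hX0 : 0 < X := by linarith
  have h2 : c ^ 2 * X ≤ W * (4 * X / x + 1) := by
    refine hmain.trans ?_
    rw [hW, mul_assoc (100 * L * s)]
    have h3 : H / x + 1 ≤ 4 * X / x + 1 := by
      have : H ≤ 4 * X := by rw [hXd]; linarith
      gcongr
    gcongr
  have hc2 : 0 < c ^ 2 := by positivity
  have h4 : W * (4 * X / x) ≤ c ^ 2 * X / 2 := by
    have : W ≤ c ^ 2 * x / 8 := by nlinarith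
    calc W * (4 * X / x) ≤ (c ^ 2 * x / 8) * (4 * X / x) := by gcongr
      _ = c ^ 2 * X / 2 := by field_simp; ring
  have h5 : c ^ 2 * y ≤ c ^ 2 * X := by gcongr
  nlinarith

/-- Theorem 2.11 (modular analogue of the Iwaniec–Sárközy problem). -/
theorem iwaniec_sarkozy_analogue (r : ℕ) (hr : 0 < r) (c₀ η : ℝ)
    (hc₀ : 0 < c₀) (hc₀' : c₀ < 1) (hη : 0 < η) :
    ∃ P : ℝ, ∀ (p : ℕ), p.Prime → P ≤ (p : ℝ) →
      ∀ (M N : ℝ), 1 ≤ M → 1 ≤ N →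
        M ^ 4 * N ^ 2 ≥ (p : ℝ) ^ (1 + 1 / (r : ℝ) + η : ℝ) →
      ∀ (ℳ 𝒩 : Finset ℤ),
        (∀ m ∈ ℳ, M ≤ (m : ℝ) ∧ (m : ℝ) ≤ 2 * M ∧ 1 ≤ m ∧ m ≤ (p : ℤ)) →
        (∀ n ∈ 𝒩, N ≤ (n : ℝ) ∧ (n : ℝ) ≤ 2 * N ∧ 1 ≤ n ∧ n ≤ (p : ℤ)) →
        c₀ * M ≤ (ℳ.card : ℝ) → c₀ * N ≤ (𝒩.card : ℝ) →
      ∃ m ∈ ℳ, ∃ n ∈ 𝒩, ∃ k : ℤ, 0 < k ∧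
        (k : ℝ) ≤ (p : ℝ) ^ (1 + 1 / (r : ℝ) + η : ℝ) / (M * N) ^ 2 + (p : ℝ) ^ η ∧
        IsQuadRes p (m * n + k) := by
  obtain ⟨e, he0, he4, heη⟩ : ∃ e : ℝ, 0 < e ∧ e ≤ 1 / 4 ∧ e ≤ η :=
    ⟨min η (1 / 4), lt_min hη (by norm_num), min_le_right _ _, min_le_left _ _⟩
  obtain ⟨C, hC1, hC⟩ := divisor_bound (e / 16) (by positivity)
  obtain ⟨P, hP⟩ := threshold c₀ C e hc₀ he0 he4
  refine ⟨P, fun p hp hPp M N hM hN _ ℳ 𝒩 hℳ h𝒩 hcM hcN => ?_⟩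
  have : Fact p.Prime := ⟨hp⟩
  obtain ⟨hx5, hlog, hbig, h361⟩ := hP p hPp
  by_contra hcon
  push Not at hcon
  have hp5 : 5 ≤ p := by exact_mod_cast hx5
  set x : ℝ := (p : ℝ) with hx
  have hx0 : 0 < x := by linarith
  have hx1 : 1 ≤ x := by linarith
  set q : ℝ := x ^ (e / 8) with hq
  have hq2 : x ^ (e / 4) = q ^ 2 := by
    rw [hq, ← Real.rpow_mul_natCast hx0.le]; congr 1; push_cast; ring
  have hq8 : x ^ e = q ^ 8 := by
    rw [hq, ← Real.rpow_mul_natCast hx0.le]; congr 1; push_cast; ring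
  rw [hq2] at hbig h361
  obtain ⟨L, hL1, hpL, hLq⟩ : ∃ L : ℕ, 1 ≤ L ∧ p ≤ 2 ^ L ∧ (L : ℝ) ≤ q := by
    refine ⟨Nat.clog 2 p, Nat.clog_pos (by norm_num) (by omega),
      Nat.le_pow_clog (by norm_num) p, ?_⟩
    have h1 := Real.natCeil_logb_natCast 2 p
    rw [← h1]
    refine le_trans (Nat.ceil_lt_add_one ?_).le hlog
    exact Real.logb_nonneg (by norm_num) hx1
  have hL1r : (1 : ℝ) ≤ L := by exact_mod_cast hL1
  have hL0 : (0 : ℝ) < L := by linarith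
  have hq1 : 1 ≤ q := by linarith
  have hbigL : (12 * L + 7) ^ 2 ≤ p := by
    have : ((12 * L + 7 : ℝ)) ^ 2 ≤ x := by
      calc ((12 * L + 7 : ℝ)) ^ 2 ≤ (19 * q) ^ 2 := by
            apply pow_le_pow_left₀ (by positivity); linarith
        _ = 361 * q ^ 2 := by ring
        _ ≤ x := h361
    rw [hx] at this
    exact_mod_cast this
  have hqs : q ^ 8 ≤ √x := by
    rw [← hq8, Real.sqrt_eq_rpow]
    exact Real.rpow_le_rpow_of_exponent_le hx1 (by linarith)
  have hodd : p = 2 * (p / 2) + 1 := by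
    have := hp.eq_two_or_odd
    omega
  set w : ℝ := M * N with hw
  have hM0 : 0 < M := by linarith
  have hN0 : 0 < N := by linarith
  have hw1 : 1 ≤ w := by nlinarith
  have hw0 : 0 < w := by linarith
  set K : ℝ := x * q ^ 8 / w ^ 2 + q ^ 8 with hK
  have hKle : K ≤ x ^ (1 + 1 / (r : ℝ) + η : ℝ) / w ^ 2 + x ^ η := by
    have h1 : x * q ^ 8 ≤ x ^ (1 + 1 / (r : ℝ) + η : ℝ) := by
      have : x * q ^ 8 = x ^ (1 + e) := by rw [Real.rpow_add hx0, hq8, Real.rpow_one]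
      rw [this]
      apply Real.rpow_le_rpow_of_exponent_le hx1
      have : 0 ≤ 1 / (r : ℝ) := by positivity
      linarith
    have h2 : q ^ 8 ≤ x ^ η := by
      rw [← hq8]; exact Real.rpow_le_rpow_of_exponent_le hx1 heη
    rw [hK]
    gcongr
  have hKq : q ^ 8 ≤ K := by
    have : 0 ≤ x * q ^ 8 / w ^ 2 := by positivity
    rw [hK]; linarith
  have hKL : 1 ≤ K / L := by
    rw [le_div_iff₀ hL0, one_mul]
    have : q ^ 1 ≤ q ^ 8 := pow_le_pow_right₀ hq1 (by norm_num)
    linarith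
  set B : ℕ := min ⌊K / L⌋₊ (p - 1) with hB
  have hBp : B < p := by
    have := min_le_right ⌊K / L⌋₊ (p - 1)
    omega
  have hBK : (B : ℝ) * L ≤ K := by
    have h1 : (B : ℝ) ≤ (⌊K / L⌋₊ : ℝ) := by exact_mod_cast min_le_left _ _
    have h2 : (⌊K / L⌋₊ : ℝ) ≤ K / L := Nat.floor_le (by linarith)
    rw [← le_div_iff₀ hL0]
    linarith
  have hBlow : K / (2 * L) ≤ B ∨ x / 2 ≤ B := by
    rcases min_choice ⌊K / L⌋₊ (p - 1) with h | h
    · left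
      rw [hB, h]
      have h1 : (1 : ℝ) ≤ ⌊K / L⌋₊ := by exact_mod_cast Nat.floor_pos.2 hKL
      have h2 := Nat.lt_floor_add_one (K / L)
      have : K / (2 * L) = (K / L) / 2 := by field_simp
      rw [this]; linarith
    · right
      rw [hB, h, Nat.cast_sub (by omega)]
      push_cast
      linarith
  -- the sets as natural numbers
  set A : Finset ℕ := ℳ.image Int.toNat with hA
  set A' : Finset ℕ := 𝒩.image Int.toNat with hA'
  have hAmem : ∀ a ∈ A, ((a : ℤ) ∈ ℳ) := by
    intro a ha
    obtain ⟨m, hm, rfl⟩ := Finset.mem_image.1 ha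
    rw [Int.toNat_of_nonneg (by linarith [(hℳ m hm).2.2.1])]
    exact hm
  have hAmem' : ∀ a ∈ A', ((a : ℤ) ∈ 𝒩) := by
    intro a ha
    obtain ⟨m, hm, rfl⟩ := Finset.mem_image.1 ha
    rw [Int.toNat_of_nonneg (by linarith [(h𝒩 m hm).2.2.1])]
    exact hm
  have hAc : #A = #ℳ := by
    apply Finset.card_image_of_injOn
    intro m hm m' hm' h
    have h1 := (hℳ m hm).2.2.1
    have h2 := (hℳ m' hm').2.2.1
    omega
  have hAc' : #A' = #𝒩 := by
    apply Finset.card_image_of_injOn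
    intro m hm m' hm' h
    have h1 := (h𝒩 m hm).2.2.1
    have h2 := (h𝒩 m' hm').2.2.1
    omega
  have hMx : M ≤ x := by
    have : ℳ.Nonempty := by
      rw [← Finset.card_pos]
      have : (0 : ℝ) < #ℳ := lt_of_lt_of_le (by positivity) hcM
      exact_mod_cast this
    obtain ⟨m, hm⟩ := this
    have h1 : ((m : ℤ) : ℝ) ≤ x := by rw [hx]; exact_mod_cast (hℳ m hm).2.2.2
    linarith [(hℳ m hm).1]
  have hNx : N ≤ x := by
    have : 𝒩.Nonempty := by
      rw [← Finset.card_pos]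
      have : (0 : ℝ) < #𝒩 := lt_of_lt_of_le (by positivity) hcN
      exact_mod_cast this
    obtain ⟨m, hm⟩ := this
    have h1 : ((m : ℤ) : ℝ) ≤ x := by rw [hx]; exact_mod_cast (h𝒩 m hm).2.2.2
    linarith [(h𝒩 m hm).1]
  have hBx : (B : ℝ) ≤ x := by rw [hx]; exact_mod_cast hBp.le
  set H : ℕ := ⌊4 * w * B⌋₊ with hH
  set D : ℕ := ⌊C * q ^ 2⌋₊ with hD
  have hHle : (H : ℝ) ≤ 4 * w * B := Nat.floor_le (by positivity)
  have hDle : (D : ℝ) ≤ C * q ^ 2 := Nat.floor_le (by positivity)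
  have hHx : (H : ℝ) ≤ x ^ 4 := by
    calc (H : ℝ) ≤ 4 * (M * N) * B := hHle
      _ ≤ x * (x * x) * x := by
        gcongr
        linarith only [hx5]
      _ = x ^ 4 := by ring
  have hcore := core_bound (p := p) (p / 2) L hodd hbigL hpL A A' B H D hBp
    (fun a ha => by have := (hℳ _ (hAmem a ha)).2.2.1; omega)
    (fun a ha => by have := (h𝒩 _ (hAmem' a ha)).2.2.1; omega)
    (by
      rintro ⟨a, n, b⟩ hq
      simp only [Finset.mem_product, Finset.mem_Icc] at hq
      obtain ⟨ha, hn, hb1, hb2⟩ := hq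
      have h1 : (a : ℝ) ≤ 2 * M := by exact_mod_cast (hℳ _ (hAmem a ha)).2.1
      have h2 : (n : ℝ) ≤ 2 * N := by exact_mod_cast (h𝒩 _ (hAmem' n hn)).2.1
      have h3 : (b : ℝ) ≤ B := by exact_mod_cast hb2
      apply Nat.le_floor
      simp only [tprod3]
      push_cast
      calc (a : ℝ) * n * b ≤ (2 * M) * (2 * N) * B := by gcongr
        _ = 4 * w * B := by rw [hw]; ring)
    (by
      intro Z hZ1 hZH
      apply Nat.le_floor
      refine (hC Z (by omega)).trans ?_
      have hZx : (Z : ℝ) ≤ x ^ 4 := le_trans (by exact_mod_cast hZH) hHx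
      have : (Z : ℝ) ^ (e / 16) ≤ q ^ 2 := by
        calc (Z : ℝ) ^ (e / 16) ≤ (x ^ 4) ^ (e / 16) :=
              Real.rpow_le_rpow (by positivity) hZx (by positivity)
          _ = x ^ (e / 4) := by
              rw [← Real.rpow_natCast_mul hx0.le]; congr 1; push_cast; ring
          _ = q ^ 2 := hq2
      gcongr)
    (by
      intro a ha n hn b hb t ht hchar
      obtain ⟨hb1, hb2⟩ := Finset.mem_Icc.1 hb
      obtain ⟨ht1, ht2⟩ := Finset.mem_Icc.1 ht
      refine hcon _ (hAmem a ha) _ (hAmem' n hn) ((b * t : ℕ) : ℤ) ?_ ?_ ?_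
      · exact_mod_cast Nat.mul_pos hb1 ht1
      · refine le_trans ?_ (hBK.trans hKle)
        have h3 : (b : ℝ) ≤ B := by exact_mod_cast hb2
        have h4 : (t : ℝ) ≤ L := by exact_mod_cast ht2
        push_cast
        gcongr
      · apply quadRes_of_char
        rw [← hchar]
        congr 1
        simp only [Int.cast_add, Int.cast_mul, Int.cast_natCast, Nat.cast_mul])
  refine real_contra c₀ C L (√x) q x w B D H hc₀ hL1r (Real.sqrt_pos.2 hx0)
    (Real.sq_sqrt hx0.le) hLq hqs hw1 hbig hBlow (Nat.cast_nonneg _) (Nat.cast_nonneg _) hDle hHle ?_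
  refine le_trans ?_ hcore
  rw [hAc, hAc']
  calc c₀ ^ 2 * (w * B) = (c₀ * M) * (c₀ * N) * B := by rw [hw]; ring
    _ ≤ (#ℳ : ℝ) * #𝒩 * B := mul_le_mul_of_nonneg_right
        (mul_le_mul hcM hcN (by positivity) (Nat.cast_nonneg _)) (Nat.cast_nonneg _)
end
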